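/- arXiv:2306.09543 — 7 statements merged into one kernel-verified Lean document; each statement's English description precedes it below -/
import Mathlib

section
/- Let α be a finite type and let σ₀ and τ be fixed-point-free involutions of α (i.e. σ₀² = 1, τ² = 1, and σ₀ x ≠ x and τ x ≠ x for all x). Set ρ = τσ₀. Then: (i) σ₀ρσ₀⁻¹ = ρ⁻¹; (ii) for every x ∈ α, x and σ₀(x) do NOT lie in the same cycle of ρ (¬ρ.SameCycle x (σ₀ x)), while the cycle of ρ containing σ₀(x) has the same length as the cycle containing x; consequently (iii) the number of cycles of ρ, i.e. Multiset.card ρ.cycleType, is even. -/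
/-- If σ₀ and τ are fixed-point-free involutions of a finite type α and
ρ = τσ₀, then σ₀ conjugates ρ to ρ⁻¹, no point lies in the same cycle of ρ
as its image under σ₀ (while the two cycles have the same length), and the
number of cycles of ρ is even. -/
theorem product_of_two_fixed_point_free_involutions
    (α : Type*) [Fintype α] [DecidableEq α]
    (σ₀ τ : Equiv.Perm α)
    (hσ₀ : σ₀ ^ 2 = 1) (hσ₀free : ∀ x : α, σ₀ x ≠ x)
    (hτ : τ ^ 2 = 1) (hτfree : ∀ x : α, τ x ≠ x) :
    σ₀ * (τ * σ₀) * σ₀⁻¹ = (τ * σ₀)⁻¹ ∧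
    (∀ x : α, ¬ (τ * σ₀).SameCycle x (σ₀ x) ∧
      (((τ * σ₀).cycleOf (σ₀ x)).support.card =
        ((τ * σ₀).cycleOf x).support.card)) ∧
    Even (Multiset.card (τ * σ₀).cycleType) := by
  have hss : ∀ x, σ₀ (σ₀ x) = x := fun x => by
    have := congrArg (fun f : Equiv.Perm α => f x) hσ₀
    simpa [pow_two] using this
  have hsi : σ₀⁻¹ = σ₀ := by
    rw [inv_eq_iff_mul_eq_one, ← pow_two, hσ₀]
  have hti : τ⁻¹ = τ := by
    rw [inv_eq_iff_mul_eq_one, ← pow_two, hτ]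
  have h1 : σ₀ * (τ * σ₀) * σ₀⁻¹ = (τ * σ₀)⁻¹ := by
    rw [mul_inv_rev, hti, hsi, mul_assoc, mul_assoc, ← pow_two, hσ₀, mul_one]
  have htσ : ∀ y, (τ * σ₀) y = τ (σ₀ y) := fun y => rfl
  generalize (τ * σ₀) = ρ at h1 htσ ⊢
  have hz : ∀ (n : ℤ) x, σ₀ ((ρ ^ n) x) = (ρ ^ (-n)) (σ₀ x) := by
    intro n x
    have h : σ₀ * ρ ^ n * σ₀⁻¹ = ρ ^ (-n) := by
      rw [← conj_zpow, h1, inv_zpow, zpow_neg]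
    rw [← h]
    simp
  have hno : ∀ x, ¬ ρ.SameCycle x (σ₀ x) := by
    rintro x ⟨n, hn⟩
    rcases Int.even_or_odd' n with ⟨k, rfl | rfl⟩
    · apply hσ₀free ((ρ ^ k) x)
      rw [hz, ← hn, ← Equiv.Perm.mul_apply, ← zpow_add]
      congr 2; ring
    · apply hτfree (σ₀ ((ρ ^ k) x))
      rw [← htσ, hz, ← hn, ← Equiv.Perm.mul_apply, ← Equiv.Perm.mul_apply,
        ← zpow_one_add, ← zpow_add]
      congr 2; ring
  have hsc : ∀ x y, ρ.SameCycle (σ₀ x) y ↔ ρ.SameCycle x (σ₀ y) := by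
    intro x y
    rw [← Equiv.Perm.sameCycle_inv, ← h1, Equiv.Perm.sameCycle_conj, hsi, hss]
  have hsup : ∀ x, σ₀ x ∈ ρ.support ↔ x ∈ ρ.support := by
    intro x
    have h2 : (σ₀ * ρ * σ₀⁻¹) (σ₀ x) = ρ⁻¹ (σ₀ x) := by rw [h1]
    rw [← Equiv.Perm.support_inv, Equiv.Perm.mem_support, Equiv.Perm.mem_support, ← h2]
    simp only [Equiv.Perm.mul_apply, hsi, hss, ne_eq, EmbeddingLike.apply_eq_iff_eq, Equiv.Perm.inv_eq_iff_eq]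
    rw [eq_comm]
  refine ⟨h1, fun x => ⟨hno x, ?_⟩, ?_⟩
  · refine Finset.card_equiv σ₀ ?_
    intro y
    rw [Equiv.Perm.mem_support_cycleOf_iff, Equiv.Perm.mem_support_cycleOf_iff, hsc, hsup]
  · rw [Equiv.Perm.cycleType_def, Multiset.card_map, Finset.card_val]
    have key : (∑ _c ∈ ρ.cycleFactorsFinset, (1 : ZMod 2)) = 0 := by
      refine Finset.sum_involution (fun c _ => σ₀ * c⁻¹ * σ₀⁻¹) ?_ ?_ ?_ ?_
      · intros; decide
      · intro c hc _ heq
        obtain ⟨x, hx⟩ := (Equiv.Perm.mem_cycleFactorsFinset_iff.1 hc).1.nonempty_support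
        have hx' : σ₀ x ∈ c.support := by
          rw [← heq, Equiv.Perm.mem_support]
          simp only [Equiv.Perm.mul_apply, hsi, hss, ne_eq, EmbeddingLike.apply_eq_iff_eq, Equiv.Perm.inv_eq_iff_eq]
          exact fun h => Equiv.Perm.mem_support.1 hx h.symm
        have hcx := Equiv.Perm.cycle_is_cycleOf hx hc
        rw [hcx, Equiv.Perm.mem_support_cycleOf_iff] at hx'
        exact hno x hx'.1
      · intro c hc
        have h3 : σ₀ * ρ⁻¹ * σ₀⁻¹ = ρ := by
          rw [← conj_inv, h1, inv_inv]
        have h4 : c⁻¹ ∈ (ρ⁻¹).cycleFactorsFinset := by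
          rw [Equiv.Perm.mem_cycleFactorsFinset_iff] at hc ⊢
          refine ⟨hc.1.inv, fun a ha => ?_⟩
          rw [Equiv.Perm.support_inv] at ha
          have hb : c⁻¹ a ∈ c.support := by
            rw [← Equiv.Perm.support_inv, Equiv.Perm.apply_mem_support, Equiv.Perm.support_inv]
            exact ha
          have := hc.2 _ hb
          rw [Equiv.Perm.eq_inv_iff_eq, ← this]
          simp
        have h5 := (Equiv.Perm.mem_cycleFactorsFinset_conj ρ⁻¹ σ₀ c⁻¹).2 h4
        rwa [h3] at h5
      · intro c hc
        simp only [mul_inv_rev, inv_inv, hsi]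
        ext x
        simp [hss]
    rw [Finset.sum_const, nsmul_one, ZMod.natCast_eq_zero_iff_even] at key
    exact key
end

section
/- For every natural number g ≥ 2 there exist permutations σ₀, σ₁ of Fin (8g − 4) such that: the cycle type of σ₀ consists of 4g − 2 copies of 2 (σ₀ is a product of 4g − 2 disjoint transpositions covering all points); the cycle type of σ₁ consists of 2g − 1 copies of 4; σ₁σ₀ is a single cycle of length 8g − 4 (in particular the subgroup generated by σ₀ and σ₁ is transitive); and the cycle type of σ₁²σ₀ is the multiset {4g − 2, 4g − 2} (two disjoint cycles of equal length). (This is the combinatorial content of the existence, for every genus g ≥ 2, of a uniform filling curve in general position whose complement is a single face, whose length function is minimized on a surface uniformized by a surface subgroup of the triangle group Δ(2,4,8g−4).) -/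
namespace FillingCurve

open Equiv Equiv.Perm

/-- If every cycle has the same length `m`, the cycle type is constant. -/
lemma cycleType_of_uniform {α : Type*} [Fintype α] [DecidableEq α] (f : Perm α) (m r : ℕ)
    (hm : 2 ≤ m) (hcard : Fintype.card α = r * m)
    (h : ∀ x, (f.cycleOf x).support.card = m) :
    f.cycleType = Multiset.replicate r m := by
  have hall : ∀ n ∈ f.cycleType, n = m := by
    intro n hn
    rw [cycleType_def, Multiset.mem_map] at hn
    obtain ⟨c, hc, rfl⟩ := hn
    have hc' : c ∈ f.cycleFactorsFinset := hc
    obtain ⟨x, hx⟩ := (mem_cycleFactorsFinset_iff.1 hc').1.nonempty_support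
    rw [cycle_is_cycleOf hx hc']
    exact h x
  have h1 := Multiset.eq_replicate_card.2 hall
  have hsupp : f.support = Finset.univ := by
    ext x
    simp only [mem_support, Finset.mem_univ, iff_true]
    intro hx
    have := h x
    rw [(cycleOf_eq_one_iff f).2 hx] at this
    simp at this
    omega
  have h2 := sum_cycleType f
  rw [hsupp, Finset.card_univ, hcard, h1, Multiset.sum_replicate, smul_eq_mul] at h2
  have h3 : Multiset.card f.cycleType = r := Nat.eq_of_mul_eq_mul_right (by omega) h2
  rw [h1, h3]

/-- A potential that increases except at `top` shows that everything is on the cycle of `top`. -/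
lemma sameCycle_of_potential {α : Type*} (f : Perm α) (S : α → Prop) (top : α) (lab : α → ℕ)
    (B : ℕ) (hB : ∀ x, lab x ≤ B)
    (h : ∀ x, S x → x = top ∨ (S (f x) ∧ lab x < lab (f x))) :
    ∀ x, S x → f.SameCycle x top := by
  have key : ∀ n x, S x → B - lab x ≤ n → f.SameCycle x top := by
    intro n
    induction n with
    | zero =>
      intro x hx hn
      rcases h x hx with rfl | ⟨_, h2⟩
      · exact SameCycle.refl _ _
      · have := hB (f x)
        omega
    | succ n ih =>
      intro x hx hn
      rcases h x hx with rfl | ⟨h1, h2⟩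
      · exact SameCycle.refl _ _
      · have := hB (f x)
        exact sameCycle_apply_left.1 (ih (f x) h1 (by omega))
  intro x hx
  exact key _ x hx le_rfl

lemma card_cycleOf {α : Type*} [Fintype α] [DecidableEq α] (f : Perm α) (x : α) (s : Finset α)
    (hx : f x ≠ x) (hs : ∀ y, y ∈ s ↔ f.SameCycle x y) : (f.cycleOf x).support.card = s.card := by
  congr 1
  ext y
  rw [hs, mem_support_cycleOf_iff' hx]

lemma cycleType_two {α : Type*} [Fintype α] [DecidableEq α] (f : Perm α) (r : ℕ)
    (hcard : Fintype.card α = r * 2) (h2 : ∀ x, f (f x) = x) (h1 : ∀ x, f x ≠ x) :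
    f.cycleType = Multiset.replicate r 2 := by
  refine cycleType_of_uniform f 2 r le_rfl hcard fun x => ?_
  have h := cycleOf_pow_apply_self f x
  have hc : (f.cycleOf x).IsCycle := isCycle_cycleOf f (h1 x)
  have h3 := hc.orderOf
  rw [← h3]
  refine orderOf_eq_prime ?_ ?_
  · rw [hc.pow_eq_one_iff' (x := x) (by simpa using h1 x), h]
    simp [pow_two, h2]
  · intro h4
    exact h1 x ((cycleOf_eq_one_iff f).1 h4)

lemma cycleType_four {α : Type*} [Fintype α] [DecidableEq α] (f : Perm α) (r : ℕ)
    (hcard : Fintype.card α = r * 4) (h4 : ∀ x, f (f (f (f x))) = x) (h2 : ∀ x, f (f x) ≠ x) :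
    f.cycleType = Multiset.replicate r 4 := by
  have h1 : ∀ x, f x ≠ x := fun x h => h2 x (by rw [h, h])
  refine cycleType_of_uniform f 4 r (by norm_num) hcard fun x => ?_
  have h := cycleOf_pow_apply_self f x
  have hc : (f.cycleOf x).IsCycle := isCycle_cycleOf f (h1 x)
  have h3 := hc.orderOf
  rw [← h3]
  have hx : f.cycleOf x x ≠ x := by simpa using h1 x
  have := orderOf_eq_prime_pow (x := f.cycleOf x) (p := 2) (n := 1) ?_ ?_
  · simpa using this
  · rw [hc.pow_eq_one_iff' hx, h]
    simpa [pow_two] using h2 x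
  · rw [hc.pow_eq_one_iff' hx, h]
    simp [pow_succ, h4]

/-- The partner of a passage time in the Gauss word. -/
def tau (t : ℕ) : ℕ :=
  if t < 6 then
    if t = 0 then 2 else if t = 1 then 4 else if t = 2 then 0 else if t = 3 then 5 else
      if t = 4 then 1 else 3
  else if t % 4 < 2 then t - 2 else t + 2

/-- The sign of a passage. -/
def sg (t : ℕ) : Prop := t = 0 ∨ t = 4 ∨ t = 5 ∨ (6 ≤ t ∧ t % 4 < 2)

instance : DecidablePred sg := fun t => by unfold sg; infer_instance

/-- Edge involution on darts. -/
def s0 (m x : ℕ) : ℕ :=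
  if x < m then (if x + 1 = m then m else m + x + 1)
  else (if x = m then m - 1 else x - m - 1)

/-- Rotation around vertices. -/
def s1 (m x : ℕ) : ℕ :=
  if x < m then (if sg x then m + tau x else tau x)
  else (if sg (x - m) then tau (x - m) else m + tau (x - m))

lemma tau_spec (t : ℕ) : (t = 0 ∧ tau t = 2 ∧ sg t) ∨ (t = 1 ∧ tau t = 4 ∧ ¬ sg t) ∨
    (t = 2 ∧ tau t = 0 ∧ ¬ sg t) ∨ (t = 3 ∧ tau t = 5 ∧ ¬ sg t) ∨ (t = 4 ∧ tau t = 1 ∧ sg t) ∨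
    (t = 5 ∧ tau t = 3 ∧ sg t) ∨ (6 ≤ t ∧ t % 4 < 2 ∧ tau t = t - 2 ∧ sg t) ∨
    (6 ≤ t ∧ 2 ≤ t % 4 ∧ tau t = t + 2 ∧ ¬ sg t) := by
  by_cases h : t < 6
  · interval_cases t <;> simp [tau, sg]
  · by_cases h2 : t % 4 < 2
    · have e1 : tau t = t - 2 := by simp [tau, h, h2]
      have e2 : sg t := Or.inr (Or.inr (Or.inr ⟨by omega, h2⟩))
      exact Or.inr (Or.inr (Or.inr (Or.inr (Or.inr (Or.inr (Or.inl ⟨by omega, h2, e1, e2⟩))))))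
    · have e1 : tau t = t + 2 := by simp [tau, h, h2]
      have e2 : ¬ sg t := by unfold sg; omega
      exact Or.inr (Or.inr (Or.inr (Or.inr (Or.inr (Or.inr (Or.inr
        ⟨by omega, by omega, e1, e2⟩))))))

lemma tau_tau (t : ℕ) : tau (tau t) = t := by
  rcases tau_spec t with h | h | h | h | h | h | h | h <;>
  rcases tau_spec (tau t) with h' | h' | h' | h' | h' | h' | h' | h' <;> omega

lemma sg_tau (t : ℕ) : sg (tau t) ↔ ¬ sg t := by
  rcases tau_spec t with h | h | h | h | h | h | h | h <;>
  rcases tau_spec (tau t) with h' | h' | h' | h' | h' | h' | h' | h' <;>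
  first | omega | exact iff_of_true h'.2.2 h.2.2 | exact iff_of_false h'.2.2 (not_not.2 h.2.2) |
    exact iff_of_true h'.2.2.2 h.2.2.2 | exact iff_of_false h'.2.2.2 (not_not.2 h.2.2.2)

lemma tau_lt (m t : ℕ) (k : ℕ) (hm : m = 4 * k + 6) (ht : t < m) : tau t < m := by
  rcases tau_spec t with h | h | h | h | h | h | h | h <;> omega

lemma s0_s0 (m x : ℕ) (hm : 6 ≤ m) (hx : x < 2 * m) : s0 m (s0 m x) = x := by
  unfold s0; split_ifs <;> omega

lemma s0_lt (m x : ℕ) (hm : 6 ≤ m) (hx : x < 2 * m) : s0 m x < 2 * m := by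
  unfold s0; split_ifs <;> omega

lemma s0_ne (m x : ℕ) (hm : 6 ≤ m) (hx : x < 2 * m) : s0 m x ≠ x := by
  unfold s0; split_ifs <;> omega

lemma s1_lt (m x k : ℕ) (hm : m = 4 * k + 6) (hx : x < 2 * m) : s1 m x < 2 * m := by
  unfold s1
  split_ifs with h h2 h2
  · have := tau_lt m x k hm h; omega
  · have := tau_lt m x k hm h; omega
  · have := tau_lt m (x - m) k hm (by omega); omega
  · have := tau_lt m (x - m) k hm (by omega); omega

/-- The square of the rotation goes to the opposite dart. -/
lemma s1_s1 (m x k : ℕ) (hm : m = 4 * k + 6) (hx : x < 2 * m) :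
    s1 m (s1 m x) = if x < m then x + m else x - m := by
  by_cases h : x < m
  · have h1 := tau_lt m x k hm h
    by_cases h2 : sg x
    · have : s1 m x = m + tau x := by simp [s1, h, h2]
      rw [this]
      simp [s1, sg_tau, tau_tau, h, h2, add_comm]
    · have : s1 m x = tau x := by simp [s1, h, h2]
      rw [this]
      simp [s1, sg_tau, tau_tau, h, h1, h2, add_comm]
  · have h1 := tau_lt m (x - m) k hm (by omega)
    by_cases h2 : sg (x - m)
    · have : s1 m x = tau (x - m) := by simp [s1, h, h2]
      rw [this]
      simp [s1, sg_tau, tau_tau, h, h1, h2]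
    · have : s1 m x = m + tau (x - m) := by simp [s1, h, h2]
      rw [this]
      simp [s1, sg_tau, tau_tau, h, h2]

/-- Position of an outgoing dart on the boundary of the face. -/
def labOut (k t : ℕ) : ℕ :=
  if t < 6 then
    if t = 0 then 0 else if t = 1 then 2 * k + 9 else if t = 2 then 2 * k + 3 else
      if t = 3 then 2 * k + 8 else if t = 4 then 2 * k + 7 else 2
  else
    if t % 4 = 2 then 2 * k + 11 + 6 * (k - 1 - (t - 6) / 4) + 3 else
    if t % 4 = 3 then 2 * k + 11 + 6 * (k - 1 - (t - 6) / 4) + 2 else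
    if t % 4 = 0 then 2 * k + 11 + 6 * (k - 1 - (t - 6) / 4) + 1 else
    4 + 2 * ((t - 6) / 4)

/-- Position of an incoming dart on the boundary of the face. -/
def labIn (k t : ℕ) : ℕ :=
  if t < 6 then
    if t = 0 then 2 * k + 10 else if t = 1 then 2 * k + 5 else if t = 2 then 2 * k + 6 else
      if t = 3 then 8 * k + 11 else if t = 4 then 1 else 2 * k + 4
  else
    if t % 4 = 2 then 2 * k + 11 + 6 * (k - 1 - (t - 6) / 4) + 5 else
    if t % 4 = 3 then 2 * k + 11 + 6 * (k - 1 - (t - 6) / 4) else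
    if t % 4 = 0 then 3 + 2 * ((t - 6) / 4) else
    2 * k + 11 + 6 * (k - 1 - (t - 6) / 4) + 4

/-- Position of a dart on the boundary of the face. -/
def lab (k m x : ℕ) : ℕ := if x < m then labOut k x else labIn k (x - m)

lemma lab_le (k m x : ℕ) : lab k m x ≤ 8 * k + 12 + x + m := by
  unfold lab labOut labIn
  split_ifs <;> omega

lemma blk0 (k j : ℕ) : tau (6 + 4 * j) = 8 + 4 * j ∧ ¬ sg (6 + 4 * j) ∧
    labOut k (6 + 4 * j) = 2 * k + 14 + 6 * (k - 1 - j) ∧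
    labIn k (6 + 4 * j) = 2 * k + 16 + 6 * (k - 1 - j) := by
  have h1 : ¬ (6 + 4 * j < 6) := by omega
  have h2 : (6 + 4 * j) % 4 = 2 := by omega
  have h3 : (6 + 4 * j - 6) / 4 = j := by omega
  refine ⟨?_, by unfold sg; omega, ?_, ?_⟩
  · simp only [tau, h1, h2, if_false]; norm_num; omega
  · simp only [labOut, h1, h2, h3, if_false]; norm_num; omega
  · simp only [labIn, h1, h2, h3, if_false]; norm_num; omega

lemma blk1 (k j : ℕ) : tau (7 + 4 * j) = 9 + 4 * j ∧ ¬ sg (7 + 4 * j) ∧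
    labOut k (7 + 4 * j) = 2 * k + 13 + 6 * (k - 1 - j) ∧
    labIn k (7 + 4 * j) = 2 * k + 11 + 6 * (k - 1 - j) := by
  have h1 : ¬ (7 + 4 * j < 6) := by omega
  have h2 : (7 + 4 * j) % 4 = 3 := by omega
  have h3 : (7 + 4 * j - 6) / 4 = j := by omega
  refine ⟨?_, by unfold sg; omega, ?_, ?_⟩
  · simp only [tau, h1, h2, if_false]; norm_num; omega
  · simp only [labOut, h1, h2, h3, if_false]; norm_num; omega
  · simp only [labIn, h1, h2, h3, if_false]; norm_num

lemma blk2 (k j : ℕ) : tau (8 + 4 * j) = 6 + 4 * j ∧ sg (8 + 4 * j) ∧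
    labOut k (8 + 4 * j) = 2 * k + 12 + 6 * (k - 1 - j) ∧
    labIn k (8 + 4 * j) = 3 + 2 * j := by
  have h1 : ¬ (8 + 4 * j < 6) := by omega
  have h2 : (8 + 4 * j) % 4 = 0 := by omega
  have h3 : (8 + 4 * j - 6) / 4 = j := by omega
  refine ⟨?_, by unfold sg; omega, ?_, ?_⟩
  · simp only [tau, h1, h2, if_false]; norm_num; omega
  · simp only [labOut, h1, h2, h3, if_false]; norm_num; omega
  · simp only [labIn, h1, h2, h3, if_false]; norm_num

lemma blk3 (k j : ℕ) : tau (9 + 4 * j) = 7 + 4 * j ∧ sg (9 + 4 * j) ∧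
    labOut k (9 + 4 * j) = 4 + 2 * j ∧
    labIn k (9 + 4 * j) = 2 * k + 15 + 6 * (k - 1 - j) := by
  have h1 : ¬ (9 + 4 * j < 6) := by omega
  have h2 : (9 + 4 * j) % 4 = 1 := by omega
  have h3 : (9 + 4 * j - 6) / 4 = j := by omega
  refine ⟨?_, by unfold sg; omega, ?_, ?_⟩
  · simp only [tau, h1, h2, if_false]; norm_num; omega
  · simp only [labOut, h1, h2, h3, if_false]; norm_num
  · simp only [labIn, h1, h2, h3, if_false]; norm_num; omega

lemma time_cases (t : ℕ) (h : 6 ≤ t) :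
    ∃ j, t = 6 + 4 * j ∨ t = 7 + 4 * j ∨ t = 8 + 4 * j ∨ t = 9 + 4 * j :=
  ⟨(t - 6) / 4, by omega⟩

/-- Leaving a vertex forward. -/
lemma core_out (k x : ℕ) (hx : x + 1 < 4 * k + 6) :
    labOut k x < if sg (x + 1) then labOut k (tau (x + 1)) else labIn k (tau (x + 1)) := by
  by_cases h : x < 5
  · interval_cases x <;> simp [tau, sg, labOut, labIn] <;> omega
  · by_cases h5 : x = 5
    · subst h5
      have h0 := blk0 k 0
      have h2 := blk2 k 0
      have e : labOut k 5 = 2 := by simp [labOut]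
      simp only [Nat.mul_zero, Nat.add_zero] at h0 h2
      simp only [Nat.reduceAdd, e, h0, h2, if_false]
      norm_num
    · obtain ⟨j, rfl | rfl | rfl | rfl⟩ := time_cases x (by omega)
      · rw [show 6 + 4 * j + 1 = 7 + 4 * j by ring]
        simp only [blk0 k, blk1 k, blk3 k, if_false, if_true]
        omega
      · rw [show 7 + 4 * j + 1 = 8 + 4 * j by ring]
        simp only [blk0 k, blk1 k, blk2 k, if_false, if_true]
        omega
      · rw [show 8 + 4 * j + 1 = 9 + 4 * j by ring]
        simp only [blk1 k, blk2 k, blk3 k, if_false, if_true]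
        omega
      · rw [show 9 + 4 * j + 1 = 6 + 4 * (j + 1) by ring]
        simp only [blk0 k, blk2 k, blk3 k, if_false]
        omega

/-- Leaving a vertex backward. -/
lemma core_in (k x : ℕ) (hx : x + 1 < 4 * k + 6) (h3 : x ≠ 2) :
    labIn k (x + 1) < if sg x then labIn k (tau x) else labOut k (tau x) := by
  by_cases h : x < 5
  · interval_cases x <;> simp [tau, sg, labOut, labIn] at h3 ⊢ <;> omega
  · by_cases h5 : x = 5
    · subst h5
      have h0 := blk0 k 0
      simp only [Nat.mul_zero, Nat.add_zero] at h0
      have e : labIn k 3 = 8 * k + 11 := by simp [labIn]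
      have e1 : tau 5 = 3 := by simp [tau]
      have e2 : sg 5 := by simp [sg]
      simp only [Nat.reduceAdd, e, e1, e2, h0, if_true]
      omega
    · obtain ⟨j, rfl | rfl | rfl | rfl⟩ := time_cases x (by omega)
      · rw [show 6 + 4 * j + 1 = 7 + 4 * j by ring]
        simp only [blk0 k, blk1 k, blk2 k, if_false]
        omega
      · rw [show 7 + 4 * j + 1 = 8 + 4 * j by ring]
        simp only [blk1 k, blk2 k, blk3 k, if_false]
        omega
      · rw [show 8 + 4 * j + 1 = 9 + 4 * j by ring]
        simp only [blk0 k, blk2 k, blk3 k, if_true]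
        omega
      · rw [show 9 + 4 * j + 1 = 6 + 4 * (j + 1) by ring]
        simp only [blk0 k, blk1 k, blk3 k, if_true]
        omega

lemma core_last (k : ℕ) : labOut k (4 * k + 5) < 2 * k + 3 ∧
    2 * k + 10 < if sg (4 * k + 5) then labIn k (tau (4 * k + 5))
      else labOut k (tau (4 * k + 5)) := by
  rcases k with _ | k
  · simp [tau, sg, labOut, labIn]
  · rw [show 4 * (k + 1) + 5 = 9 + 4 * k by ring]
    simp only [blk3 (k + 1), blk1 (k + 1), if_true]
    omega

lemma lab_lt (m x k : ℕ) (hm : m = 4 * k + 6) (hx : x < 2 * m) :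
    x = m + 3 ∨ lab k m x < lab k m (s1 m (s0 m x)) := by
  by_cases h : x < m
  · right
    have e3 : lab k m x = labOut k x := by simp [lab, h]
    by_cases h0 : x + 1 = m
    · have e : s1 m (s0 m x) = 2 := by simp [s0, s1, h0, h, tau, sg]
      have e2 : lab k m 2 = 2 * k + 3 := by simp [lab, labOut]; omega
      rw [e, e2, e3, show x = 4 * k + 5 by omega]
      exact (core_last k).1
    · have e : s0 m x = m + (x + 1) := by simp [s0, h, h0]; omega
      have e' : s1 m (m + (x + 1)) = if sg (x + 1) then tau (x + 1) else m + tau (x + 1) := by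
        simp [s1]
      rw [e, e', e3]
      have hlt := tau_lt m (x + 1) k hm (by omega)
      have f1 : lab k m (tau (x + 1)) = labOut k (tau (x + 1)) := by simp [lab, hlt]
      have f2 : lab k m (m + tau (x + 1)) = labIn k (tau (x + 1)) := by simp [lab]
      have := core_out k x (by omega)
      split_ifs at this ⊢
      · rwa [f1]
      · rwa [f2]
  · have e3 : lab k m x = labIn k (x - m) := by simp [lab, h]
    have key : ∀ y, y < m → lab k m (s1 m y) =
        if sg y then labIn k (tau y) else labOut k (tau y) := by
      intro y hy
      have hlt := tau_lt m y k hm hy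
      by_cases hs : sg y <;> simp [s1, hs, hy, lab, hlt]
    by_cases h0 : x = m
    · right
      have e : s0 m x = 4 * k + 5 := by simp [s0, h0]; omega
      have e4 : labIn k (x - m) = 2 * k + 10 := by simp [labIn, h0]
      rw [e, key _ (by omega), e3, e4]
      exact (core_last k).2
    · by_cases h3 : x = m + 3
      · exact Or.inl h3
      · right
        have e : s0 m x = x - m - 1 := by simp [s0, h, h0]
        have := core_in k (x - m - 1) (by omega) (by omega)
        rw [show x - m - 1 + 1 = x - m by omega] at this
        rw [e, key _ (by omega), e3]
        exact this

end FillingCurve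

open Equiv Equiv.Perm FillingCurve in
/-- For every genus g ≥ 2 there is a monodromy pair on 8g − 4 points
consisting of 4g − 2 transpositions and 2g − 1 four-cycles whose product
σ₁σ₀ is a single (8g − 4)-cycle (so the pair is transitive) and such that
σ₁²σ₀ splits as two disjoint cycles of equal length 4g − 2:
the monodromy of a uniform filling curve in general position with one face. -/
theorem exists_uniform_filling_curve_one_face (g : ℕ) (hg : 2 ≤ g) :
    ∃ σ₀ σ₁ : Equiv.Perm (Fin (8 * g - 4)),
      σ₀.cycleType = Multiset.replicate (4 * g - 2) 2 ∧
      σ₁.cycleType = Multiset.replicate (2 * g - 1) 4 ∧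
      (σ₁ * σ₀).cycleType = {8 * g - 4} ∧
      (∀ x y : Fin (8 * g - 4),
        ∃ π ∈ Subgroup.closure ({σ₀, σ₁} : Set (Equiv.Perm (Fin (8 * g - 4)))),
          π x = y) ∧
      (σ₁ ^ 2 * σ₀).cycleType = {4 * g - 2, 4 * g - 2} := by
  obtain ⟨k, rfl⟩ : ∃ k, g = k + 2 := ⟨g - 2, by omega⟩
  obtain ⟨m, hm⟩ : ∃ m, m = 4 * k + 6 := ⟨_, rfl⟩
  have hm6 : 6 ≤ m := by omega
  rw [show 8 * (k + 2) - 4 = 2 * m by omega, show 4 * (k + 2) - 2 = m by omega]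
  obtain ⟨n, hn⟩ : ∃ n, n = 2 * (k + 2) - 1 := ⟨_, rfl⟩
  rw [← hn]
  have hnm : 2 * m = n * 4 := by omega
  let f0 : Fin (2 * m) → Fin (2 * m) := fun x => ⟨s0 m x, s0_lt m x hm6 x.2⟩
  let f1 : Fin (2 * m) → Fin (2 * m) := fun x => ⟨s1 m x, s1_lt m x k hm x.2⟩
  have h0 : ∀ x, f0 (f0 x) = x := fun x => Fin.ext (s0_s0 m x hm6 x.2)
  have hf11 : ∀ x : Fin (2 * m), ((f1 (f1 x) : Fin (2 * m)) : ℕ) =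
      if (x : ℕ) < m then (x : ℕ) + m else x - m := fun x => s1_s1 m x k hm x.2
  have h1 : ∀ x, f1 (f1 (f1 (f1 x))) = x := by
    intro x
    apply Fin.ext
    rw [hf11, hf11]
    have := x.2
    split_ifs <;> omega
  let σ₀ : Perm (Fin (2 * m)) := ⟨f0, f0, h0, h0⟩
  let σ₁ : Perm (Fin (2 * m)) := ⟨f1, fun x => f1 (f1 (f1 x)), h1, h1⟩
  have hφ : ∀ x, (σ₁ * σ₀).SameCycle x ⟨m + 3, by omega⟩ := by
    intro x
    refine sameCycle_of_potential (σ₁ * σ₀) (fun _ => True) ⟨m + 3, by omega⟩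
      (fun x => lab k m x) (8 * k + 12 + 2 * m + m) ?_ ?_ x trivial
    · intro x
      have := lab_le k m x
      have := x.2
      omega
    · intro x _
      rcases lab_lt m x k hm x.2 with h | h
      · exact Or.inl (Fin.ext h)
      · exact Or.inr ⟨trivial, h⟩
  have hφ2 : ∀ x y, (σ₁ * σ₀).SameCycle x y := fun x y => (hφ x).trans (hφ y).symm
  have hρ : ∀ x : Fin (2 * m), Fin.val ((σ₁ ^ 2 * σ₀) x) =
      if (x : ℕ) < m then (if (x : ℕ) + 1 = m then (0 : ℕ) else (x : ℕ) + 1)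
      else (if (x : ℕ) = m then 2 * m - 1 else (x : ℕ) - 1) := by
    intro x
    have e : (σ₁ ^ 2 * σ₀) x = f1 (f1 (f0 x)) := by
      rw [pow_two]; rfl
    rw [e, hf11]
    have : ((f0 x : Fin (2 * m)) : ℕ) = s0 m x := rfl
    rw [this]
    have := x.2
    unfold s0
    split_ifs <;> omega
  have hlow : ∀ x : Fin (2 * m), (x : ℕ) < m →
      (σ₁ ^ 2 * σ₀).SameCycle x ⟨m - 1, by omega⟩ := by
    refine sameCycle_of_potential (σ₁ ^ 2 * σ₀) (fun x : Fin (2 * m) => (x : ℕ) < m) ⟨m - 1, by omega⟩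
      (fun x : Fin (2 * m) => (x : ℕ)) (2 * m) (fun x => x.2.le) ?_
    intro x hx
    try dsimp only at hx ⊢
    rw [hρ, Fin.ext_iff]
    try dsimp only
    split_ifs <;> omega
  have hhigh : ∀ x : Fin (2 * m), m ≤ (x : ℕ) →
      (σ₁ ^ 2 * σ₀).SameCycle x ⟨m, by omega⟩ := by
    refine sameCycle_of_potential (σ₁ ^ 2 * σ₀) (fun x : Fin (2 * m) => m ≤ (x : ℕ)) ⟨m, by omega⟩
      (fun x : Fin (2 * m) => 2 * m - (x : ℕ)) (2 * m) (fun x => Nat.sub_le _ _) ?_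
    intro x hx
    try dsimp only at hx ⊢
    rw [hρ, Fin.ext_iff]
    try dsimp only
    have := x.2
    split_ifs <;> omega
  have hinv : ∀ x y : Fin (2 * m), (σ₁ ^ 2 * σ₀).SameCycle x y → ((x : ℕ) < m ↔ (y : ℕ) < m) := by
    intro x y hxy
    obtain ⟨i, -, rfl⟩ := hxy.exists_pow_eq'
    clear hxy
    induction i with
    | zero => simp
    | succ i ih =>
      rw [ih, pow_succ' (σ₁ ^ 2 * σ₀) i, Perm.mul_apply _ ((σ₁ ^ 2 * σ₀) ^ i), hρ]
      have := (((σ₁ ^ 2 * σ₀) ^ i) x).2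
      split_ifs <;> omega
  refine ⟨σ₀, σ₁, ?_, ?_, ?_, ?_, ?_⟩
  · refine cycleType_two σ₀ m (by simp [mul_comm]) h0 ?_
    intro x hx
    exact s0_ne m x hm6 x.2 (congrArg Fin.val hx)
  · refine cycleType_four σ₁ n (by simpa using hnm) h1 ?_
    intro x hx
    have h2 := hf11 x
    have h3 : f1 (f1 x) = x := hx
    rw [h3] at h2
    split_ifs at h2 <;> omega
  · have := cycleType_of_uniform (σ₁ * σ₀) (2 * m) 1 (by omega) (by simp) ?_
    · simpa using this
    · intro x
      rw [card_cycleOf _ x Finset.univ ?_ ?_]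
      · simp
      · intro hx
        have hne : ∀ y, x = y := fun y => by
          obtain ⟨i, -, hi⟩ := (hφ2 x y).exists_pow_eq'
          rw [← hi, pow_apply_eq_self_of_apply_eq_self hx]
        have a := hne ⟨0, by omega⟩
        have b := hne ⟨1, by omega⟩
        rw [a, Fin.ext_iff] at b
        simp at b
      · intro y
        simp [hφ2]
  · intro x y
    obtain ⟨i, hi⟩ := hφ2 x y
    refine ⟨_, ?_, hi⟩
    refine Subgroup.zpow_mem _ (Subgroup.mul_mem _ ?_ ?_) _
    · exact Subgroup.subset_closure (by simp)
    · exact Subgroup.subset_closure (by simp)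
  · have := cycleType_of_uniform (σ₁ ^ 2 * σ₀) m 2 (by omega) (by simp) ?_
    · rw [this]; rfl
    · intro x
      have hx : (σ₁ ^ 2 * σ₀) x ≠ x := by
        rw [Ne, Fin.ext_iff, hρ]
        have := x.2
        split_ifs <;> omega
      by_cases h : (x : ℕ) < m
      · rw [card_cycleOf _ x (Finset.Iio ⟨m, by omega⟩) hx ?_]
        · simp
        · intro y
          rw [Finset.mem_Iio, Fin.lt_def]
          exact ⟨fun hy => (hlow x h).trans (hlow y hy).symm, fun hxy => (hinv x y hxy).1 h⟩
      · rw [card_cycleOf _ x (Finset.Ici ⟨m, by omega⟩) hx ?_]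
        · simp; omega
        · intro y
          rw [Finset.mem_Ici, Fin.le_def]
          refine ⟨fun hy => (hhigh x (by omega)).trans (hhigh y hy).symm, fun hxy => ?_⟩
          have := hinv x y hxy
          simp only
          omega
end

section
/- For every natural number g ≥ 2 there exist permutations σ₀, σ₁ of Fin (8g) such that: the cycle type of σ₀ consists of 4g copies of 2 (a product of 4g disjoint transpositions covering all points); the cycle type of σ₁ consists of 2g copies of 4; the cycle type of σ₁σ₀ is the multiset {4g, 4g} (two disjoint cycles of equal length 4g); the subgroup generated by σ₀ and σ₁ acts transitively on Fin (8g); and the cycle type of σ₁²σ₀ is the multiset {4g, 4g}. (This is the combinatorial content of the existence, for every genus g ≥ 2, of a uniform filling curve in general position whose complement has exactly two faces, whose length function is minimized on a surface uniformized by a surface subgroup of Δ(2,4,4g).) -/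
namespace Fill

def tabA : ℕ → ℕ
  | 0 => 2
  | 1 => 3
  | 2 => 0
  | 3 => 1
  | 4 => 6
  | 5 => 7
  | 6 => 4
  | 7 => 5
  | _ => 0

def flipA : ℕ → Bool
  | 2 => true
  | 3 => true
  | 4 => true
  | 5 => true
  | _ => false

def dirA : ℕ → Bool → Bool
  | 0, true => false
  | 0, false => false
  | 1, true => false
  | 1, false => false
  | 2, true => false
  | 3, false => false
  | 4, false => false
  | 5, true => false
  | _, _ => true

def idxA : ℕ → Bool → ℤ
  | 0, true => -3
  | 0, false => -1
  | 1, true => -4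
  | 1, false => -6
  | 2, true => -5
  | 2, false => 0
  | 3, true => 1
  | 3, false => -2
  | 4, true => 6
  | 4, false => -7
  | 5, true => -8
  | 5, false => 3
  | 6, true => 2
  | 6, false => 4
  | 7, true => 7
  | 7, false => 5
  | _, _ => 0

def tabB : ℕ → ℕ
  | 0 => 2
  | 1 => 3
  | 2 => 0
  | 3 => 1
  | 4 => 8
  | 5 => 9
  | 6 => 11
  | 7 => 10
  | 8 => 4
  | 9 => 5
  | 10 => 7
  | 11 => 6
  | _ => 0

def flipB : ℕ → Bool
  | 2 => true
  | 3 => true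
  | 8 => true
  | 9 => true
  | 10 => true
  | 11 => true
  | _ => false

def dirB : ℕ → Bool → Bool
  | 0, true => false
  | 0, false => false
  | 1, true => false
  | 1, false => false
  | 2, true => false
  | 3, false => false
  | 4, true => false
  | 4, false => false
  | 6, false => false
  | 7, true => false
  | 9, true => false
  | 9, false => false
  | _, _ => true

def idxB : ℕ → Bool → ℤ
  | 0, true => -3
  | 0, false => -1
  | 1, true => -4
  | 1, false => -6
  | 2, true => -5
  | 2, false => 0
  | 3, true => 1
  | 3, false => -2
  | 4, true => -9
  | 4, false => -7
  | 5, true => 8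
  | 5, false => 6
  | 6, true => 4
  | 6, false => -12
  | 7, true => -10
  | 7, false => 10
  | 8, true => 7
  | 8, false => 2
  | 9, true => -11
  | 9, false => -8
  | 10, true => 3
  | 10, false => 5
  | 11, true => 11
  | 11, false => 9
  | _, _ => 0

/-- Free action of the cyclic group generated by `σ`, all orbits of length `N`. -/
def Semireg {α : Type*} (σ : Equiv.Perm α) (N : ℕ) : Prop :=
  σ ^ N = 1 ∧ ∀ x j, 0 < j → j < N → (σ ^ j) x ≠ x

theorem Semireg.cycleType {α : Type*} [Fintype α] [DecidableEq α] {σ : Equiv.Perm α} {N m : ℕ}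
    (h : Semireg σ N) (hN : 2 ≤ N) (hc : Fintype.card α = m * N) :
    σ.cycleType = Multiset.replicate m N := by
  have h1 : ∀ c ∈ σ.cycleType, c = N := by
    intro c hc
    have hc2 := Equiv.Perm.two_le_of_mem_cycleType hc
    have hdvd : c ∣ N := (Equiv.Perm.dvd_of_mem_cycleType hc).trans (orderOf_dvd_of_pow_eq_one h.1)
    have hle := Nat.le_of_dvd (by omega) hdvd
    rw [Equiv.Perm.cycleType_def, Multiset.mem_map] at hc
    obtain ⟨f, hf, rfl⟩ := hc
    have hf' : f ∈ σ.cycleFactorsFinset := hf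
    have hcyc := (Equiv.Perm.mem_cycleFactorsFinset_iff.1 hf').1
    obtain ⟨a, ha⟩ := hcyc.nonempty_support
    have hfa := Equiv.Perm.cycle_is_cycleOf ha hf'
    by_contra hne
    simp only [Function.comp] at hne hle hc2
    refine h.2 a f.support.card (by omega) (by omega) ?_
    rw [← Equiv.Perm.cycleOf_pow_apply_self, ← hfa, ← hcyc.orderOf, pow_orderOf_eq_one]
    rfl
  have h2 := Multiset.eq_replicate_card.2 h1
  have h3 := σ.sum_cycleType
  have h4 : σ.support = Finset.univ := by
    ext x
    simpa using h.2 x 1 (by omega) (by omega)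
  rw [h4, Finset.card_univ, hc, h2, Multiset.sum_replicate, smul_eq_mul] at h3
  rw [h2, Nat.eq_of_mul_eq_mul_right (by omega) h3]

theorem Semireg.transport {α β : Type*} (e : α ≃ β) {σ : Equiv.Perm α} {N : ℕ}
    (h : Semireg σ N) : Semireg (e.permCongrHom σ) N := by
  constructor
  · rw [← map_pow, h.1, map_one]
  · intro x j hj hN hx
    rw [← map_pow] at hx
    apply h.2 (e.symm x) j hj hN
    apply e.injective
    simpa using hx

theorem semireg_of_pos {α : Type*} {σ : Equiv.Perm α} {N : ℕ} (P : α → ℤ) (C : α → Bool)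
    (hC : ∀ x, C (σ x) = C x) (hP : ∀ x, (N : ℤ) ∣ P (σ x) - (P x + 1))
    (hinj : ∀ x y, C x = C y → (N : ℤ) ∣ P x - P y → x = y) : Semireg σ N := by
  have hCj : ∀ j x, C ((σ ^ j) x) = C x := by
    intro j
    induction j with
    | zero => intro x; rfl
    | succ j ih => intro x; rw [pow_succ', Equiv.Perm.mul_apply, hC, ih]
  have hPj : ∀ (j : ℕ) x, (N : ℤ) ∣ P ((σ ^ j) x) - (P x + j) := by
    intro j
    induction j with
    | zero => intro x; simp
    | succ j ih =>
      intro x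
      rw [pow_succ', Equiv.Perm.mul_apply]
      obtain ⟨a, ha⟩ := hP ((σ ^ j) x)
      obtain ⟨b, hb⟩ := ih x
      refine ⟨a + b, ?_⟩
      rw [mul_add]
      rw [Nat.cast_succ]
      linarith
  constructor
  · ext1 x
    apply hinj _ _ (hCj N x)
    obtain ⟨a, ha⟩ := hPj N x
    refine ⟨a + 1, ?_⟩
    rw [mul_add]
    linarith
  · intro x j hj hjN hx
    have := hPj j x
    rw [hx] at this
    have h2 : (N : ℤ) ∣ j := by
      obtain ⟨a, ha⟩ := this
      exact ⟨-a, by linarith⟩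
    have := Nat.le_of_dvd hj (Int.natCast_dvd_natCast.1 h2)
    omega

/-- The pairing of the positions of the Gauss word. -/
def tau (m i : ℕ) : ℕ := if i < m then tabB i else m + 8 * ((i - m) / 8) + tabA ((i - m) % 8)

def flp (m i : ℕ) : Bool := if i < m then flipB i else flipA ((i - m) % 8)

def dir (m i : ℕ) (s : Bool) : Bool := if i < m then dirB i s else dirA ((i - m) % 8) s

def pos (m i : ℕ) (s : Bool) : ℤ := if i < m then idxB i s else
  if dirA ((i - m) % 8) s then (m + 8 * ((i - m) / 8) : ℕ) + idxA ((i - m) % 8) s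
  else -(m + 8 * ((i - m) / 8) : ℕ) + idxA ((i - m) % 8) s

theorem tau_blk (m k r : ℕ) (hr : r < 8) : tau m (m + 8 * k + r) = m + 8 * k + tabA r := by
  have h1 : (m + 8 * k + r - m) / 8 = k := by omega
  have h2 : (m + 8 * k + r - m) % 8 = r := by omega
  rw [tau, if_neg (by omega), h1, h2]
theorem flp_blk (m k r : ℕ) (hr : r < 8) : flp m (m + 8 * k + r) = flipA r := by
  have h2 : (m + 8 * k + r - m) % 8 = r := by omega
  rw [flp, if_neg (by omega), h2]
theorem dir_blk (m k r : ℕ) (hr : r < 8) (s : Bool) : dir m (m + 8 * k + r) s = dirA r s := by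
  have h2 : (m + 8 * k + r - m) % 8 = r := by omega
  rw [dir, if_neg (by omega), h2]
theorem pos_blk (m k r : ℕ) (hr : r < 8) (s : Bool) : pos m (m + 8 * k + r) s =
    if dirA r s then (m + 8 * k : ℤ) + idxA r s else -(m + 8 * k : ℤ) + idxA r s := by
  have h1 : (m + 8 * k + r - m) / 8 = k := by omega
  have h2 : (m + 8 * k + r - m) % 8 = r := by omega
  rw [pos, if_neg (by omega), h1, h2]
  push_cast
  rfl

theorem blk_or (m i : ℕ) : i < m ∨ ∃ k r, r < 8 ∧ i = m + 8 * k + r := by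
  by_cases h : i < m
  · exact Or.inl h
  · exact Or.inr ⟨(i - m) / 8, (i - m) % 8, by omega, by omega⟩

theorem tabA_lt : ∀ r < 8, tabA r < 8 := by decide
theorem tabB_lt : ∀ r < 12, tabB r < 12 := by decide
theorem tabA_tabA : ∀ r < 8, tabA (tabA r) = r := by decide
theorem tabB_tabB : ∀ r < 12, tabB (tabB r) = r := by decide
theorem flipA_tabA : ∀ r < 8, flipA (tabA r) = !flipA r := by decide
theorem flipB_tabB : ∀ r < 12, flipB (tabB r) = !flipB r := by decide
theorem idxA_t : ∀ r < 8, ∀ s, dirA r s = true → 0 ≤ idxA r s ∧ idxA r s < 8 := by decide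
theorem idxA_f : ∀ r < 8, ∀ s, dirA r s = false → -8 ≤ idxA r s ∧ idxA r s < 0 := by decide
theorem idxB_t : ∀ r < 12, ∀ s, dirB r s = true → 0 ≤ idxB r s ∧ idxB r s < 12 := by decide
theorem idxB_f : ∀ r < 12, ∀ s, dirB r s = false → -12 ≤ idxB r s ∧ idxB r s < 0 := by decide
theorem idxA_inj : ∀ r < 8, ∀ r' < 8, ∀ s s', idxA r s = idxA r' s' → r = r' ∧ s = s' := by
  decide
set_option maxRecDepth 4000 in
theorem idxB_inj : ∀ r < 12, ∀ r' < 12, ∀ s s', idxB r s = idxB r' s' → r = r' ∧ s = s' := by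
  decide

theorem tau_lt (m n i : ℕ) (hm : m = 0 ∨ m = 12) (hi : i < m + 8 * n) : tau m i < m + 8 * n := by
  rcases blk_or m i with h | ⟨k, r, hr, rfl⟩
  · have := tabB_lt i (by omega)
    rw [tau, if_pos h]; omega
  · rw [tau_blk m k r hr]
    have := tabA_lt r hr
    omega

theorem tau_tau (m i : ℕ) (hm : m = 0 ∨ m = 12) : tau m (tau m i) = i := by
  rcases blk_or m i with h | ⟨k, r, hr, rfl⟩
  · have := tabB_lt i (by omega)
    rw [tau, tau, if_pos h, if_pos (by omega), tabB_tabB i (by omega)]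
  · rw [tau_blk m k r hr, tau_blk m k _ (tabA_lt r hr), tabA_tabA r hr]

theorem flp_tau (m i : ℕ) (hm : m = 0 ∨ m = 12) : flp m (tau m i) = !flp m i := by
  rcases blk_or m i with h | ⟨k, r, hr, rfl⟩
  · have := tabB_lt i (by omega)
    rw [tau, flp, flp, if_pos h, if_pos (by omega), if_pos h, flipB_tabB i (by omega)]
  · rw [tau_blk m k r hr, flp_blk m k _ (tabA_lt r hr), flp_blk m k r hr, flipA_tabA r hr]

theorem pos_t (m n i : ℕ) (s : Bool) (hm : m = 0 ∨ m = 12) (hi : i < m + 8 * n)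
    (hd : dir m i s = true) : 0 ≤ pos m i s ∧ pos m i s < m + 8 * n := by
  rcases blk_or m i with h | ⟨k, r, hr, rfl⟩
  · rw [dir, if_pos h] at hd
    have := idxB_t i (by omega) s hd
    rw [pos, if_pos h]; omega
  · rw [dir_blk m k r hr] at hd
    have := idxA_t r hr s hd
    rw [pos_blk m k r hr, if_pos hd]; omega

theorem pos_f (m n i : ℕ) (s : Bool) (hm : m = 0 ∨ m = 12) (hi : i < m + 8 * n)
    (hd : dir m i s = false) : -(m + 8 * n : ℤ) ≤ pos m i s ∧ pos m i s < 0 := by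
  rcases blk_or m i with h | ⟨k, r, hr, rfl⟩
  · rw [dir, if_pos h] at hd
    have := idxB_f i (by omega) s hd
    rw [pos, if_pos h]; omega
  · rw [dir_blk m k r hr] at hd
    have := idxA_f r hr s hd
    rw [pos_blk m k r hr, if_neg (by simp [hd])]; omega

theorem pos_inj (m i j : ℕ) (s t : Bool) (hm : m = 0 ∨ m = 12)
    (hd : dir m i s = dir m j t) (hp : pos m i s = pos m j t) : i = j ∧ s = t := by
  rcases blk_or m i with h | ⟨k, r, hr, rfl⟩ <;> rcases blk_or m j with h' | ⟨k', r', hr', rfl⟩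
  · rw [pos, pos, if_pos h, if_pos h'] at hp
    exact idxB_inj i (by omega) j (by omega) s t hp
  · exfalso
    rw [pos, if_pos h, pos_blk m _ _ hr'] at hp
    rw [dir, if_pos h, dir_blk m _ _ hr'] at hd
    have a1 := idxB_t i (by omega) s
    have a2 := idxB_f i (by omega) s
    have a3 := idxA_t r' hr' t
    have a4 := idxA_f r' hr' t
    cases hh : dirA r' t <;> simp [hh, hd] at * <;> omega
  · exfalso
    rw [pos_blk m _ _ hr, pos, if_pos h'] at hp
    rw [dir_blk m _ _ hr, dir, if_pos h'] at hd
    have a1 := idxB_t j (by omega) t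
    have a2 := idxB_f j (by omega) t
    have a3 := idxA_t r hr s
    have a4 := idxA_f r hr s
    cases hh : dirA r s <;> simp [hh, ← hd] at * <;> omega
  · rw [pos_blk m _ _ hr, pos_blk m _ _ hr'] at hp
    rw [dir_blk m _ _ hr, dir_blk m _ _ hr'] at hd
    have a1 := idxA_t r hr s
    have a2 := idxA_f r hr s
    have a3 := idxA_t r' hr' t
    have a4 := idxA_f r' hr' t
    have : k = k' ∧ idxA r s = idxA r' t := by
      cases hh : dirA r' t <;> simp [hh, hd] at * <;> omega
    obtain ⟨h1, h2⟩ := idxA_inj r hr r' hr' s t this.2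
    exact ⟨by omega, h2⟩

/-- Endpoint of the edge leaving position `i` in direction `s`. -/
def nxt (N i : ℕ) (s : Bool) : ℕ :=
  if s then (if i + 1 = N then 0 else i + 1) else (if i = 0 then N - 1 else i - 1)

theorem nxt_lt (N i : ℕ) (s : Bool) (h : i < N) : nxt N i s < N := by
  unfold nxt; split_ifs <;> omega

theorem nxt_nxt (N i : ℕ) (s : Bool) (h : i < N) : nxt N (nxt N i s) (!s) = i := by
  unfold nxt; cases s <;> simp <;> split_ifs <;> omega

/-- Value data of a dart after the vertex rotation. -/
def dirR (m j : ℕ) (t : Bool) : Bool := dir m (tau m j) (t ^^ flp m j)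
def posR (m j : ℕ) (t : Bool) : ℤ := pos m (tau m j) (t ^^ flp m j)

theorem dirR_blk (m k r : ℕ) (hr : r < 8) (t : Bool) :
    dirR m (m + 8 * k + r) t = dirA (tabA r) (t ^^ flipA r) := by
  rw [dirR, tau_blk m k r hr, flp_blk m k r hr, dir_blk m k _ (tabA_lt r hr)]

theorem posR_blk (m k r : ℕ) (hr : r < 8) (t : Bool) : posR m (m + 8 * k + r) t =
    if dirA (tabA r) (t ^^ flipA r) then (m + 8 * k : ℤ) + idxA (tabA r) (t ^^ flipA r)
    else -(m + 8 * k : ℤ) + idxA (tabA r) (t ^^ flipA r) := by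
  rw [posR, tau_blk m k r hr, flp_blk m k r hr, pos_blk m k _ (tabA_lt r hr)]

theorem dirR_sp (j : ℕ) (hj : j < 12) (t : Bool) :
    dirR 12 j t = dirB (tabB j) (t ^^ flipB j) := by
  rw [dirR, tau, flp, dir, if_pos hj, if_pos hj, if_pos (tabB_lt j hj)]

theorem posR_sp (j : ℕ) (hj : j < 12) (t : Bool) :
    posR 12 j t = idxB (tabB j) (t ^^ flipB j) := by
  rw [posR, tau, flp, pos, if_pos hj, if_pos hj, if_pos (tabB_lt j hj)]

/-- The interior steps, and the entries. -/
theorem stepA_up : ∀ r < 7, dirA (tabA (r + 1)) (false ^^ flipA (r + 1)) = dirA r true ∧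
    idxA (tabA (r + 1)) (false ^^ flipA (r + 1)) = idxA r true + 1 := by decide
theorem stepA_down : ∀ r < 7, dirA (tabA r) (true ^^ flipA r) = dirA (r + 1) false ∧
    idxA (tabA r) (true ^^ flipA r) = idxA (r + 1) false + 1 := by decide
theorem stepB_up : ∀ r < 11, dirB (tabB (r + 1)) (false ^^ flipB (r + 1)) = dirB r true ∧
    idxB (tabB (r + 1)) (false ^^ flipB (r + 1)) = idxB r true + 1 := by decide
theorem stepB_down : ∀ r < 11, dirB (tabB r) (true ^^ flipB r) = dirB (r + 1) false ∧
    idxB (tabB r) (true ^^ flipB r) = idxB (r + 1) false + 1 := by decide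

theorem enter_up (m k : ℕ) : dirR m (m + 8 * k) false = true ∧
    posR m (m + 8 * k) false = m + 8 * k := by
  have h1 := dirR_blk m k 0 (by omega) false
  have h2 := posR_blk m k 0 (by omega) false
  simp [tabA, flipA, dirA, idxA] at h1 h2
  exact ⟨h1, h2⟩

theorem enter_down (m k : ℕ) : dirR m (m + 8 * k + 7) true = false ∧
    posR m (m + 8 * k + 7) true = -(m + 8 * k + 8 : ℤ) := by
  have h1 := dirR_blk m k 7 (by omega) true
  have h2 := posR_blk m k 7 (by omega) true
  simp [tabA, flipA, dirA, idxA] at h1 h2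
  exact ⟨h1, by rw [h2]; ring⟩

theorem enter_zero (m : ℕ) (hm : m = 0 ∨ m = 12) :
    dirR m 0 false = true ∧ posR m 0 false = 0 := by
  rcases hm with rfl | rfl
  · simpa using enter_up 0 0
  · rw [dirR_sp 0 (by omega), posR_sp 0 (by omega)]; decide

theorem enter_last (m n : ℕ) (hm : m = 0 ∨ m = 12) (hN : 0 < m + 8 * n) :
    dirR m (m + 8 * n - 1) true = false ∧ posR m (m + 8 * n - 1) true = -(m + 8 * n : ℤ) := by
  rcases n with _ | n
  · rcases hm with rfl | rfl
    · omega
    · rw [dirR_sp _ (by omega), posR_sp _ (by omega)]; decide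
  · have := enter_down m n
    rw [show m + 8 * (n + 1) - 1 = m + 8 * n + 7 by omega]
    refine ⟨this.1, this.2.trans ?_⟩
    push_cast; ring

theorem exit_up (m k : ℕ) : dir m (m + 8 * k + 7) true = true ∧
    pos m (m + 8 * k + 7) true = m + 8 * k + 7 := by
  rw [dir_blk m k 7 (by omega), pos_blk m k 7 (by omega)]
  simp [dirA, idxA]

theorem exit_down (m k : ℕ) : dir m (m + 8 * k + 0) false = false ∧
    pos m (m + 8 * k + 0) false = -(m + 8 * k : ℤ) - 1 := by
  rw [dir_blk m k 0 (by omega), pos_blk m k 0 (by omega)]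
  simp [dirA, idxA]
  ring

theorem step (m n i : ℕ) (s : Bool) (hm : m = 0 ∨ m = 12) (hi : i < m + 8 * n) :
    dirR m (nxt (m + 8 * n) i s) (!s) = dir m i s ∧
    ((m + 8 * n : ℕ) : ℤ) ∣ posR m (nxt (m + 8 * n) i s) (!s) - (pos m i s + 1) := by
  rcases blk_or m i with h | ⟨k, r, hr, rfl⟩
  · obtain rfl : m = 12 := by omega
    have hd : ∀ s, dir 12 i s = dirB i s := fun s => by rw [dir, if_pos h]
    have hp : ∀ s, pos 12 i s = idxB i s := fun s => by rw [pos, if_pos h]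
    rw [hd, hp]
    cases s
    · rcases i with _ | i
      · have := enter_last 12 n hm (by omega)
        simp only [nxt, Bool.not_false]
        simp only [Bool.false_eq_true, if_false, if_true]
        rw [this.1, this.2]
        refine ⟨by decide, ?_⟩
        refine ⟨-1, ?_⟩
        simp [idxB]
      · have e : nxt (12 + 8 * n) (i + 1) false = i := by simp [nxt]
        have := stepB_down i (by omega)
        rw [e, dirR_sp _ (by omega), posR_sp _ (by omega)]
        refine ⟨this.1, ?_⟩
        rw [Bool.not_false, this.2, sub_self]
        exact dvd_zero _
    · by_cases hl : i = 11
      · subst hl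
        by_cases hn : n = 0
        · subst hn
          decide
        · have e : nxt (12 + 8 * n) 11 true = 12 + 8 * 0 := by
            simp [nxt]; omega
          have := enter_up 12 0
          rw [e, Bool.not_true, this.1, this.2]
          refine ⟨by decide, ?_⟩
          simp [idxB]
      · have e : nxt (12 + 8 * n) i true = i + 1 := by simp [nxt]; omega
        have := stepB_up i (by omega)
        rw [e, dirR_sp _ (by omega), posR_sp _ (by omega)]
        refine ⟨this.1, ?_⟩
        rw [Bool.not_true, this.2, sub_self]
        exact dvd_zero _
  · cases s
    · rcases r with _ | r
      · have ex := exit_down m k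
        rw [ex.1, ex.2, Bool.not_false]
        by_cases h0 : m + 8 * k + 0 = 0
        · have := enter_last m n hm (by omega)
          have e : nxt (m + 8 * n) (m + 8 * k + 0) false = m + 8 * n - 1 := by
            rw [h0]; simp [nxt]
          rw [e, this.1, this.2]
          refine ⟨rfl, ⟨-1, ?_⟩⟩
          push_cast
          omega
        · have e : nxt (m + 8 * n) (m + 8 * k + 0) false = m + 8 * k - 1 := by
            simp only [nxt]; rw [if_neg (by simp), if_neg h0]; omega
          have := enter_last m k hm (by omega)
          rw [e, this.1, this.2]
          refine ⟨rfl, ⟨0, ?_⟩⟩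
          ring
      · have e : nxt (m + 8 * n) (m + 8 * k + (r + 1)) false = m + 8 * k + r := by
          simp [nxt, ← Nat.add_assoc]
        have := stepA_down r (by omega)
        rw [e, dirR_blk m k r (by omega), posR_blk m k r (by omega), dir_blk m k _ hr,
          pos_blk m k _ hr, Bool.not_false, this.1, this.2]
        refine ⟨rfl, ⟨0, ?_⟩⟩
        split_ifs <;> ring
    · by_cases h7 : r = 7
      · subst h7
        have ex := exit_up m k
        rw [ex.1, ex.2, Bool.not_true]
        by_cases hl : m + 8 * k + 7 + 1 = m + 8 * n
        · have := enter_zero m hm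
          have e : nxt (m + 8 * n) (m + 8 * k + 7) true = 0 := by
            simp [nxt, hl]
          rw [e, this.1, this.2]
          refine ⟨rfl, ⟨-1, ?_⟩⟩
          push_cast
          omega
        · have e : nxt (m + 8 * n) (m + 8 * k + 7) true = m + 8 * (k + 1) := by
            simp [nxt, hl]; omega
          have := enter_up m (k + 1)
          rw [e, this.1, this.2]
          refine ⟨rfl, ⟨0, ?_⟩⟩
          push_cast
          ring
      · have e : nxt (m + 8 * n) (m + 8 * k + r) true = m + 8 * k + (r + 1) := by
          simp only [nxt, if_true]; rw [if_neg (by omega)]; omega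
        have := stepA_up r (by omega)
        rw [e, dirR_blk m k (r + 1) (by omega), posR_blk m k (r + 1) (by omega), dir_blk m k _ hr,
          pos_blk m k _ hr, Bool.not_true, this.1, this.2]
        refine ⟨rfl, ⟨0, ?_⟩⟩
        split_ifs <;> ring

/-- The edge involution. -/
def s0 (N : ℕ) : Equiv.Perm (Fin N × Bool) where
  toFun x := (⟨nxt N x.1 x.2, nxt_lt _ _ _ x.1.2⟩, !x.2)
  invFun x := (⟨nxt N x.1 x.2, nxt_lt _ _ _ x.1.2⟩, !x.2)
  left_inv x := by
    ext <;> simp [nxt_nxt]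
  right_inv x := by
    ext <;> simp [nxt_nxt]

/-- The rotation at the vertices. -/
def s1 (m n : ℕ) (hm : m = 0 ∨ m = 12) : Equiv.Perm (Fin (m + 8 * n) × Bool) where
  toFun x := (⟨tau m x.1, tau_lt _ _ _ hm x.1.2⟩, x.2 ^^ flp m x.1)
  invFun x := (⟨tau m x.1, tau_lt _ _ _ hm x.1.2⟩, x.2 ^^ !flp m x.1)
  left_inv x := by
    ext <;> simp [tau_tau m _ hm, flp_tau m _ hm]
  right_inv x := by
    ext <;> simp [tau_tau m _ hm, flp_tau m _ hm]

theorem s1_sq (m n : ℕ) (hm : m = 0 ∨ m = 12) (x : Fin (m + 8 * n) × Bool) :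
    (s1 m n hm ^ 2) x = (x.1, !x.2) := by
  rw [pow_two, Equiv.Perm.mul_apply]
  ext
  · simp [s1, tau_tau m _ hm]
  · cases h : flp m x.1 <;> simp [s1, flp_tau m _ hm, h]

theorem s0_semireg (N : ℕ) : Semireg (s0 N) 2 := by
  constructor
  · ext x <;> simp [pow_two, s0, nxt_nxt]
  · intro x j h1 h2 hx
    obtain rfl : j = 1 := by omega
    have := congrArg Prod.snd hx
    simp [s0] at this

theorem s1_semireg (m n : ℕ) (hm : m = 0 ∨ m = 12) : Semireg (s1 m n hm) 4 := by
  have h4 : s1 m n hm ^ 4 = 1 := by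
    ext1 x
    rw [show 4 = 2 + 2 from rfl, pow_add, Equiv.Perm.mul_apply, s1_sq, s1_sq]
    simp
  have h2 : ∀ x, (s1 m n hm ^ 2) x ≠ x := by
    intro x hx
    rw [s1_sq] at hx
    have := congrArg Prod.snd hx
    simp at this
  refine ⟨h4, fun x j hj hj4 hx => h2 x ?_⟩
  interval_cases j
  · rw [pow_one] at hx
    rw [pow_two, Equiv.Perm.mul_apply, hx, hx]
  · exact hx
  · have h6 : (s1 m n hm ^ 6) x = x := by
      rw [show 6 = 3 + 3 from rfl, pow_add, Equiv.Perm.mul_apply, hx, hx]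
    rwa [show 6 = 4 + 2 from rfl, pow_add, h4, one_mul] at h6

theorem face_semireg (m n : ℕ) (hm : m = 0 ∨ m = 12) :
    Semireg (s1 m n hm * s0 (m + 8 * n)) (m + 8 * n) := by
  refine semireg_of_pos (fun x => pos m x.1 x.2) (fun x => dir m x.1 x.2) ?_ ?_ ?_
  · intro x
    exact (step m n x.1 x.2 hm x.1.2).1
  · intro x
    exact (step m n x.1 x.2 hm x.1.2).2
  · intro x y hd hp
    have key : pos m x.1 x.2 = pos m y.1 y.2 := by
      rw [← sub_eq_zero]
      apply Int.eq_zero_of_abs_lt_dvd hp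
      rw [abs_lt]
      push_cast
      cases h : dir m x.1 x.2
      · have a := pos_f m n x.1 x.2 hm x.1.2 h
        have b := pos_f m n y.1 y.2 hm y.1.2 (hd ▸ h)
        constructor <;> omega
      · have a := pos_t m n x.1 x.2 hm x.1.2 h
        have b := pos_t m n y.1 y.2 hm y.1.2 (hd ▸ h)
        constructor <;> omega
    obtain ⟨h1, h2⟩ := pos_inj m x.1 y.1 x.2 y.2 hm hd key
    exact Prod.ext (Fin.ext h1) h2

theorem curve_apply (m n : ℕ) (hm : m = 0 ∨ m = 12) (x : Fin (m + 8 * n) × Bool) :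
    (s1 m n hm ^ 2 * s0 (m + 8 * n)) x = (⟨nxt (m + 8 * n) x.1 x.2, nxt_lt _ _ _ x.1.2⟩, x.2) := by
  rw [Equiv.Perm.mul_apply, s1_sq]
  simp [s0]

theorem curve_semireg (m n : ℕ) (hm : m = 0 ∨ m = 12) :
    Semireg (s1 m n hm ^ 2 * s0 (m + 8 * n)) (m + 8 * n) := by
  refine semireg_of_pos (fun x => if x.2 then (x.1 : ℤ) else -(x.1 : ℤ)) (fun x => x.2) ?_ ?_ ?_
  · intro x
    rw [curve_apply]
  · rintro ⟨⟨i, hi⟩, s⟩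
    rw [curve_apply]
    generalize m + 8 * n = N at *
    cases s
    · by_cases h : i = 0
      · simp only [nxt, h]
        refine ⟨-1, ?_⟩
        simp
        omega
      · simp only [nxt, h]
        refine ⟨0, ?_⟩
        simp
        omega
    · by_cases h : i + 1 = N
      · simp only [nxt, h]
        refine ⟨-1, ?_⟩
        simp
        omega
      · simp only [nxt, h]
        refine ⟨0, ?_⟩
        simp
  · rintro ⟨⟨i, hi⟩, s⟩ ⟨⟨j, hj⟩, t⟩ hs hp
    simp only at hs hp
    subst hs
    have key : (i : ℤ) - j = 0 := by
      apply Int.eq_zero_of_abs_lt_dvd (m := ((m + 8 * n : ℕ) : ℤ))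
      · cases s
        · simp only [Bool.false_eq_true, if_false] at hp
          obtain ⟨a, ha⟩ := hp
          exact ⟨-a, by linarith⟩
        · simpa using hp
      · rw [abs_lt]; constructor <;> omega
    ext
    · simp; omega
    · rfl

theorem trans_aux (m n : ℕ) (hm : m = 0 ∨ m = 12) (hN : 0 < m + 8 * n)
    (x : Fin (m + 8 * n) × Bool) :
    ∃ π ∈ Subgroup.closure ({s0 (m + 8 * n), s1 m n hm} : Set (Equiv.Perm _)),
      π (⟨0, hN⟩, true) = x := by
  have m0 : s0 (m + 8 * n) ∈ Subgroup.closure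
    ({s0 (m + 8 * n), s1 m n hm} : Set (Equiv.Perm _)) := Subgroup.subset_closure (by simp)
  have m1 : s1 m n hm ∈ Subgroup.closure
    ({s0 (m + 8 * n), s1 m n hm} : Set (Equiv.Perm _)) := Subgroup.subset_closure (by simp)
  have key : ∀ i (hi : i < m + 8 * n),
      ∃ π ∈ Subgroup.closure ({s0 (m + 8 * n), s1 m n hm} : Set (Equiv.Perm _)),
      π (⟨0, hN⟩, true) = (⟨i, hi⟩, true) := by
    intro i
    induction i with
    | zero => intro hi; exact ⟨1, one_mem _, rfl⟩
    | succ i ih =>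
      intro hi
      obtain ⟨π, h1, h2⟩ := ih (by omega)
      refine ⟨(s1 m n hm ^ 2 * s0 (m + 8 * n)) * π,
        mul_mem (mul_mem (pow_mem m1 2) m0) h1, ?_⟩
      rw [Equiv.Perm.mul_apply, h2, curve_apply]
      ext
      · simp [nxt]; omega
      · rfl
  obtain ⟨⟨i, hi⟩, s⟩ := x
  obtain ⟨π, h1, h2⟩ := key i hi
  cases s
  · refine ⟨s1 m n hm ^ 2 * π, mul_mem (pow_mem m1 2) h1, ?_⟩
    rw [Equiv.Perm.mul_apply, h2, s1_sq]
    rfl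
  · exact ⟨π, h1, h2⟩

end Fill

open Fill in
/-- For every genus g ≥ 2 there is a transitive monodromy pair on 8g points
consisting of 4g transpositions and 2g four-cycles whose product σ₁σ₀ has
two faces of degree 4g, and such that σ₁²σ₀ splits as two disjoint cycles of
equal length 4g: the monodromy of a uniform filling curve in general position
with two faces. -/
theorem exists_uniform_filling_curve_two_faces (g : ℕ) (hg : 2 ≤ g) :
    ∃ σ₀ σ₁ : Equiv.Perm (Fin (8 * g)),
      σ₀.cycleType = Multiset.replicate (4 * g) 2 ∧
      σ₁.cycleType = Multiset.replicate (2 * g) 4 ∧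
      (σ₁ * σ₀).cycleType = {4 * g, 4 * g} ∧
      (∀ x y : Fin (8 * g),
        ∃ π ∈ Subgroup.closure ({σ₀, σ₁} : Set (Equiv.Perm (Fin (8 * g)))),
          π x = y) ∧
      (σ₁ ^ 2 * σ₀).cycleType = {4 * g, 4 * g} := by
  obtain ⟨m, n, hm, hN⟩ : ∃ m n, (m = 0 ∨ m = 12) ∧ m + 8 * n = 4 * g := by
    rcases Nat.even_or_odd' g with ⟨c, h | h⟩
    · exact ⟨0, c, Or.inl rfl, by omega⟩
    · exact ⟨12, c - 1, Or.inr rfl, by omega⟩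
  have hcard : Fintype.card (Fin (m + 8 * n) × Bool) = 8 * g := by
    simp only [Fintype.card_prod, Fintype.card_fin, Fintype.card_bool]; omega
  let e : Fin (m + 8 * n) × Bool ≃ Fin (8 * g) := Fintype.equivFinOfCardEq hcard
  have two : ∀ a : ℕ, ({a, a} : Multiset ℕ) = Multiset.replicate 2 a := fun a => rfl
  refine ⟨e.permCongrHom (s0 (m + 8 * n)), e.permCongrHom (s1 m n hm), ?_, ?_, ?_, ?_, ?_⟩
  · exact ((s0_semireg _).transport e).cycleType le_rfl (by rw [Fintype.card_fin]; omega)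
  · exact ((s1_semireg m n hm).transport e).cycleType (by omega) (by rw [Fintype.card_fin]; omega)
  · rw [← map_mul, two, ← hN]
    exact ((face_semireg m n hm).transport e).cycleType (by omega) (by rw [Fintype.card_fin]; omega)
  · have key : ∀ x : Fin (8 * g), ∃ π ∈ Subgroup.closure ({e.permCongrHom (s0 (m + 8 * n)),
        e.permCongrHom (s1 m n hm)} : Set (Equiv.Perm (Fin (8 * g)))),
        π (e (⟨0, by omega⟩, true)) = x := by
      intro x
      obtain ⟨π, h1, h2⟩ := trans_aux m n hm (by omega) (e.symm x)
      refine ⟨e.permCongrHom π, ?_, ?_⟩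
      · have := Subgroup.mem_map_of_mem e.permCongrHom.toMonoidHom h1
        rw [MonoidHom.map_closure, Set.image_pair] at this
        exact this
      · simp [h2]
    intro x y
    obtain ⟨π, h1, h2⟩ := key x
    obtain ⟨ρ, h3, h4⟩ := key y
    refine ⟨ρ * π⁻¹, mul_mem h3 (inv_mem h1), ?_⟩
    rw [Equiv.Perm.mul_apply, ← h2, ← Equiv.Perm.mul_apply π⁻¹ π, inv_mul_cancel, Equiv.Perm.one_apply, h4]
  · rw [← map_pow, ← map_mul, two, ← hN]
    exact ((curve_semireg m n hm).transport e).cycleType (by omega)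
      (by rw [Fintype.card_fin]; omega)
end

section
/- For every natural number g ≥ 4 with g ≡ 1 (mod 3) there exist permutations σ₀, σ₁ of Fin (8g + 4) such that: the cycle type of σ₀ consists of 4g + 2 copies of 2; the cycle type of σ₁ consists of 2g + 1 copies of 4; the cycle type of σ₁σ₀ consists of 3 copies of (8g + 4)/3 (three disjoint cycles of equal length); the subgroup generated by σ₀ and σ₁ acts transitively on Fin (8g + 4); and the cycle type of σ₁²σ₀ is the multiset {4g + 2, 4g + 2}. (This is the combinatorial content of the existence, for every genus g > 1 congruent to 1 mod 3, of a uniform filling curve in general position whose complement has exactly three faces, whose length function is minimized on a surface uniformized by a surface subgroup of Δ(2,4,(8g+4)/3).) -/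
open Equiv
set_option linter.all false
set_option linter.unusedSimpArgs false
set_option linter.unusedTactic false
/-- A permutation all of whose orbits have exactly `L` elements. -/
lemma cycleType_of_semiregular {α : Type*} [Fintype α] [DecidableEq α] (f : Perm α) (L k : ℕ)
    (hL : 2 ≤ L) (hcard : Fintype.card α = k * L) (h1 : ∀ x, (f ^ L) x = x)
    (h2 : ∀ x, ∀ j, 0 < j → j < L → (f ^ j) x ≠ x) :
    f.cycleType = Multiset.replicate k L := by
  have hall : ∀ n ∈ f.cycleType, n = L := by
    intro n hn
    rw [Perm.cycleType_def, Multiset.mem_map] at hn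
    obtain ⟨c, hc, rfl⟩ := hn
    have hc' : c ∈ f.cycleFactorsFinset := hc
    rw [Perm.mem_cycleFactorsFinset_iff] at hc'
    obtain ⟨hcyc, hagree⟩ := hc'
    obtain ⟨x, hx⟩ := hcyc.nonempty_support
    have hpow : ∀ j, (c ^ j) x = (f ^ j) x := by
      intro j
      induction j with
      | zero => rfl
      | succ j ih =>
        rw [pow_succ', pow_succ', Perm.mul_apply, Perm.mul_apply, ← ih]
        exact hagree _ ((Perm.pow_apply_mem_support).2 hx)
    have hxne : c x ≠ x := Perm.mem_support.1 hx
    have ho := hcyc.orderOf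
    have hcL : c ^ L = 1 := by
      rw [hcyc.pow_eq_one_iff]
      exact ⟨x, hxne, by rw [hpow, h1]⟩
    have hle : orderOf c ≤ L := Nat.le_of_dvd (by omega) (orderOf_dvd_of_pow_eq_one hcL)
    show c.support.card = L
    rw [← ho]
    by_contra hne
    refine h2 x (orderOf c) (orderOf_pos c) (by omega) ?_
    rw [← hpow, pow_orderOf_eq_one]; rfl
  have hrep := Multiset.eq_replicate_of_mem hall
  have hsum := f.sum_cycleType
  have hsupp : f.support = Finset.univ := by
    ext x
    simp only [Perm.mem_support, Finset.mem_univ, iff_true]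
    simpa using h2 x 1 one_pos (by omega)
  rw [hsupp, Finset.card_univ, hcard, hrep, Multiset.sum_replicate, smul_eq_mul] at hsum
  rw [hrep]
  congr 1
  exact Nat.eq_of_mul_eq_mul_right (by omega) hsum

/-- A permutation compatible with a colouring and a rank function mod `L`. -/
lemma cycleType_of_rank {α β : Type*} [Fintype α] [DecidableEq α] [Fintype β] (f : Perm α) (L : ℕ)
    (hL : 2 ≤ L) (c : α → β) (r : α → ZMod L)
    (hc : ∀ x, c (f x) = c x) (hr : ∀ x, r (f x) = r x + 1) (hs : Function.Surjective c)
    (hcard : Fintype.card α = Fintype.card β * L) :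
    f.cycleType = Multiset.replicate (Fintype.card β) L ∧
      ∀ x y, c x = c y → ∃ j : ℕ, (f ^ j) x = y := by
  have : NeZero L := ⟨by omega⟩
  have hcp : ∀ (j : ℕ) x, c ((f ^ j) x) = c x := by
    intro j x
    induction j with
    | zero => rfl
    | succ j ih => rw [pow_succ', Perm.mul_apply, hc, ih]
  have hrp : ∀ (j : ℕ) x, r ((f ^ j) x) = r x + j := by
    intro j x
    induction j with
    | zero => simp
    | succ j ih => rw [pow_succ', Perm.mul_apply, hr, ih]; push_cast; ring
  have hsurj : Function.Surjective (fun x => (c x, r x)) := by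
    rintro ⟨b, t⟩
    obtain ⟨x, rfl⟩ := hs b
    refine ⟨(f ^ (t - r x).val) x, ?_⟩
    simp [hcp, hrp]
  have hinj : Function.Injective (fun x => (c x, r x)) := by
    refine ((Fintype.bijective_iff_surjective_and_card _).2 ⟨hsurj, ?_⟩).1
    rw [hcard, Fintype.card_prod, ZMod.card]
  have key : ∀ x y, c x = c y → r x = r y → x = y := by
    intro x y h h'
    exact hinj (Prod.ext h h')
  refine ⟨cycleType_of_semiregular f L _ hL hcard ?_ ?_, ?_⟩
  · intro x
    exact key _ _ (hcp _ _) (by simp [hrp])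
  · intro x j hj hjL h
    have := hrp j x
    rw [h] at this
    have h0 : (j : ZMod L) = 0 := by simpa using this
    rw [ZMod.natCast_eq_zero_iff] at h0
    exact absurd (Nat.le_of_dvd hj h0) (by omega)
  · intro x y h
    refine ⟨(r y - r x).val, key _ _ (by rw [hcp, h]) (by simp [hrp])⟩

/-- The chord pairing on the positions of one block of the Gauss word. -/
def chordMate (q : ℕ) : ℕ :=
  if q = 0 then 2 else if q = 1 then 4 else if q = 2 then 0 else if q = 3 then 5
  else if q = 4 then 1 else if q = 5 then 3 else if (q + 2) % 4 < 2 then q + 2 else q - 2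

/-- The crossing sign seen from a position. -/
def chordSign (q : ℕ) : Bool :=
  decide (q = 0 ∨ q = 1 ∨ q = 5 ∨ (6 ≤ q ∧ (q + 2) % 4 < 2))

/-- Rank of a dart along its face. -/
def faceRank (k q : ℕ) (b : Bool) : ℕ :=
  if b then
    if q = 0 then 2 else if q = 1 then 1 else if q = 2 then 6 else if q = 3 then 0
    else if q = 4 then 9 + 2 * k else if q = 5 then 7
    else if (q + 2) % 4 = 0 then 12 + 2 * k + 6 * (k - 1 - (q - 6) / 4) + 3
    else if (q + 2) % 4 = 1 then 12 + 2 * k + 6 * (k - 1 - (q - 6) / 4) + 2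
    else if (q + 2) % 4 = 2 then 12 + 2 * k + 6 * (k - 1 - (q - 6) / 4) + 1
    else 9 + 2 * ((q - 6) / 4)
  else
    if q = 0 then 11 + 2 * k else if q = 1 then 5 else if q = 2 then 8 + 2 * k
    else if q = 3 then 10 + 2 * k
    else if q = 4 then 3 else if q = 5 then 4
    else if (q + 2) % 4 = 0 then 12 + 2 * k + 6 * (k - 1 - (q - 6) / 4) + 5
    else if (q + 2) % 4 = 1 then 12 + 2 * k + 6 * (k - 1 - (q - 6) / 4) + 0
    else if (q + 2) % 4 = 2 then 8 + 2 * ((q - 6) / 4)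
    else 12 + 2 * k + 6 * (k - 1 - (q - 6) / 4) + 4

/-- The darts of a block that belong to the face of the previous block. -/
def inArc (q : ℕ) (b : Bool) : Bool :=
  decide ((q = 2 ∧ b = false) ∨ (q = 4 ∧ b = true) ∨ (q = 3 ∧ b = false) ∨ (q = 0 ∧ b = false))

lemma mate_g0 (j : ℕ) : chordMate (4 * j + 6) = 4 * j + 8 := by
  unfold chordMate; split_ifs <;> first | contradiction | omega
lemma mate_g1 (j : ℕ) : chordMate (4 * j + 7) = 4 * j + 9 := by
  unfold chordMate; split_ifs <;> first | contradiction | omega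
lemma mate_g2 (j : ℕ) : chordMate (4 * j + 8) = 4 * j + 6 := by
  unfold chordMate; split_ifs <;> first | contradiction | omega
lemma mate_g3 (j : ℕ) : chordMate (4 * j + 9) = 4 * j + 7 := by
  unfold chordMate; split_ifs <;> first | contradiction | omega
lemma sign_g0 (j : ℕ) : chordSign (4 * j + 6) = true := by
  simp [chordSign]; try omega
lemma sign_g1 (j : ℕ) : chordSign (4 * j + 7) = true := by
  simp [chordSign]; try omega
lemma sign_g2 (j : ℕ) : chordSign (4 * j + 8) = false := by
  simp [chordSign]; try omega
lemma sign_g3 (j : ℕ) : chordSign (4 * j + 9) = false := by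
  simp [chordSign]; try omega
lemma rank_g0_true (k j : ℕ) : faceRank k (4 * j + 6) true = 12 + 2 * k + 6 * (k - 1 - j) + 3 := by
  simp only [faceRank, if_true, Bool.false_eq_true, if_false]; split_ifs <;> first | contradiction | omega
lemma rank_g0_false (k j : ℕ) : faceRank k (4 * j + 6) false = 12 + 2 * k + 6 * (k - 1 - j) + 5 := by
  simp only [faceRank, if_true, Bool.false_eq_true, if_false]; split_ifs <;> first | contradiction | omega
lemma rank_g1_true (k j : ℕ) : faceRank k (4 * j + 7) true = 12 + 2 * k + 6 * (k - 1 - j) + 2 := by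
  simp only [faceRank, if_true, Bool.false_eq_true, if_false]; split_ifs <;> first | contradiction | omega
lemma rank_g1_false (k j : ℕ) : faceRank k (4 * j + 7) false = 12 + 2 * k + 6 * (k - 1 - j) + 0 := by
  simp only [faceRank, if_true, Bool.false_eq_true, if_false]; split_ifs <;> first | contradiction | omega
lemma rank_g2_true (k j : ℕ) : faceRank k (4 * j + 8) true = 12 + 2 * k + 6 * (k - 1 - j) + 1 := by
  simp only [faceRank, if_true, Bool.false_eq_true, if_false]; split_ifs <;> first | contradiction | omega
lemma rank_g2_false (k j : ℕ) : faceRank k (4 * j + 8) false = 8 + 2 * j := by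
  simp only [faceRank, if_true, Bool.false_eq_true, if_false]; split_ifs <;> first | contradiction | omega
lemma rank_g3_true (k j : ℕ) : faceRank k (4 * j + 9) true = 9 + 2 * j := by
  simp only [faceRank, if_true, Bool.false_eq_true, if_false]; split_ifs <;> first | contradiction | omega
lemma rank_g3_false (k j : ℕ) : faceRank k (4 * j + 9) false = 12 + 2 * k + 6 * (k - 1 - j) + 4 := by
  simp only [faceRank, if_true, Bool.false_eq_true, if_false]; split_ifs <;> first | contradiction | omega
lemma arc_g (j t : ℕ) (b : Bool) (ht : 6 ≤ t) : inArc (4 * j + t) b = false := by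
  simp [inArc]; omega

lemma chordMate_lt {k q : ℕ} (h : q < 4 * k + 6) : chordMate q < 4 * k + 6 := by
  unfold chordMate; split_ifs <;> first | contradiction | omega

lemma pos_cases (k q : ℕ) (h : q < 4 * k + 6) :
    q = 0 ∨ q = 1 ∨ q = 2 ∨ q = 3 ∨ q = 4 ∨ q = 5 ∨
      ∃ j, j < k ∧ (q = 4 * j + 6 ∨ q = 4 * j + 7 ∨ q = 4 * j + 8 ∨ q = 4 * j + 9) := by
  by_cases h6 : q < 6
  · omega
  · have : (q - 6) / 4 < k ∧ (q = 4 * ((q - 6) / 4) + 6 ∨ q = 4 * ((q - 6) / 4) + 7 ∨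
      q = 4 * ((q - 6) / 4) + 8 ∨ q = 4 * ((q - 6) / 4) + 9) := by omega
    iterate 6 right
    exact ⟨_, this⟩

lemma chordMate_mate (q : ℕ) : chordMate (chordMate q) = q := by
  rcases pos_cases q q (by omega) with rfl | rfl | rfl | rfl | rfl | rfl | ⟨j, -, rfl | rfl | rfl | rfl⟩
  iterate 6 decide
  all_goals simp only [mate_g0, mate_g1, mate_g2, mate_g3]

lemma chordSign_mate (q : ℕ) : chordSign (chordMate q) = !chordSign q := by
  rcases pos_cases q q (by omega) with rfl | rfl | rfl | rfl | rfl | rfl | ⟨j, -, rfl | rfl | rfl | rfl⟩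
  iterate 6 decide
  all_goals
    simp only [mate_g0, mate_g1, mate_g2, mate_g3, sign_g0, sign_g1, sign_g2, sign_g3,
      Bool.not_true, Bool.not_false]

/-- Consecutive positions inside a block. -/
lemma step_cases (k q : ℕ) (h : q + 1 < 4 * k + 6) :
    q = 0 ∨ q = 1 ∨ q = 2 ∨ q = 3 ∨ q = 4 ∨ (q = 5 ∧ 0 < k) ∨
      ∃ j, j < k ∧ (q = 4 * j + 6 ∨ q = 4 * j + 7 ∨ q = 4 * j + 8 ∨ (q = 4 * j + 9 ∧ j + 1 < k)) := by
  rcases pos_cases k q (by omega) with h | h | h | h | h | h | ⟨j, hj, h | h | h | h⟩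
  iterate 6 omega
  all_goals
    iterate 6 right
    exact ⟨j, hj, by omega⟩

/-- The last position of a block. -/
lemma last_cases (k q : ℕ) (h : q + 1 = 4 * k + 6) :
    (q = 5 ∧ k = 0) ∨ ∃ j, k = j + 1 ∧ q = 4 * j + 9 := by
  rcases k with _ | j
  · left; omega
  · right; exact ⟨j, rfl, by omega⟩

/-- Following a face forwards inside a block. -/
lemma rank_fwd (k q : ℕ) (h : q + 1 < 4 * k + 6) :
    faceRank k (chordMate (q + 1)) (false == chordSign (q + 1)) = faceRank k q true + 1 ∨
    faceRank k (chordMate (q + 1)) (false == chordSign (q + 1)) + (8 * k + 12) = faceRank k q true + 1 := by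
  rcases step_cases k q h with rfl | rfl | rfl | rfl | rfl | ⟨rfl, hk⟩ | ⟨j, hj, rfl | rfl | rfl | ⟨rfl, hj'⟩⟩
  · simp [chordMate, chordSign, faceRank] <;> omega
  · simp [chordMate, chordSign, faceRank] <;> omega
  · simp [chordMate, chordSign, faceRank] <;> omega
  · simp [chordMate, chordSign, faceRank] <;> omega
  · simp [chordMate, chordSign, faceRank] <;> omega
  · rw [show (5 + 1 : ℕ) = 4 * 0 + 6 from rfl]
    simp [mate_g0, sign_g0, rank_g0_true, rank_g0_false, rank_g1_true, rank_g1_false, rank_g2_true, rank_g2_false, rank_g3_true, rank_g3_false]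
    simp [chordMate, chordSign, faceRank] <;> omega
  · rw [show 4 * j + 6 + 1 = 4 * j + 7 from rfl]
    simp [mate_g0, mate_g1, mate_g2, mate_g3, sign_g0, sign_g1, sign_g2, sign_g3, rank_g0_true, rank_g0_false, rank_g1_true, rank_g1_false, rank_g2_true, rank_g2_false, rank_g3_true, rank_g3_false] <;> omega
  · rw [show 4 * j + 7 + 1 = 4 * j + 8 from rfl]
    simp [mate_g0, mate_g1, mate_g2, mate_g3, sign_g0, sign_g1, sign_g2, sign_g3, rank_g0_true, rank_g0_false, rank_g1_true, rank_g1_false, rank_g2_true, rank_g2_false, rank_g3_true, rank_g3_false] <;> omega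
  · rw [show 4 * j + 8 + 1 = 4 * j + 9 from rfl]
    simp [mate_g0, mate_g1, mate_g2, mate_g3, sign_g0, sign_g1, sign_g2, sign_g3, rank_g0_true, rank_g0_false, rank_g1_true, rank_g1_false, rank_g2_true, rank_g2_false, rank_g3_true, rank_g3_false] <;> omega
  · rw [show 4 * j + 9 + 1 = 4 * (j + 1) + 6 from rfl]
    simp [mate_g0, mate_g1, mate_g2, mate_g3, sign_g0, sign_g1, sign_g2, sign_g3, rank_g0_true, rank_g0_false, rank_g1_true, rank_g1_false, rank_g2_true, rank_g2_false, rank_g3_true, rank_g3_false] <;> omega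

/-- Following a face backwards inside a block. -/
lemma rank_bwd (k q : ℕ) (h : q + 1 < 4 * k + 6) :
    faceRank k (chordMate q) (true == chordSign q) = faceRank k (q + 1) false + 1 ∨
    faceRank k (chordMate q) (true == chordSign q) + (8 * k + 12) = faceRank k (q + 1) false + 1 := by
  rcases step_cases k q h with rfl | rfl | rfl | rfl | rfl | ⟨rfl, hk⟩ | ⟨j, hj, rfl | rfl | rfl | ⟨rfl, hj'⟩⟩
  · simp [chordMate, chordSign, faceRank] <;> omega
  · simp [chordMate, chordSign, faceRank] <;> omega
  · simp [chordMate, chordSign, faceRank] <;> omega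
  · simp [chordMate, chordSign, faceRank] <;> omega
  · simp [chordMate, chordSign, faceRank] <;> omega
  · rw [show (5 + 1 : ℕ) = 4 * 0 + 6 from rfl]
    simp [mate_g0, sign_g0, rank_g0_true, rank_g0_false, rank_g1_true, rank_g1_false, rank_g2_true, rank_g2_false, rank_g3_true, rank_g3_false]
    simp [chordMate, chordSign, faceRank] <;> omega
  · rw [show 4 * j + 6 + 1 = 4 * j + 7 from rfl]
    simp [mate_g0, mate_g1, mate_g2, mate_g3, sign_g0, sign_g1, sign_g2, sign_g3, rank_g0_true, rank_g0_false, rank_g1_true, rank_g1_false, rank_g2_true, rank_g2_false, rank_g3_true, rank_g3_false] <;> omega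
  · rw [show 4 * j + 7 + 1 = 4 * j + 8 from rfl]
    simp [mate_g0, mate_g1, mate_g2, mate_g3, sign_g0, sign_g1, sign_g2, sign_g3, rank_g0_true, rank_g0_false, rank_g1_true, rank_g1_false, rank_g2_true, rank_g2_false, rank_g3_true, rank_g3_false] <;> omega
  · rw [show 4 * j + 8 + 1 = 4 * j + 9 from rfl]
    simp [mate_g0, mate_g1, mate_g2, mate_g3, sign_g0, sign_g1, sign_g2, sign_g3, rank_g0_true, rank_g0_false, rank_g1_true, rank_g1_false, rank_g2_true, rank_g2_false, rank_g3_true, rank_g3_false] <;> omega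
  · rw [show 4 * j + 9 + 1 = 4 * (j + 1) + 6 from rfl]
    simp [mate_g0, mate_g1, mate_g2, mate_g3, sign_g0, sign_g1, sign_g2, sign_g3, rank_g0_true, rank_g0_false, rank_g1_true, rank_g1_false, rank_g2_true, rank_g2_false, rank_g3_true, rank_g3_false] <;> omega

/-- The face is constant forwards. -/
lemma arc_fwd (k q : ℕ) (h : q + 1 < 4 * k + 6) :
    inArc (chordMate (q + 1)) (false == chordSign (q + 1)) = inArc q true := by
  rcases step_cases k q h with rfl | rfl | rfl | rfl | rfl | ⟨rfl, hk⟩ | ⟨j, hj, rfl | rfl | rfl | ⟨rfl, hj'⟩⟩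
  · simp [chordMate, chordSign, inArc]
  · simp [chordMate, chordSign, inArc]
  · simp [chordMate, chordSign, inArc]
  · simp [chordMate, chordSign, inArc]
  · simp [chordMate, chordSign, inArc]
  · rw [show (5 + 1 : ℕ) = 4 * 0 + 6 from rfl]
    simp [mate_g0, sign_g0, arc_g]
    simp [chordMate, chordSign, inArc]
  · rw [show 4 * j + 6 + 1 = 4 * j + 7 from rfl]
    simp [mate_g0, mate_g1, mate_g2, mate_g3, sign_g0, sign_g1, sign_g2, sign_g3, arc_g]
  · rw [show 4 * j + 7 + 1 = 4 * j + 8 from rfl]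
    simp [mate_g0, mate_g1, mate_g2, mate_g3, sign_g0, sign_g1, sign_g2, sign_g3, arc_g]
  · rw [show 4 * j + 8 + 1 = 4 * j + 9 from rfl]
    simp [mate_g0, mate_g1, mate_g2, mate_g3, sign_g0, sign_g1, sign_g2, sign_g3, arc_g]
  · rw [show 4 * j + 9 + 1 = 4 * (j + 1) + 6 from rfl]
    simp [mate_g0, mate_g1, mate_g2, mate_g3, sign_g0, sign_g1, sign_g2, sign_g3, arc_g]

/-- The face is constant backwards. -/
lemma arc_bwd (k q : ℕ) (h : q + 1 < 4 * k + 6) :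
    inArc (chordMate q) (true == chordSign q) = inArc (q + 1) false := by
  rcases step_cases k q h with rfl | rfl | rfl | rfl | rfl | ⟨rfl, hk⟩ | ⟨j, hj, rfl | rfl | rfl | ⟨rfl, hj'⟩⟩
  · simp [chordMate, chordSign, inArc]
  · simp [chordMate, chordSign, inArc]
  · simp [chordMate, chordSign, inArc]
  · simp [chordMate, chordSign, inArc]
  · simp [chordMate, chordSign, inArc]
  · rw [show (5 + 1 : ℕ) = 4 * 0 + 6 from rfl]
    simp [mate_g0, sign_g0, arc_g]
    simp [chordMate, chordSign, inArc]
  · rw [show 4 * j + 6 + 1 = 4 * j + 7 from rfl]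
    simp [mate_g0, mate_g1, mate_g2, mate_g3, sign_g0, sign_g1, sign_g2, sign_g3, arc_g]
  · rw [show 4 * j + 7 + 1 = 4 * j + 8 from rfl]
    simp [mate_g0, mate_g1, mate_g2, mate_g3, sign_g0, sign_g1, sign_g2, sign_g3, arc_g]
  · rw [show 4 * j + 8 + 1 = 4 * j + 9 from rfl]
    simp [mate_g0, mate_g1, mate_g2, mate_g3, sign_g0, sign_g1, sign_g2, sign_g3, arc_g]
  · rw [show 4 * j + 9 + 1 = 4 * (j + 1) + 6 from rfl]
    simp [mate_g0, mate_g1, mate_g2, mate_g3, sign_g0, sign_g1, sign_g2, sign_g3, arc_g]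


lemma rank_fwd_last (k q : ℕ) (h : q + 1 = 4 * k + 6) :
    faceRank k (chordMate 0) (false == chordSign 0) = faceRank k q true + 1 := by
  rcases last_cases k q h with ⟨rfl, rfl⟩ | ⟨j, rfl, rfl⟩
  · decide
  · rw [rank_g3_true]; simp [chordMate, chordSign, faceRank]; omega

lemma rank_bwd_first (k q : ℕ) (h : q + 1 = 4 * k + 6) :
    faceRank k (chordMate q) (true == chordSign q) = faceRank k 0 false + 1 ∨
    faceRank k (chordMate q) (true == chordSign q) + (8 * k + 12) = faceRank k 0 false + 1 := by
  rcases last_cases k q h with ⟨rfl, rfl⟩ | ⟨j, rfl, rfl⟩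
  · decide
  · left
    simp only [mate_g3, sign_g3, Bool.true_beq, rank_g1_false]
    simp [faceRank]; omega

lemma arc_zero : inArc (chordMate 0) (false == chordSign 0) = true := by decide

lemma arc_zero_false : inArc 0 false = true := by decide

lemma arc_last (k q : ℕ) (h : q + 1 = 4 * k + 6) : inArc q true = false := by
  simp [inArc]; omega

lemma arc_last_mate (k q : ℕ) (h : q + 1 = 4 * k + 6) :
    inArc (chordMate q) (true == chordSign q) = false := by
  rcases last_cases k q h with ⟨rfl, rfl⟩ | ⟨j, rfl, rfl⟩
  · decide
  · rw [mate_g3, arc_g _ _ _ (by norm_num)]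

/-- Darts: block index, position in the block, direction. -/
abbrev Dart (k : ℕ) := ZMod 3 × Fin (4 * k + 6) × Bool

/-- Reverse a dart along its edge. -/
def dartRev (k : ℕ) : Dart k → Dart k
  | (i, q, true) => if h : q.1 + 1 < 4 * k + 6 then (i, ⟨q.1 + 1, h⟩, false)
      else (i + 1, ⟨0, by omega⟩, false)
  | (i, q, false) => if q.1 = 0 then (i - 1, ⟨4 * k + 5, by omega⟩, true)
      else (i, ⟨q.1 - 1, by omega⟩, true)

/-- Rotate a dart around its crossing. -/
def dartRot (k : ℕ) (x : Dart k) : Dart k :=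
  (x.1, ⟨chordMate x.2.1.1, chordMate_lt x.2.1.2⟩, x.2.2 == chordSign x.2.1.1)

lemma dartRev_fwd (k : ℕ) (i : ZMod 3) (q : ℕ) (h : q + 1 < 4 * k + 6) :
    dartRev k (i, ⟨q, by omega⟩, true) = (i, ⟨q + 1, h⟩, false) := by
  simp [dartRev, h]

lemma dartRev_fwd_last (k : ℕ) (i : ZMod 3) (q : ℕ) (h : q + 1 = 4 * k + 6) :
    dartRev k (i, ⟨q, by omega⟩, true) = (i + 1, ⟨0, by omega⟩, false) := by
  simp [dartRev, h]

lemma dartRev_bwd (k : ℕ) (i : ZMod 3) (q : ℕ) (h : q + 1 < 4 * k + 6) :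
    dartRev k (i, ⟨q + 1, h⟩, false) = (i, ⟨q, by omega⟩, true) := by
  simp [dartRev]

lemma dartRev_bwd_first (k : ℕ) (i : ZMod 3) :
    dartRev k (i, ⟨0, by omega⟩, false) = (i - 1, ⟨4 * k + 5, by omega⟩, true) := by
  simp [dartRev]

/-- Case analysis on darts according to the edge they lie on. -/
lemma dart_cases (k : ℕ) (P : Dart k → Prop)
    (h1 : ∀ i q, ∀ h : q + 1 < 4 * k + 6, P (i, ⟨q, by omega⟩, true))
    (h2 : ∀ i, P (i, ⟨4 * k + 5, by omega⟩, true))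
    (h3 : ∀ i q, ∀ h : q + 1 < 4 * k + 6, P (i, ⟨q + 1, h⟩, false))
    (h4 : ∀ i, P (i, ⟨0, by omega⟩, false)) (x : Dart k) : P x := by
  obtain ⟨i, ⟨q, hq⟩, b⟩ := x
  cases b
  · rcases q with _ | q
    · exact h4 i
    · exact h3 i q hq
  · by_cases h : q + 1 < 4 * k + 6
    · exact h1 i q h
    · obtain rfl : q = 4 * k + 5 := by omega
      exact h2 i

lemma dartRev_rev (k : ℕ) : Function.Involutive (dartRev k) := by
  intro x
  induction x using dart_cases with
  | h1 i q h => rw [dartRev_fwd k i q h, dartRev_bwd]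
  | h2 i => rw [dartRev_fwd_last k i _ rfl, dartRev_bwd_first, add_sub_cancel_right]
  | h3 i q h => rw [dartRev_bwd, dartRev_fwd k i q h]
  | h4 i => rw [dartRev_bwd_first, dartRev_fwd_last k _ _ rfl, sub_add_cancel]

lemma dartRev_dir (k : ℕ) (x : Dart k) : (dartRev k x).2.2 = !x.2.2 := by
  induction x using dart_cases with
  | h1 i q h => rw [dartRev_fwd k i q h]; rfl
  | h2 i => rw [dartRev_fwd_last k i _ rfl]; rfl
  | h3 i q h => rw [dartRev_bwd]; rfl
  | h4 i => rw [dartRev_bwd_first]; rfl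

lemma dartRot_rot (k : ℕ) (x : Dart k) : dartRot k (dartRot k x) = (x.1, x.2.1, !x.2.2) := by
  simp only [dartRot, chordMate_mate, chordSign_mate]
  cases x.2.2 <;> cases chordSign x.2.1.1 <;> rfl

lemma dartRot_four (k : ℕ) (x : Dart k) :
    dartRot k (dartRot k (dartRot k (dartRot k x))) = x := by
  rw [dartRot_rot, dartRot_rot]; simp

/-- The face containing a dart. -/
def dartFace (k : ℕ) (x : Dart k) : ZMod 3 := if inArc x.2.1.1 x.2.2 then x.1 - 1 else x.1

/-- Position along the curve. -/
def curvePos (k : ℕ) (x : Dart k) : ZMod (12 * k + 18) :=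
  let p : ZMod (12 * k + 18) := (((4 * k + 6) * x.1.val + x.2.1.1 : ℕ) : ZMod (12 * k + 18))
  if x.2.2 then p else -p

lemma face_const (k : ℕ) (x : Dart k) : dartFace k (dartRot k (dartRev k x)) = dartFace k x := by
  induction x using dart_cases with
  | h1 i q h => rw [dartRev_fwd k i q h]; simp only [dartFace, dartRot, arc_fwd k q h]
  | h2 i =>
    rw [dartRev_fwd_last k i _ rfl]
    simp only [dartFace, dartRot, arc_zero, arc_last k (4 * k + 5) rfl]; simp
  | h3 i q h => rw [dartRev_bwd]; simp only [dartFace, dartRot, arc_bwd k q h]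
  | h4 i =>
    rw [dartRev_bwd_first]
    simp only [dartFace, dartRot, arc_zero_false, arc_last_mate k (4 * k + 5) rfl]; simp

lemma cast_step (L a b : ℕ) (h : a = b + 1 ∨ a + L = b + 1) : (a : ZMod L) = (b : ZMod L) + 1 := by
  rcases h with h | h
  · rw [h]; push_cast; rfl
  · have := congrArg (Nat.cast : ℕ → ZMod L) h
    push_cast at this
    simpa using this

lemma rank_step (k : ℕ) (x : Dart k) :
    ((faceRank k (dartRot k (dartRev k x)).2.1.1 (dartRot k (dartRev k x)).2.2 : ℕ) :
      ZMod (8 * k + 12)) = (faceRank k x.2.1.1 x.2.2 : ℕ) + 1 := by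
  apply cast_step
  induction x using dart_cases with
  | h1 i q h => rw [dartRev_fwd k i q h]; exact rank_fwd k q h
  | h2 i => rw [dartRev_fwd_last k i _ rfl]; exact Or.inl (rank_fwd_last k (4 * k + 5) rfl)
  | h3 i q h => rw [dartRev_bwd]; exact rank_bwd k q h
  | h4 i => rw [dartRev_bwd_first]; exact rank_bwd_first k (4 * k + 5) rfl

lemma val_succ (i : ZMod 3) : (i + 1).val = i.val + 1 ∨ ((i + 1).val = 0 ∧ i.val = 2) := by
  revert i; decide

lemma curve_wrap (k : ℕ) (i : ZMod 3) :
    (((4 * k + 6) * (i + 1).val + 0 : ℕ) : ZMod (12 * k + 18)) =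
      (((4 * k + 6) * i.val + (4 * k + 5) : ℕ) : ZMod (12 * k + 18)) + 1 := by
  apply cast_step
  rcases val_succ i with h | ⟨h, h'⟩
  · left; rw [h]; ring
  · right; rw [h, h']; ring

lemma curve_step (k : ℕ) (x : Dart k) :
    curvePos k (dartRot k (dartRot k (dartRev k x))) = curvePos k x + 1 := by
  rw [dartRot_rot]
  induction x using dart_cases with
  | h1 i q h => rw [dartRev_fwd k i q h]; simp [curvePos]; ring
  | h2 i =>
    rw [dartRev_fwd_last k i _ rfl]
    simpa [curvePos] using curve_wrap k i
  | h3 i q h => rw [dartRev_bwd]; simp [curvePos]; ring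
  | h4 i =>
    rw [dartRev_bwd_first]
    have := curve_wrap k (i - 1)
    rw [sub_add_cancel] at this
    simp only [curvePos, Bool.not_true, Bool.false_eq_true, if_false]
    rw [this]; ring

lemma cycleType_four {α : Type*} [Fintype α] [DecidableEq α] (f : Perm α) (n : ℕ)
    (hcard : Fintype.card α = n * 4) (h4 : ∀ x, f (f (f (f x))) = x) (h2 : ∀ x, f (f x) ≠ x) :
    f.cycleType = Multiset.replicate n 4 := by
  refine cycleType_of_semiregular f 4 n (by norm_num) hcard (fun x => h4 x) ?_
  intro x j hj hj4 h
  interval_cases j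
  · have h' : f x = x := h
    exact h2 x (by rw [h', h'])
  · exact h2 x h
  · have h' : f (f (f x)) = x := h
    have h'' : f x = x := by
      have := h4 x
      rwa [h'] at this
    exact h2 x (by rw [h'', h''])

lemma cycleType_two {α : Type*} [Fintype α] [DecidableEq α] (f : Perm α) (n : ℕ)
    (hcard : Fintype.card α = n * 2) (h2 : ∀ x, f (f x) = x) (h1 : ∀ x, f x ≠ x) :
    f.cycleType = Multiset.replicate n 2 := by
  refine cycleType_of_semiregular f 2 n (by norm_num) hcard (fun x => h2 x) ?_
  intro x j hj hj4 h
  interval_cases j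
  exact h1 x h

/-- The edge involution. -/
def edgePerm (k : ℕ) : Perm (Dart k) := (dartRev_rev k).toPerm

/-- The vertex rotation. -/
def vertPerm (k : ℕ) : Perm (Dart k) where
  toFun := dartRot k
  invFun x := dartRot k (dartRot k (dartRot k x))
  left_inv := dartRot_four k
  right_inv := dartRot_four k

/-- For every genus g ≥ 4 with g ≡ 1 (mod 3) there is a transitive monodromy
pair on 8g + 4 points consisting of 4g + 2 transpositions and 2g + 1
four-cycles whose product σ₁σ₀ has three faces of equal degree (8g + 4)/3,
and such that σ₁²σ₀ splits as two disjoint cycles of equal length 4g + 2: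
the monodromy of a uniform filling curve in general position with three faces. -/
theorem exists_uniform_filling_curve_three_faces (g : ℕ) (hg : 4 ≤ g)
    (hmod : g % 3 = 1) :
    ∃ σ₀ σ₁ : Equiv.Perm (Fin (8 * g + 4)),
      σ₀.cycleType = Multiset.replicate (4 * g + 2) 2 ∧
      σ₁.cycleType = Multiset.replicate (2 * g + 1) 4 ∧
      (σ₁ * σ₀).cycleType = Multiset.replicate 3 ((8 * g + 4) / 3) ∧
      (∀ x y : Fin (8 * g + 4),
        ∃ π ∈ Subgroup.closure ({σ₀, σ₁} : Set (Equiv.Perm (Fin (8 * g + 4)))),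
          π x = y) ∧
      (σ₁ ^ 2 * σ₀).cycleType = {4 * g + 2, 4 * g + 2} := by
  obtain ⟨k, rfl⟩ : ∃ k, g = 3 * k + 4 := ⟨(g - 4) / 3, by omega⟩
  have hcT : Fintype.card (Dart k) = 8 * (3 * k + 4) + 4 := by
    simp only [Fintype.card_prod, ZMod.card, Fintype.card_fin, Fintype.card_bool]; ring
  have e : Dart k ≃ Fin (8 * (3 * k + 4) + 4) := Fintype.equivFinOfCardEq hcT
  have hs0 : ∀ x, e.permCongr (edgePerm k) x = e (dartRev k (e.symm x)) := fun x => rfl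
  have hs1 : ∀ x, e.permCongr (vertPerm k) x = e (dartRot k (e.symm x)) := fun x => rfl
  generalize e.permCongr (edgePerm k) = σ₀ at hs0
  generalize e.permCongr (vertPerm k) = σ₁ at hs1
  have hface := cycleType_of_rank (σ₁ * σ₀) (8 * k + 12) (by omega)
    (fun x => dartFace k (e.symm x))
    (fun x => ((faceRank k (e.symm x).2.1.1 (e.symm x).2.2 : ℕ) : ZMod (8 * k + 12)))
    (by intro x; simp only [Perm.mul_apply, hs0, hs1, Equiv.symm_apply_apply, face_const])
    (by intro x; simp only [Perm.mul_apply, hs0, hs1, Equiv.symm_apply_apply, rank_step])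
    (by
      intro i
      refine ⟨e (i, ⟨1, by omega⟩, true), ?_⟩
      simp [dartFace, inArc])
    (by rw [Fintype.card_fin, ZMod.card]; ring)
  have hcurve := cycleType_of_rank (σ₁ ^ 2 * σ₀) (12 * k + 18) (by omega)
    (fun x => (e.symm x).2.2) (fun x => curvePos k (e.symm x))
    (by
      intro x
      simp only [pow_two, Perm.mul_apply, hs0, hs1, Equiv.symm_apply_apply, dartRot_rot,
        dartRev_dir, Bool.not_not])
    (by
      intro x
      simp only [pow_two, Perm.mul_apply, hs0, hs1, Equiv.symm_apply_apply, curve_step])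
    (by
      intro b
      exact ⟨e (0, ⟨0, by omega⟩, b), by simp⟩)
    (by rw [Fintype.card_fin, Fintype.card_bool]; ring)
  refine ⟨σ₀, σ₁, ?_, ?_, ?_, ?_, ?_⟩
  · refine cycleType_two σ₀ _ (by rw [Fintype.card_fin]; ring) ?_ ?_
    · intro x
      simp only [hs0, Equiv.symm_apply_apply]
      rw [dartRev_rev k, Equiv.apply_symm_apply]
    · intro x h
      have := congrArg (fun y => (e.symm y).2.2) h
      simp [hs0, dartRev_dir] at this
  · refine cycleType_four σ₁ _ (by rw [Fintype.card_fin]; ring) ?_ ?_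
    · intro x
      simp only [hs1, Equiv.symm_apply_apply, dartRot_four, Equiv.apply_symm_apply]
    · intro x h
      have := congrArg (fun y => (e.symm y).2.2) h
      simp [hs1, dartRot_rot] at this
  · rw [hface.1, ZMod.card]
    congr 1
    omega
  · intro x y
    have m0 : σ₀ ∈ Subgroup.closure ({σ₀, σ₁} : Set (Perm (Fin (8 * (3 * k + 4) + 4)))) :=
      Subgroup.subset_closure (by simp)
    have m1 : σ₁ ∈ Subgroup.closure ({σ₀, σ₁} : Set (Perm (Fin (8 * (3 * k + 4) + 4)))) :=
      Subgroup.subset_closure (by simp)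
    have mc := Subgroup.mul_mem _ (Subgroup.pow_mem _ m1 2) m0
    by_cases h : (e.symm x).2.2 = (e.symm y).2.2
    · obtain ⟨j, hj⟩ := hcurve.2 x y h
      exact ⟨_, Subgroup.pow_mem _ mc j, hj⟩
    · obtain ⟨j, hj⟩ := hcurve.2 (σ₀ x) y (by
        simp only [hs0, Equiv.symm_apply_apply, dartRev_dir]
        revert h
        cases (e.symm x).2.2 <;> cases (e.symm y).2.2 <;> simp)
      exact ⟨_, Subgroup.mul_mem _ (Subgroup.pow_mem _ mc j) m0, hj⟩
  · rw [hcurve.1, Fintype.card_bool]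
    have : 12 * k + 18 = 4 * (3 * k + 4) + 2 := by ring
    rw [this]; rfl
end

section
/- Let σ₀, σ₁ be permutations of Fin 24 such that the subgroup generated by σ₀ and σ₁ acts transitively on Fin 24, the cycle type of σ₀ consists of 12 copies of 2 (twelve disjoint transpositions), the cycle type of σ₁ consists of 6 copies of 4 (six disjoint 4-cycles), and the cycle type of σ₁σ₀ consists of 4 copies of 6 (four disjoint 6-cycles). Then the cycle type of σ₁²σ₀ is NOT the multiset {12, 12}; i.e. σ₁²σ₀ never splits as a product of two disjoint 12-cycles. (Consequently every uniform multicurve that fills up the genus 2 surface and decomposes it into 4 hexagonal faces has more than one component.) -/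
namespace FillingCurve

/-- Read the `u`-th 5-bit digit of a table. -/
def tget (L u : ℕ) : ℕ := Nat.mod (Nat.shiftRight L (Nat.mul 5 u)) 32

/-- A table whose only nonzero digit is `v + 1` in position `u`. -/
def tsingle (u v : ℕ) : ℕ := Nat.shiftLeft (Nat.succ v) (Nat.mul 5 u)

/-- The edge involution on labels. -/
def edgeInv (n : ℕ) : ℕ := Nat.xor n 1

/-- The opposite half-edge at a vertex, on labels. -/
def oppInv (n : ℕ) : ℕ := Nat.mod (Nat.add (Nat.xor (Nat.succ n) 1) 23) 24

/-- The number of steps from `u` to `v` along the walk started at `u`. -/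
def lam (u v : ℕ) : ℕ :=
  bif Nat.beq (Nat.mod u 2) 0 then Nat.mod (Nat.sub (Nat.add v 24) u) 24
  else Nat.mod (Nat.sub (Nat.add u 24) v) 24

/-- The table `L` extended by the four values forced by `g u = v`,
where `uo`, `vo` are opposite to `u`, `v`. -/
def extend (L u v uo vo : ℕ) : ℕ :=
  Nat.lor (Nat.lor L (Nat.lor (tsingle u v) (tsingle v uo)))
    (Nat.lor (tsingle uo vo) (tsingle vo u))

/-- All labels. -/
def labels : List ℕ :=
  [0, 1, 2, 3, 4, 5, 6, 7, 8, 9, 10, 11, 12, 13, 14, 15, 16, 17, 18, 19, 20, 21, 22, 23]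

/-- Backtracking search following the faces; `true` means that no
rotation compatible with the partial table `L` exists. -/
def search (m : ℕ) : ℕ → ℕ → ℕ → ℕ → ℕ → Bool
  | 0, _, _, _, _ => false
  | Nat.succ n, L, d, c, k =>
    bif Nat.beq k 6 then
      bif Nat.beq c d then
        bif Nat.ble d 22 then search m n L (Nat.succ d) (Nat.succ d) 0 else false
      else true
    else bif (Nat.beq c d && Nat.ble 1 k) then true
    else match tget L (edgeInv c) with
      | Nat.succ v => search m n L d v (Nat.succ k)
      | 0 => labels.all fun v =>
        match tget L v with
        | Nat.succ w => !(Nat.beq w (oppInv (edgeInv c)))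
        | 0 =>
          (Nat.beq k 5 && !(Nat.beq v d)) || (Nat.beq v (edgeInv c) ||
          (Nat.beq v (oppInv (edgeInv c)) ||
          (!(Nat.ble m (lam (edgeInv c) v)) ||
          (!(Nat.ble m (lam (oppInv (edgeInv c)) (oppInv v))) ||
          match extend L (edgeInv c) v (oppInv (edgeInv c)) (oppInv v) with
          | 0 => false
          | Nat.succ Lx => search m n (Nat.succ Lx) d v (Nat.succ k)))))

/-- The search started with the value `m` at the label `0`. -/
def start (m : ℕ) : Bool :=
  !(Nat.ble m (lam m 23)) || (!(Nat.ble m (lam 23 (oppInv m))) ||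
  (!(Nat.ble m (lam (oppInv m) 0)) ||
  search m 200 (extend 0 0 m 23 (oppInv m)) 1 1 0))

set_option maxRecDepth 100000 in
theorem start_true : ∀ m ∈ labels, start m = true ∨ m = 0 := by
  decide +kernel

theorem mem_labels {a : ℕ} (h : a < 24) : a ∈ labels := by
  unfold labels; simp; omega

theorem nbeq_false {a b : ℕ} (h : a ≠ b) : Nat.beq a b = false := by
  rw [Bool.eq_false_iff]; simpa using h

theorem tget_eq (L u : ℕ) : tget L u = (L >>> (5 * u)) % 32 := rfl

theorem tget_lor (L M u : ℕ) : tget (Nat.lor L M) u = Nat.lor (tget L u) (tget M u) := by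
  change ((L ||| M) >>> (5 * u)) % 2 ^ 5 =
    ((L >>> (5 * u)) % 2 ^ 5) ||| ((M >>> (5 * u)) % 2 ^ 5)
  rw [Nat.shiftRight_or_distrib, Nat.or_mod_two_pow]

theorem tget_tsingle {u v w : ℕ} (hv : v < 24) :
    tget (tsingle u v) w = if w = u then v + 1 else 0 := by
  change (((v + 1) <<< (5 * u)) >>> (5 * w)) % 32 = _
  rw [Nat.shiftLeft_eq, Nat.shiftRight_eq_div_pow]
  rcases lt_trichotomy w u with h | h | h
  · rw [if_neg (by omega)]
    obtain ⟨j, rfl⟩ : ∃ j, u = w + 1 + j := ⟨u - w - 1, by omega⟩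
    have : (v + 1) * 2 ^ (5 * (w + 1 + j)) = ((v + 1) * 2 ^ (5 * j) * 32) * 2 ^ (5 * w) := by
      ring
    rw [this, Nat.mul_div_cancel _ (by positivity)]
    simp
  · subst h
    rw [if_pos rfl, Nat.mul_div_cancel _ (by positivity)]
    omega
  · rw [if_neg (by omega)]
    obtain ⟨j, rfl⟩ : ∃ j, w = u + 1 + j := ⟨w - u - 1, by omega⟩
    have : (v + 1) * 2 ^ (5 * u) / 2 ^ (5 * (u + 1 + j)) = 0 := by
      apply Nat.div_eq_of_lt
      have h1 : 2 ^ (5 * (u + 1 + j)) = 32 * 2 ^ (5 * j) * 2 ^ (5 * u) := by ring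
      rw [h1]
      apply Nat.mul_lt_mul_of_pos_right _ (by positivity)
      have : 1 ≤ 2 ^ (5 * j) := Nat.one_le_two_pow
      omega
    rw [this]

theorem edgeInv_lt {a : ℕ} (h : a < 24) : edgeInv a < 24 := by
  revert a; decide

theorem oppInv_lt {a : ℕ} (h : a < 24) : oppInv a < 24 := by
  revert a; decide

/-- The combinatorial data of a rotation `g` on labels. -/
structure Rot (g : ℕ → ℕ) : Prop where
  lt : ∀ a < 24, g a < 24
  gg : ∀ a < 24, g (g a) = oppInv a
  ne : ∀ a < 24, g a ≠ a
  face6 : ∀ a < 24, (fun b => g (edgeInv b))^[6] a = a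
  face : ∀ a < 24, ∀ k, 0 < k → k < 6 → (fun b => g (edgeInv b))^[k] a ≠ a
  min : ∀ a < 24, g 0 ≤ lam a (g a)

/-- The table `L` is a partial table of `g`. -/
def Compat (g : ℕ → ℕ) (L : ℕ) : Prop :=
  ∀ a < 24, tget L a = 0 ∨ tget L a = g a + 1

theorem Compat.lor {g : ℕ → ℕ} {L M : ℕ} (hL : Compat g L) (hM : Compat g M) :
    Compat g (Nat.lor L M) := by
  intro a ha
  rw [tget_lor]
  change tget L a ||| tget M a = 0 ∨ tget L a ||| tget M a = g a + 1
  rcases hL a ha with h | h <;> rcases hM a ha with h' | h' <;> simp [h, h']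

theorem Compat.single {g : ℕ → ℕ} {u v : ℕ} (hv : v < 24) (h : g u = v) :
    Compat g (tsingle u v) := by
  intro a _
  rw [tget_tsingle hv]
  split_ifs with h1
  · right; rw [h1, h]
  · left; rfl

theorem Compat.extend {g : ℕ → ℕ} (hg : Rot g) {L u : ℕ} (hL : Compat g L) (hu : u < 24) :
    Compat g (extend L u (g u) (oppInv u) (oppInv (g u))) := by
  have h1 := hg.lt u hu
  have h2 : g (oppInv u) = oppInv (g u) := by rw [← hg.gg u hu, hg.gg _ h1]
  have h3 : g (oppInv (g u)) = u := by
    rw [← h2, hg.gg _ (oppInv_lt hu)]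
    clear h1 h2
    revert u; decide
  exact (hL.lor ((Compat.single h1 rfl).lor (Compat.single (oppInv_lt hu) (hg.gg u hu)))).lor
    ((Compat.single (oppInv_lt h1) h2).lor (Compat.single hu h3))

theorem search_sound {g : ℕ → ℕ} (hg : Rot g) (n : ℕ) : ∀ L d c k, Compat g L → d < 24 →
    c < 24 → k ≤ 6 → (fun b => g (edgeInv b))^[k] d = c → search (g 0) n L d c k ≠ true := by
  induction n with
  | zero => intros; simp [search]
  | succ n ih =>
    intro L d c k hL hd hc hk hk' hs
    have hu := edgeInv_lt hc
    unfold search at hs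
    by_cases h6 : k = 6
    · subst h6
      have hcd : c = d := by rw [← hk', hg.face6 d hd]
      subst hcd
      simp at hs
      exact ih L (c + 1) (c + 1) 0 hL (by omega) (by omega) (by omega) rfl hs.2
    · have h6' : Nat.beq k 6 = false := nbeq_false h6
      have hstep : (fun b => g (edgeInv b))^[k + 1] d = g (edgeInv c) := by
        rw [Function.iterate_succ_apply', hk']
      have hcd : (Nat.beq c d && Nat.ble 1 k) = false := by
        by_contra hcon
        simp at hcon
        exact hg.face d hd k (by omega) (by omega) (by rw [hk', hcon.1])
      rw [h6', hcd] at hs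
      simp only [cond_false] at hs
      split at hs
      · rename_i v hv
        rcases hL _ hu with h | h
        · omega
        · have : v = g (edgeInv c) := by omega
          exact ih L d v (k + 1) hL hd (this ▸ hg.lt _ hu) (by omega) (this ▸ hstep) hs
      · rename_i h0
        have hv := List.all_eq_true.mp hs _ (mem_labels (hg.lt _ hu))
        have hvl := hg.lt _ hu
        split at hv
        · rename_i w hw
          rcases hL _ hvl with h | h
          · omega
          · have : w = oppInv (edgeInv c) := by
              rw [hg.gg _ hu] at h; omega
            simp [this] at hv
        · rename_i h0'
          have e1 : (Nat.beq k 5 && !(Nat.beq (g (edgeInv c)) d)) = false := by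
            by_contra hcon
            simp at hcon
            obtain ⟨rfl, hcon⟩ := hcon
            exact hcon (by rw [← hstep, hg.face6 d hd])
          have e2 : Nat.beq (g (edgeInv c)) (edgeInv c) = false := by
            exact nbeq_false (hg.ne _ hu)
          have e3 : Nat.beq (g (edgeInv c)) (oppInv (edgeInv c)) = false := by
            have := hg.ne _ hvl
            rw [hg.gg _ hu] at this
            exact nbeq_false this.symm
          have e4 : Nat.ble (g 0) (lam (edgeInv c) (g (edgeInv c))) = true := by
            simpa using hg.min _ hu
          have e5 : Nat.ble (g 0) (lam (oppInv (edgeInv c)) (oppInv (g (edgeInv c)))) = true := by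
            have := hg.min _ (oppInv_lt hu)
            rw [← hg.gg _ hu, hg.gg _ hvl] at this
            rw [← hg.gg _ hu]
            simpa using this
          rw [e1, e2, e3, e4, e5] at hv
          simp only [Bool.false_or, Bool.not_true] at hv
          have hE := hL.extend hg hu
          split at hv
          · simp at hv
          · rename_i L' hL'
            rw [hL'] at hE
            exact ih _ d _ (k + 1) hE hd hvl (by omega) hstep hv

theorem no_rot (g : ℕ → ℕ) : ¬ Rot g := by
  intro hg
  have h0 : g 0 < 24 := hg.lt 0 (by norm_num)
  have h23 : g (g 0) = 23 := hg.gg 0 (by norm_num)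
  have h23' : g 23 = oppInv (g 0) := by rw [← hg.gg _ h0, h23]
  have h3 : g (oppInv (g 0)) = 0 := by
    rw [← h23', hg.gg 23 (by norm_num)]; rfl
  have hE : Compat g 0 := fun a _ => Or.inl (by simp [tget_eq])
  have hE' := hE.extend hg (u := 0) (by norm_num)
  have e1 : Nat.ble (g 0) (lam (g 0) 23) = true := by
    have := hg.min _ h0
    rw [h23] at this
    simpa using this
  have e2 : Nat.ble (g 0) (lam 23 (oppInv (g 0))) = true := by
    have := hg.min 23 (by norm_num)
    rw [h23'] at this
    simpa using this
  have e3 : Nat.ble (g 0) (lam (oppInv (g 0)) 0) = true := by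
    have := hg.min _ (oppInv_lt h0)
    rw [h3] at this
    simpa using this
  rcases start_true (g 0) (mem_labels h0) with h | h
  · unfold start at h
    rw [e1, e2, e3] at h
    simp only [Bool.false_or, Bool.not_true] at h
    exact search_sound hg 200 _ 1 1 0 hE' (by norm_num) (by norm_num) (by norm_num) rfl h
  · exact hg.ne 0 (by norm_num) h

/-- Orbits of a permutation all of whose cycles have the same length. -/
theorem pow_apply_eq_iff {σ : Equiv.Perm (Fin 24)} {j m : ℕ}
    (h : σ.cycleType = Multiset.replicate j m) (hjm : j * m = 24) (x : Fin 24) (n : ℕ) :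
    (σ ^ n) x = x ↔ m ∣ n := by
  have hs : σ.support.card = 24 := by
    rw [← Equiv.Perm.sum_cycleType, h]; simpa using hjm
  have hx : x ∈ σ.support := by
    have : σ.support = Finset.univ := by
      rw [← Finset.card_eq_iff_eq_univ, hs]; rfl
    rw [this]; exact Finset.mem_univ _
  have hmem : σ.cycleOf x ∈ σ.cycleFactorsFinset :=
    Equiv.Perm.cycleOf_mem_cycleFactorsFinset_iff.mpr hx
  have hc : (σ.cycleOf x).support.card = m := by
    have : (σ.cycleOf x).support.card ∈ σ.cycleType := by
      rw [Equiv.Perm.cycleType_def]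
      exact Multiset.mem_map_of_mem _ hmem
    rw [h] at this
    exact Multiset.eq_of_mem_replicate this
  have := (Equiv.Perm.isCycleOn_support_cycleOf σ x).pow_apply_eq (a := x) (n := n)
    (by rw [Equiv.Perm.mem_support_cycleOf_iff]; exact ⟨Equiv.Perm.SameCycle.refl _ _, hx⟩)
  rw [this, hc]

/-- Alternating walk: apply `a`, then `b`, then `a`, ... -/
def walk (a b : Equiv.Perm (Fin 24)) (x : Fin 24) : ℕ → Fin 24
  | 0 => x
  | n + 1 => if n % 2 = 0 then a (walk a b x n) else b (walk a b x n)

section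
variable {a b : Equiv.Perm (Fin 24)}

theorem walk_even (x : Fin 24) {n : ℕ} (h : n % 2 = 0) :
    walk a b x (n + 1) = a (walk a b x n) := by
  simp [walk, h]

theorem walk_odd (x : Fin 24) {n : ℕ} (h : n % 2 = 1) :
    walk a b x (n + 1) = b (walk a b x n) := by
  simp [walk, h]

theorem walk_add (x : Fin 24) {u : ℕ} (hu : u % 2 = 0) (n : ℕ) :
    walk a b (walk a b x u) n = walk a b x (u + n) := by
  induction n with
  | zero => rfl
  | succ n ih =>
    rcases Nat.mod_two_eq_zero_or_one n with h | h
    · rw [walk_even _ h, ih, ← add_assoc, walk_even _ (by omega)]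
    · rw [walk_odd _ h, ih, ← add_assoc, walk_odd _ (by omega)]

theorem walk_pow (x : Fin 24) (i : ℕ) : walk a b x (2 * i) = ((b * a) ^ i) x := by
  induction i with
  | zero => rfl
  | succ i ih =>
    rw [show 2 * (i + 1) = (2 * i + 1) + 1 by ring, walk_odd _ (by omega),
      walk_even _ (by omega), ih, pow_succ']
    rfl

theorem walk_sub (haa : ∀ y, a (a y) = y) (hbb : ∀ y, b (b y) = y)
    (x : Fin 24) {u : ℕ} (hu : u % 2 = 1) (n : ℕ) (hn : n ≤ u) :
    walk a b (walk a b x u) n = walk a b x (u - n) := by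
  induction n with
  | zero => rfl
  | succ n ih =>
    obtain ⟨w, hw⟩ : ∃ w, u - n = w + 1 := ⟨u - n - 1, by omega⟩
    have hw' : u - (n + 1) = w := by omega
    rcases Nat.mod_two_eq_zero_or_one n with h | h
    · rw [walk_even _ h, ih (by omega), hw, hw', walk_even _ (by omega), haa]
    · rw [walk_odd _ h, ih (by omega), hw, hw', walk_odd _ (by omega), hbb]

theorem walk_ne_odd (haa : ∀ y, a (a y) = y) (hbb : ∀ y, b (b y) = y)
    (ha : ∀ y, a y ≠ y) (hb : ∀ y, b y ≠ y) (x : Fin 24) (k : ℕ) :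
    ∀ i, walk a b x (i + 2 * k + 1) ≠ walk a b x i := by
  induction k with
  | zero =>
    intro i
    rcases Nat.mod_two_eq_zero_or_one i with h | h
    · simpa [walk_even x h] using ha _
    · simpa [walk_odd x h] using hb _
  | succ k ih =>
    intro i h
    apply ih (i + 1)
    rw [show i + 2 * (k + 1) + 1 = (i + 1 + 2 * k + 1) + 1 by ring] at h
    rcases Nat.mod_two_eq_zero_or_one i with hi | hi
    · rw [walk_even _ (by omega)] at h
      rw [walk_even _ hi, ← h, haa]
    · rw [walk_odd _ (by omega)] at h
      rw [walk_odd _ hi, ← h, hbb]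

theorem walk_ne_even (hτ : ∀ y n, ((b * a) ^ n) y = y ↔ 12 ∣ n) (x : Fin 24) {i k : ℕ}
    (hk : 0 < k) (hk' : k < 12) : walk a b x (i + 2 * k) ≠ walk a b x i := by
  have key : ∀ j, j % 2 = 0 → walk a b x (j + 2 * k) ≠ walk a b x j := by
    intro j hj h
    rw [← walk_add x hj, walk_pow, hτ] at h
    exact absurd (Nat.le_of_dvd hk h) (by omega)
  rcases Nat.mod_two_eq_zero_or_one i with h | h
  · exact key i h
  · obtain ⟨j, rfl⟩ : ∃ j, i = j + 1 := ⟨i - 1, by omega⟩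
    rw [show j + 1 + 2 * k = j + 2 * k + 1 by ring, walk_even _ (by omega),
      walk_even _ (by omega)]
    exact fun hh => key j (by omega) (a.injective hh)

theorem walk_inj (haa : ∀ y, a (a y) = y) (hbb : ∀ y, b (b y) = y)
    (ha : ∀ y, a y ≠ y) (hb : ∀ y, b y ≠ y)
    (hτ : ∀ y n, ((b * a) ^ n) y = y ↔ 12 ∣ n) (x : Fin 24) {i j : ℕ} (hi : i < 24)
    (hj : j < 24) (h : walk a b x i = walk a b x j) : i = j := by
  have key : ∀ i j, j < 24 → i < j → walk a b x j ≠ walk a b x i := by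
    intro i j hj hij
    rcases Nat.mod_two_eq_zero_or_one (j - i) with h | h
    · have := walk_ne_even hτ x (i := i) (k := (j - i) / 2) (by omega) (by omega)
      rwa [show i + 2 * ((j - i) / 2) = j by omega] at this
    · have := walk_ne_odd haa hbb ha hb x ((j - i) / 2) i
      rwa [show i + 2 * ((j - i) / 2) + 1 = j by omega] at this
  rcases lt_trichotomy i j with h' | h' | h'
  · exact absurd h.symm (key i j hj h')
  · exact h'
  · exact absurd h (key j i hi h')

theorem walk_surj (haa : ∀ y, a (a y) = y) (hbb : ∀ y, b (b y) = y)
    (ha : ∀ y, a y ≠ y) (hb : ∀ y, b y ≠ y)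
    (hτ : ∀ y n, ((b * a) ^ n) y = y ↔ 12 ∣ n) (x y : Fin 24) :
    ∃ n < 24, walk a b x n = y := by
  have hinj : Function.Injective (fun i : Fin 24 => walk a b x i) := fun i j h =>
    Fin.ext (walk_inj haa hbb ha hb hτ x i.2 j.2 h)
  obtain ⟨i, hi⟩ := (Finite.injective_iff_surjective.mp hinj) y
  exact ⟨i, i.2, hi⟩

theorem walk_period (hτ : ∀ y n, ((b * a) ^ n) y = y ↔ 12 ∣ n) (x : Fin 24) (n : ℕ) :
    walk a b x (n + 24) = walk a b x n := by
  have h24 : walk a b x 24 = x := by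
    have := walk_pow (a := a) (b := b) x 12
    rw [(hτ x 12).mpr (dvd_refl _)] at this
    exact this
  rw [add_comm, ← walk_add x (by norm_num), h24]

theorem walk_edge (haa : ∀ y, a (a y) = y) (x : Fin 24) {u : ℕ} (hu : u < 24) :
    a (walk a b x u) = walk a b x (edgeInv u) := by
  have : ∀ u < 24, (u % 2 = 0 ∧ edgeInv u = u + 1) ∨ (edgeInv u % 2 = 0 ∧ u = edgeInv u + 1) := by
    decide
  rcases this u hu with ⟨h, h'⟩ | ⟨h, h'⟩
  · rw [h', walk_even _ h]
  · conv_lhs => rw [h']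
    rw [walk_even _ h, haa]

theorem walk_opp (hbb : ∀ y, b (b y) = y)
    (hτ : ∀ y n, ((b * a) ^ n) y = y ↔ 12 ∣ n) (x : Fin 24) {u : ℕ} (hu : u < 24) :
    b (walk a b x u) = walk a b x (oppInv u) := by
  have : ∀ u < 24, (u % 2 = 1 ∧ (oppInv u = u + 1 ∨ oppInv u + 24 = u + 1)) ∨
      (oppInv u % 2 = 1 ∧ (u = oppInv u + 1 ∨ u + 24 = oppInv u + 1)) := by
    decide
  rcases this u hu with ⟨h, h' | h'⟩ | ⟨h, h' | h'⟩
  · rw [h', walk_odd _ h]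
  · rw [← walk_period hτ x (oppInv u), h', walk_odd _ h]
  · conv_lhs => rw [h']
    rw [walk_odd _ h, hbb]
  · rw [← walk_period hτ x u, h', walk_odd _ h, hbb]

theorem walk_lam (haa : ∀ y, a (a y) = y) (hbb : ∀ y, b (b y) = y)
    (hτ : ∀ y n, ((b * a) ^ n) y = y ↔ 12 ∣ n) (x : Fin 24) {u v : ℕ} (hu : u < 24)
    (hv : v < 24) : lam u v < 24 ∧ walk a b (walk a b x u) (lam u v) = walk a b x v := by
  rcases Nat.mod_two_eq_zero_or_one u with h | h
  · have hl : lam u v = (v + 24 - u) % 24 := by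
      unfold lam
      rw [show Nat.mod u 2 = 0 from h]; rfl
    refine ⟨by omega, ?_⟩
    rw [walk_add x h]
    rcases (by omega : u + lam u v = v ∨ u + lam u v = v + 24) with h' | h'
    · rw [h']
    · rw [h', walk_period hτ]
  · have hl : lam u v = (u + 24 - v) % 24 := by
      unfold lam
      rw [show Nat.mod u 2 = 1 from h]; rfl
    refine ⟨by omega, ?_⟩
    rw [← walk_period hτ x u, walk_sub haa hbb x (by omega) _ (by omega)]
    rcases (by omega : u + 24 - lam u v = v ∨ u + 24 - lam u v = v + 24) with h' | h'
    · rw [h']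
    · rw [h', walk_period hτ]

end

theorem main_aux (σ₀ σ₁ : Equiv.Perm (Fin 24))
    (h0 : ∀ y n, (σ₀ ^ n) y = y ↔ 2 ∣ n)
    (h1 : ∀ y n, (σ₁ ^ n) y = y ↔ 4 ∣ n)
    (h10 : ∀ y n, ((σ₁ * σ₀) ^ n) y = y ↔ 6 ∣ n)
    (hτ : ∀ y n, ((σ₁ ^ 2 * σ₀) ^ n) y = y ↔ 12 ∣ n) : False := by
  have haa : ∀ y, σ₀ (σ₀ y) = y := fun y => by
    simpa [pow_two] using (h0 y 2).mpr (by norm_num)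
  have hbb : ∀ y, (σ₁ ^ 2) ((σ₁ ^ 2) y) = y := fun y => by
    rw [← Equiv.Perm.mul_apply, ← pow_add]
    exact (h1 y 4).mpr (by norm_num)
  have ha : ∀ y, σ₀ y ≠ y := fun y h => by
    have := (h0 y 1).mp (by simpa using h)
    omega
  have hb : ∀ y, (σ₁ ^ 2) y ≠ y := fun y h => by
    have := (h1 y 2).mp h
    omega
  have hf : ∀ y, σ₁ y ≠ y := fun y h => by
    have := (h1 y 1).mp (by simpa using h)
    omega
  have surj := walk_surj haa hbb ha hb hτ
  choose ℓ hℓ hℓ' using fun x => surj x (σ₁ x)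
  obtain ⟨x, hx⟩ := Finite.exists_min ℓ
  choose g hg hg' using fun u => surj x (σ₁ (walk σ₀ (σ₁ ^ 2) x u))
  have inj : ∀ {i j : ℕ}, i < 24 → j < 24 →
      walk σ₀ (σ₁ ^ 2) x i = walk σ₀ (σ₁ ^ 2) x j → i = j :=
    fun hi hj h => walk_inj haa hbb ha hb hτ x hi hj h
  have hiter : ∀ k, ∀ u < 24, (fun c => g (edgeInv c))^[k] u < 24 ∧
      walk σ₀ (σ₁ ^ 2) x ((fun c => g (edgeInv c))^[k] u) =
        ((σ₁ * σ₀) ^ k) (walk σ₀ (σ₁ ^ 2) x u) := by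
    intro k u hu
    induction k with
    | zero => exact ⟨hu, rfl⟩
    | succ k ih =>
      rw [Function.iterate_succ_apply']
      refine ⟨hg _, ?_⟩
      rw [hg', ← walk_edge haa x ih.1, ih.2, pow_succ' (σ₁ * σ₀)]
      rfl
  refine no_rot g ⟨fun u _ => hg u, ?_, ?_, ?_, ?_, ?_⟩
  · intro u hu
    apply inj (hg _) (oppInv_lt hu)
    rw [hg', hg', ← walk_opp hbb hτ x hu, pow_two]
    rfl
  · intro u hu h
    apply hf (walk σ₀ (σ₁ ^ 2) x u)
    rw [← hg', h]
  · intro u hu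
    apply inj (hiter 6 u hu).1 hu
    rw [(hiter 6 u hu).2, h10]
  · intro u hu k hk hk' h
    have := (hiter k u hu).2
    rw [h] at this
    exact absurd (Nat.le_of_dvd hk ((h10 _ _).mp this.symm)) (by omega)
  · intro u hu
    have e0 : g 0 = ℓ x := by
      apply inj (hg 0) (hℓ x)
      rw [hg', hℓ']
      rfl
    obtain ⟨hl, hl'⟩ := walk_lam haa hbb hτ x hu (hg u)
    have e1 : lam u (g u) = ℓ (walk σ₀ (σ₁ ^ 2) x u) := by
      apply walk_inj haa hbb ha hb hτ (walk σ₀ (σ₁ ^ 2) x u) hl (hℓ _)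
      rw [hl', hg', hℓ']
    rw [e0, e1]
    exact hx _

end FillingCurve


/-- For any transitive monodromy pair of a uniform dessin of type (2,4,6) and
genus 2 (twelve transpositions, six 4-cycles, four 6-cycle faces on 24 edges),
the permutation σ₁²σ₀ never splits as two disjoint 12-cycles: every uniform
filling multicurve of genus 2 with four hexagonal faces has more than one
component. -/
theorem genus_two_type_246_not_single_curve
    (σ₀ σ₁ : Equiv.Perm (Fin 24))
    (htrans : ∀ x y : Fin 24,
      ∃ π ∈ Subgroup.closure ({σ₀, σ₁} : Set (Equiv.Perm (Fin 24))), π x = y)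
    (h0 : σ₀.cycleType = Multiset.replicate 12 2)
    (h1 : σ₁.cycleType = Multiset.replicate 6 4)
    (h10 : (σ₁ * σ₀).cycleType = Multiset.replicate 4 6) :
    (σ₁ ^ 2 * σ₀).cycleType ≠ {12, 12} := by
  intro h
  exact FillingCurve.main_aux σ₀ σ₁
    (FillingCurve.pow_apply_eq_iff h0 (by norm_num))
    (FillingCurve.pow_apply_eq_iff h1 (by norm_num))
    (FillingCurve.pow_apply_eq_iff h10 (by norm_num))
    (FillingCurve.pow_apply_eq_iff (j := 2) h (by norm_num))
end

section
/- Consider the set of pairs (σ₀, σ₁) of permutations of Fin 24 such that the subgroup generated by σ₀ and σ₁ acts transitively, the cycle type of σ₀ consists of 12 copies of 2, the cycle type of σ₁ consists of 6 copies of 4, and the cycle type of σ₁σ₀ consists of 4 copies of 6. Declare two such pairs (σ₀, σ₁) and (σ₀′, σ₁′) equivalent if there exists a permutation π of Fin 24 with σ₀′ = πσ₀π⁻¹ and σ₁′ = πσ₁π⁻¹. Then the number of equivalence classes is exactly 40. -/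
/-- The monodromy pairs of uniform dessins of type (2,4,6) and genus 2:
transitive pairs on 24 points with twelve transpositions, six 4-cycles and
four 6-cycle faces. -/
def IsType246Genus2Pair (p : Equiv.Perm (Fin 24) × Equiv.Perm (Fin 24)) : Prop :=
  (∀ x y : Fin 24,
    ∃ π ∈ Subgroup.closure ({p.1, p.2} : Set (Equiv.Perm (Fin 24))), π x = y) ∧
  p.1.cycleType = Multiset.replicate 12 2 ∧
  p.2.cycleType = Multiset.replicate 6 4 ∧
  (p.2 * p.1).cycleType = Multiset.replicate 4 6

/-- Simultaneous conjugacy of monodromy pairs. -/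
def SimConj246 (p q : {p // IsType246Genus2Pair p}) : Prop :=
  ∃ π : Equiv.Perm (Fin 24),
    q.1.1 = π * p.1.1 * π⁻¹ ∧ q.1.2 = π * p.1.2 * π⁻¹

namespace Dessin246

/-! ### The search, on packed tables

A dessin whose black permutation is the standard one (`rotN`) is stored as a natural number whose
`i`-th base-32 digit is `0` if the dart `i` is not matched yet, and `j + 1` if it is matched
to `j`. -/

/-- The standard product of 4-cycles on the darts. -/
def rotN (i : ℕ) : ℕ := bif Nat.beq (i % 4) 3 then i - 3 else i + 1

/-- The inverse of `rotN`. -/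
def rotInvN (i : ℕ) : ℕ := bif Nat.beq (i % 4) 0 then i + 3 else i - 1

/-- The `i`-th base-32 digit. -/
def get (m i : ℕ) : ℕ := (m >>> (5 * i)) &&& 31

/-- Match the unmatched darts `i` and `j`. -/
def link (m i j : ℕ) : ℕ := (m ||| ((j + 1) <<< (5 * i))) ||| ((i + 1) <<< (5 * j))

/-- Evaluate the number before handing it on. -/
def force {α : Type} (n : ℕ) (f : ℕ → α) : α :=
  match n with
  | 0 => f 0
  | k + 1 => f (k + 1)

/-- Walking along the face from `y`, with `n + 1` steps left, shows that the face of `x` does not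
have length six. -/
def bad (m x : ℕ) : ℕ → ℕ → Bool
  | 0, y =>
    match get m y with
    | 0 => false
    | j + 1 => !(Nat.beq (rotN j) x)
  | n + 1, y =>
    match get m y with
    | 0 => false
    | j + 1 => Nat.beq (rotN j) x || bad m x n (rotN j)

/-- Walk back along a face. -/
def back (m : ℕ) : ℕ → ℕ → ℕ
  | 0, y => y
  | n + 1, y =>
    match get m (rotInvN y) with
    | 0 => y
    | j + 1 => back m n j

/-- Walk forward along a face. -/
def forth (m : ℕ) : ℕ → ℕ → ℕ
  | 0, y => y
  | n + 1, y =>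
    match get m y with
    | 0 => y
    | j + 1 => forth m n (rotN j)

/-- The darts. -/
def darts : List ℕ :=
  [0, 1, 2, 3, 4, 5, 6, 7, 8, 9, 10, 11, 12, 13, 14, 15, 16, 17, 18, 19, 20, 21, 22, 23]

/-- First unmatched dart of a list. -/
def firstFree (m : ℕ) : List ℕ → ℕ
  | [] => 24
  | i :: l =>
    match get m i with
    | 0 => i
    | _ + 1 => firstFree m l

/-- The next dart to be matched. -/
def pick (m : ℕ) : ℕ :=
  force (firstFree m darts) fun i => bif Nat.beq i 24 then 24 else forth m 6 (rotN i)

/-- Label the darts of the complete dessin `q`, from the root `r`, in the manner of `m`. -/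
def relabel (m q : ℕ) : List ℕ → ℕ → ℕ
  | [], s => s
  | k :: l, s =>
    force (get q (get s (get m (4 * k) - 1)) - 1) fun x =>
    force (s ||| ((x ||| (rotN x <<< 5) ||| (rotN (rotN x) <<< 10) |||
      (rotN (rotN (rotN x)) <<< 15)) <<< (20 * k))) fun snew =>
    relabel m q l snew

/-- The relabelling `s` maps the complete dessin `m` to `q`. -/
def isoOk (m q s : ℕ) : Bool :=
  darts.all fun i =>
    match get m i with
    | 0 => false
    | j + 1 => Nat.beq (get q (get s i)) (get s j + 1) &&
        (Nat.beq (get s (rotN i)) (rotN (get s i)) && Nat.blt (get s i) 24)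

/-- The forty dessins. -/
def reps : List ℕ :=
  [483678096310429225670969210734451845, 940803030340190141541079836794100869,
   805151557591622499909397302217876613, 440311176068969678463950046339605637,
   440392702041610820506225930566444165, 678388555063946177054683149575988357,
   935611537638791358892599334168241285, 939500890221633831371173195162920069,
   940800499481951669898468216498365573, 441612366403269710024254105985295493,
   524689113663946873689949560688944261, 523387925612090519881257637119075461,
   523469174092742995006985797402436741, 680975829513470099370055577459827845,
   802555171129696902539526114330616965, 934312177705677409456677311772435589,
   483678096310429041203528474344790190, 483675560772437321143433520237287598,
   317522060760135430444401149232847026, 483192584116278187170820359666833586,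
   306817932435925231475328072745785522, 317515722506643163197812093202241714,
   306811079199883095301195729339717810, 805474411618896715406105407574546610,
   483381456627896049704047806595242162, 483665419027919183694098391395244210,
   691357293369954530657848212528076978, 647884208398674447755739032268789929,
   689422345580179674966488987260377257, 639081317052421507722885651048377513,
   846773825219095837512874602189237417, 483515829601211250395190498397759662,
   317197529827071881739331626649168050, 649337197655658447819298514005305522,
   306980181808948420458829903888296114, 150640923188486673632323444901404854,
   690639780383077130948866275260222646, 482947906041079562915853677812239542,
   482947912230590864683440369578524854, 351841990701830402466366236928486582]

/-- For each complete table met by the search, in order, the number of a dessin isomorphic to it and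
the image of the dart `0`, as a single number. -/
def hints : List ℕ :=
  [0, 24, 48, 72, 96, 120, 144, 168, 192, 216, 240, 264, 288, 312, 336, 50, 212, 338, 146, 360,
   384, 16, 408, 385, 17, 432, 456, 480, 84, 504, 415, 528, 552, 136, 439, 511, 576, 600, 624,
   648, 301, 595, 672, 352, 327, 349, 696, 720, 466, 206, 367, 5, 29, 245, 221, 55, 127, 79, 59,
   175, 151, 103, 271, 343, 295, 319, 347, 199, 155, 744, 713, 414, 652, 412, 748, 709, 309,
   359, 768, 792, 277, 816, 276, 770, 357, 328, 4, 28, 220, 244, 207, 364, 124, 76, 52, 172,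
   100, 56, 148, 268, 292, 340, 316, 344, 196, 152, 393, 9, 420, 441, 568, 132, 541, 78, 435,
   507, 513, 603, 469, 493, 592, 421, 627, 651, 465, 300, 675, 594, 348, 326, 355, 723, 699,
   325, 354, 149, 205, 366, 58, 174, 150, 102, 233, 133, 308, 87, 57, 204, 356, 282, 11, 33,
   257, 386, 18, 410, 387, 19, 602, 506, 434, 626, 458, 86, 413, 437, 554, 578, 509, 482, 530,
   138, 752, 702, 416, 353, 776, 324, 283, 294, 342, 784, 797, 821, 269, 1, 25, 49, 169, 193,
   213, 361, 145, 241, 217, 339, 51, 121, 73, 337, 265, 289, 313, 97, 147, 392, 10, 442, 540,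
   514, 492, 126, 609, 585, 515, 468, 443, 633, 411, 555, 77, 586, 346, 318, 341, 293, 700, 676,
   724, 471, 232, 8, 32, 256, 173, 197, 54, 198, 154, 281, 358, 153, 53, 365, 101, 139, 329, 93,
   350, 302, 436, 457, 481, 85, 508, 409, 529, 553, 137, 433, 505, 577, 601, 625, 303, 351, 772,
   796, 270, 820, 280, 778, 345, 317, 608, 512, 440, 632, 464, 92, 417, 438, 560, 584, 510, 483,
   531, 125, 840, 864, 868, 697, 721, 869, 888, 912, 898, 749, 708, 896, 936, 880, 650, 593,
   674, 698, 722, 771, 779, 865, 793, 944, 889, 769, 913, 899, 773, 459, 673, 467, 470, 579,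
   777, 745, 785, 798, 712, 753, 703, 649, 897, 937, 881, 799, 587, 701, 725, 677, 653]

/-- Treatment of a complete table. -/
def leaf (m k : ℕ) : List ℕ → Option (List ℕ)
  | [] => none
  | h :: t =>
    match reps[h / 24]? with
    | none => none
    | some q =>
      bif Nat.beq k 6 &&
        force (h % 24) (fun r =>
          force (r ||| (rotN r <<< 5) ||| (rotN (rotN r) <<< 10) |||
            (rotN (rotN (rotN r)) <<< 15)) fun s =>
          force (relabel m q [1, 2, 3, 4, 5] s) fun snew => isoOk m q snew)
      then some t else none

/-- Try all partners for the dart `i`. -/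
def tryAll (next : ℕ → ℕ → List ℕ → Option (List ℕ)) (m k i : ℕ) :
    List ℕ → List ℕ → Option (List ℕ)
  | [], h => some h
  | j :: l, h =>
    bif Nat.beq j i || (Nat.blt (4 * k) j || Nat.blt 0 (get m j)) then
      tryAll next m k i l h
    else
      force (link m i j) fun m' =>
      bif bad m' (back m' 5 i) 5 (back m' 5 i) || bad m' (back m' 5 j) 5 (back m' 5 j) then
        tryAll next m k i l h
      else
        match next m' (bif Nat.beq j (4 * k) then k + 1 else k) h with
        | none => none
        | some rest => tryAll next m k i l rest

/-- The search. It returns the hints that it did not consume, if all goes well. -/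
def search : ℕ → ℕ → ℕ → List ℕ → Option (List ℕ)
  | 0, _, _, _ => none
  | n + 1, m, k, h =>
    force (pick m) fun i =>
    bif Nat.blt i (4 * k) && Nat.beq (get m i) 0 then
      tryAll (search n) m k i darts h
    else leaf m k h

set_option maxRecDepth 100000 in
theorem search_ok : search 14 0 1 hints = some [] := by
  decide +kernel

/-! ### Soundness of the search -/

theorem force_eq {α : Type} (n : ℕ) (f : ℕ → α) : force n f = f n := by
  cases n <;> rfl

theorem get_or (m v i j : ℕ) (hv : v < 32) :
    get (m ||| (v <<< (5 * i))) j = if j = i then get m j ||| v else get m j := by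
  unfold get
  apply Nat.eq_of_testBit_eq
  intro t
  have h31 : (31 : ℕ) = 2 ^ 5 - 1 := rfl
  by_cases ht : t < 5
  · split_ifs with h
    · subst h
      simp only [h31, Nat.testBit_and, Nat.testBit_or, Nat.testBit_shiftRight,
        Nat.testBit_shiftLeft, Nat.testBit_two_pow_sub_one, ht]
      simp
    · simp only [h31, Nat.testBit_and, Nat.testBit_or, Nat.testBit_shiftRight,
        Nat.testBit_shiftLeft, Nat.testBit_two_pow_sub_one, ht]
      rcases lt_or_gt_of_ne h with h | h
      · have : ¬ (5 * i ≤ 5 * j + t) := by omega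
        simp [this]
      · have h2 : v.testBit (5 * j + t - 5 * i) = false := by
          apply Nat.testBit_lt_two_pow
          calc v < 2 ^ 5 := hv
            _ ≤ 2 ^ (5 * j + t - 5 * i) := Nat.pow_le_pow_right (by norm_num) (by omega)
        simp [h2]
  · have h3 : v.testBit t = false := by
      apply Nat.testBit_lt_two_pow
      calc v < 2 ^ 5 := hv
        _ ≤ 2 ^ t := Nat.pow_le_pow_right (by norm_num) (by omega)
    split_ifs <;> simp only [h31, Nat.testBit_and, Nat.testBit_or,
        Nat.testBit_two_pow_sub_one, ht, h3] <;> simp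

theorem get_link (m i j t : ℕ) (hi : i < 24) (hj : j < 24) (hij : i ≠ j) (mi : get m i = 0)
    (mj : get m j = 0) :
    get (link m i j) t = if t = i then j + 1 else if t = j then i + 1 else get m t := by
  unfold link
  rw [get_or _ _ _ _ (by omega), get_or _ _ _ _ (by omega)]
  by_cases h1 : t = i
  · subst h1
    simp [hij, mi]
  · by_cases h2 : t = j
    · subst h2
      simp [h1, mj]
    · simp [h1, h2]

theorem mem_darts {i : ℕ} (h : i < 24) : i ∈ darts := by
  have : darts = List.range 24 := rfl
  rw [this]
  exact List.mem_range.2 h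

theorem rotN_lt {i k : ℕ} (h : i < 4 * k) : rotN i < 4 * k := by
  unfold rotN
  rcases hb : Nat.beq (i % 4) 3 with _ | _
  · have := Nat.ne_of_beq_eq_false hb
    simp only [cond_false]
    omega
  · simp only [cond_true]
    omega

/-- The conditions on the two permutations, point by point. -/
structure Good (a b : Equiv.Perm (Fin 24)) : Prop where
  a_sq : ∀ x, a (a x) = x
  a_ne : ∀ x, a x ≠ x
  b_pow : ∀ x d, (b ^ d) x = x ↔ 4 ∣ d
  f_pow : ∀ x d, ((b * a) ^ d) x = x ↔ 6 ∣ d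

/-- The labelling `φ` of the darts `0, …, 4 * k - 1` is compatible with the table `m`. -/
structure Cons (a b : Equiv.Perm (Fin 24)) (φ : ℕ → Fin 24) (m k : ℕ) : Prop where
  inj : ∀ i < 4 * k, ∀ j < 4 * k, φ i = φ j → i = j
  rot : ∀ i < 4 * k, b (φ i) = φ (rotN i)
  mat : ∀ i j, get m i = j + 1 → i < 4 * k ∧ j < 4 * k ∧ a (φ i) = φ j ∧ get m j = i + 1

/-- The involution stored in a complete table. -/
def repFun (q : ℕ) (x : Fin 24) : Fin 24 := ⟨(get q x.1 - 1) % 24, Nat.mod_lt _ (by norm_num)⟩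

/-- The standard product of 4-cycles. -/
def rotFun (x : Fin 24) : Fin 24 := ⟨rotN x.1 % 24, Nat.mod_lt _ (by norm_num)⟩

/-- What the search shows. -/
def Concl (a b : Equiv.Perm (Fin 24)) : Prop :=
  ∃ q ∈ reps, ∃ π : Fin 24 → Fin 24,
    (∀ x, π (a x) = repFun q (π x)) ∧ ∀ x, π (b x) = rotFun (π x)

theorem bad_sound {a b : Equiv.Perm (Fin 24)} (hg : Good a b) {φ : ℕ → Fin 24} {m k : ℕ}
    (hc : Cons a b φ m k) (x : ℕ) (hx : x < 4 * k) (n : ℕ) :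
    ∀ y d, n + d = 5 → φ y = ((b * a) ^ d) (φ x) → bad m x n y = false := by
  have key : ∀ y d j, φ y = ((b * a) ^ d) (φ x) → get m y = j + 1 →
      rotN j < 4 * k ∧ φ (rotN j) = ((b * a) ^ (d + 1)) (φ x) := by
    intro y d j h1 h2
    obtain ⟨_, h4, h5, _⟩ := hc.mat _ _ h2
    refine ⟨rotN_lt h4, ?_⟩
    rw [pow_succ', Equiv.Perm.mul_apply, ← h1, Equiv.Perm.mul_apply, h5, hc.rot _ h4]
  induction n with
  | zero =>
    intro y d hd hy
    unfold bad
    split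
    · rfl
    · next j hj =>
      obtain ⟨h1, h2⟩ := key y d j hy hj
      have h3 : ((b * a) ^ (d + 1)) (φ x) = φ x := (hg.f_pow _ _).2 ⟨1, by omega⟩
      have h4 := hc.inj _ h1 _ hx (h2.trans h3)
      rw [h4]
      simp
  | succ n ih =>
    intro y d hd hy
    unfold bad
    split
    · rfl
    · next j hj =>
      obtain ⟨h1, h2⟩ := key y d j hy hj
      rw [ih _ (d + 1) (by omega) h2, Bool.or_false]
      rcases hb : Nat.beq (rotN j) x with _ | _
      · rfl
      · exfalso
        rw [Nat.eq_of_beq_eq_true hb] at h2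
        have := (hg.f_pow _ _).1 h2.symm
        omega

theorem bad_sound' {a b : Equiv.Perm (Fin 24)} (hg : Good a b) {φ : ℕ → Fin 24} {m k : ℕ}
    (hc : Cons a b φ m k) (x : ℕ) : bad m x 5 x = false := by
  rcases h : get m x with _ | j
  · unfold bad
    rw [h]
  · exact bad_sound hg hc x (hc.mat _ _ h).1 5 x 0 rfl rfl

theorem tryAll_sound {a b : Equiv.Perm (Fin 24)} (hg : Good a b)
    (next : ℕ → ℕ → List ℕ → Option (List ℕ))
    (hn : ∀ m k h h', next m k h = some h' → ∀ φ, Cons a b φ m k → Concl a b)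
    (m k i : ℕ) (l : List ℕ) : ∀ h h', tryAll next m k i l h = some h' →
      ∀ j ∈ l, j ≠ i → j ≤ 4 * k → get m j = 0 →
      ∀ φ, Cons a b φ (link m i j) (bif Nat.beq j (4 * k) then k + 1 else k) → Concl a b := by
  induction l with
  | nil => simp
  | cons j0 l ih =>
    intro h h' hs j hj hji hjk hjm φ hφ
    unfold tryAll at hs
    rw [force_eq] at hs
    rcases List.mem_cons.1 hj with rfl | hj
    · have e1 : Nat.beq j i = false := by
        rw [Bool.eq_false_iff]; exact fun e => hji (Nat.eq_of_beq_eq_true e)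
      have e2 : Nat.blt (4 * k) j = false := by
        rw [Bool.eq_false_iff]; intro e; have := Nat.blt_eq.mp e; omega
      have e3 : Nat.blt 0 (get m j) = false := by
        rw [hjm]; rfl
      rw [e1, e2, e3, bad_sound' hg hφ, bad_sound' hg hφ] at hs
      simp only [Bool.or_false, cond_false] at hs
      split at hs
      · simp at hs
      · next h1 hh => exact hn _ _ _ _ hh φ hφ
    · rcases Bool.eq_false_or_eq_true
        (Nat.beq j0 i || (Nat.blt (4 * k) j0 || Nat.blt 0 (get m j0))) with e | e
      · rw [e, cond_true] at hs
        exact ih _ _ hs j hj hji hjk hjm φ hφ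
      · rw [e, cond_false] at hs
        rcases Bool.eq_false_or_eq_true
          (bad (link m i j0) (back (link m i j0) 5 i) 5 (back (link m i j0) 5 i) ||
            bad (link m i j0) (back (link m i j0) 5 j0) 5 (back (link m i j0) 5 j0)) with e | e
        · rw [e, cond_true] at hs
          exact ih _ _ hs j hj hji hjk hjm φ hφ
        · rw [e, cond_false] at hs
          split at hs
          · simp at hs
          · exact ih _ _ hs j hj hji hjk hjm φ hφ

theorem Cons.bij {a b : Equiv.Perm (Fin 24)} {φ : ℕ → Fin 24} {m k : ℕ}
    (hc : Cons a b φ m k) (hk : 6 ≤ k) : Function.Bijective (fun i : Fin 24 => φ i.1) := by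
  apply Finite.injective_iff_bijective.1
  intro i j h
  exact Fin.ext (hc.inj _ (by omega) _ (by omega) h)

theorem leaf_sound {a b : Equiv.Perm (Fin 24)} {φ : ℕ → Fin 24} {m k : ℕ}
    (hc : Cons a b φ m k) (h h' : List ℕ) (hl : leaf m k h = some h') : Concl a b := by
  unfold leaf at hl
  split at hl
  · simp at hl
  split at hl
  · simp at hl
  next n t q hq =>
  simp only [force_eq] at hl
  generalize relabel m q [1, 2, 3, 4, 5] _ = s at hl
  rcases e : Nat.beq k 6 && isoOk m q s with _ | _
  · rw [e] at hl
    simp at hl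
  clear hl
  rw [Bool.and_eq_true] at e
  obtain ⟨e1, e2⟩ := e
  have hk : k = 6 := Nat.eq_of_beq_eq_true e1
  subst hk
  have hb := hc.bij le_rfl
  have hs : ∀ i < 24, ∃ j, get m i = j + 1 ∧ get q (get s i) = get s j + 1 ∧
      get s (rotN i) = rotN (get s i) ∧ get s i < 24 := by
    intro i hi
    have := List.all_eq_true.1 e2 i (mem_darts hi)
    split at this
    · simp at this
    · next j hj =>
      simp only [Bool.and_eq_true] at this
      exact ⟨j, hj, Nat.eq_of_beq_eq_true this.1, Nat.eq_of_beq_eq_true this.2.1,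
        Nat.blt_eq.mp this.2.2⟩
  let e := Equiv.ofBijective _ hb
  have he : ∀ i : ℕ, ∀ hi : i < 24, e.symm (φ i) = ⟨i, hi⟩ := by
    intro i hi
    rw [Equiv.symm_apply_eq]
    rfl
  refine ⟨q, List.mem_of_getElem? hq,
    fun x => ⟨get s (e.symm x).1 % 24, Nat.mod_lt _ (by norm_num)⟩, ?_, ?_⟩
  · intro x
    obtain ⟨i, rfl⟩ := hb.2 x
    obtain ⟨j, h1, h2, h3, h4⟩ := hs i.1 i.2
    obtain ⟨g1, g2, g3, g4⟩ := hc.mat _ _ h1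
    apply Fin.ext
    simp only [repFun]
    rw [g3, he j (by omega), he i.1 i.2]
    simp only [Nat.mod_eq_of_lt h4, h2]
    simp
  · intro x
    obtain ⟨i, rfl⟩ := hb.2 x
    obtain ⟨j, h1, h2, h3, h4⟩ := hs i.1 i.2
    apply Fin.ext
    simp only [rotFun]
    rw [hc.rot _ (by omega), he (rotN i.1) (rotN_lt (k := 6) (by omega)), he i.1 i.2]
    simp only [Nat.mod_eq_of_lt h4, h3]

theorem Cons.link_old {a b : Equiv.Perm (Fin 24)} (hg : Good a b) {φ : ℕ → Fin 24} {m k i j : ℕ}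
    (hc : Cons a b φ m k) (hk : k ≤ 6) (hi : i < 4 * k) (hj : j < 4 * k) (hij : i ≠ j)
    (mi : get m i = 0) (mj : get m j = 0) (h : a (φ i) = φ j) : Cons a b φ (link m i j) k := by
  refine ⟨hc.inj, hc.rot, ?_⟩
  intro s t hst
  have hl := fun t => get_link m i j t (by omega) (by omega) hij mi mj
  rw [hl] at hst
  rw [hl]
  split_ifs at hst with h1 h2
  · obtain rfl : j = t := by omega
    subst h1
    refine ⟨hi, hj, h, ?_⟩
    simp [hij.symm]
  · obtain rfl : i = t := by omega
    subst h2
    refine ⟨hj, hi, ?_, by simp⟩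
    rw [← h, hg.a_sq]
  · obtain ⟨g1, g2, g3, g4⟩ := hc.mat _ _ hst
    refine ⟨g1, g2, g3, ?_⟩
    have n1 : t ≠ i := by rintro rfl; omega
    have n2 : t ≠ j := by rintro rfl; omega
    simp [n1, n2, g4]

theorem Cons.extend {a b : Equiv.Perm (Fin 24)} (hg : Good a b) {φ : ℕ → Fin 24} {m k : ℕ}
    (hc : Cons a b φ m k) (y : Fin 24) (hy : ∀ j < 4 * k, φ j ≠ y) :
    Cons a b (fun i => if i < 4 * k then φ i else (b ^ (i - 4 * k)) y) m (k + 1) := by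
  have hb4 : ∀ x, (b ^ 4) x = x := fun x => (hg.b_pow x 4).2 ⟨1, rfl⟩
  have hout : ∀ d j, j < 4 * k → φ j ≠ (b ^ d) y := by
    intro d
    induction d with
    | zero => exact hy
    | succ d ih =>
      intro j hj h
      have h1 : ∀ n, ∃ j' < 4 * k, (b ^ n) (φ j) = φ j' := by
        intro n
        induction n with
        | zero => exact ⟨j, hj, rfl⟩
        | succ n ihn =>
          obtain ⟨j', h1, h2⟩ := ihn
          refine ⟨rotN j', rotN_lt h1, ?_⟩
          rw [pow_succ', Equiv.Perm.mul_apply, h2, hc.rot _ h1]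
      obtain ⟨j', h2, h3⟩ := h1 3
      apply ih j' h2
      rw [← h3, h, ← Equiv.Perm.mul_apply, ← pow_add, show 3 + (d + 1) = d + 4 by ring, pow_add,
        Equiv.Perm.mul_apply, hb4]
  refine ⟨?_, ?_, ?_⟩
  · intro i hi j hj h
    split_ifs at h with h1 h2 h2
    · exact hc.inj _ h1 _ h2 h
    · exact absurd h (hout _ _ h1)
    · exact absurd h.symm (hout _ _ h2)
    · have aux : ∀ s t, s ≤ t → t < 4 → (b ^ s) y = (b ^ t) y → s = t := by
        intro s t hst ht h
        have h1 : (b ^ s) ((b ^ (t - s)) y) = (b ^ s) y := by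
          rw [← Equiv.Perm.mul_apply, ← pow_add, h]
          congr 3
          omega
        have := (hg.b_pow y _).1 ((b ^ s).injective h1)
        omega
      rcases le_total (i - 4 * k) (j - 4 * k) with hle | hle
      · have := aux _ _ hle (by omega) h
        omega
      · have := aux _ _ hle (by omega) h.symm
        omega
  · intro i hi
    by_cases h1 : i < 4 * k
    · rw [if_pos h1, if_pos (rotN_lt h1), hc.rot _ h1]
    · rw [if_neg h1]
      unfold rotN
      rcases hb : Nat.beq (i % 4) 3 with _ | _
      · have := Nat.ne_of_beq_eq_false hb
        rw [cond_false, if_neg (by omega), ← Equiv.Perm.mul_apply, ← pow_succ']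
        congr 2
        omega
      · have := Nat.eq_of_beq_eq_true hb
        rw [cond_true, if_neg (by omega), ← Equiv.Perm.mul_apply, ← pow_succ',
          show i - 4 * k + 1 = 4 by omega, hb4, show i - 3 - 4 * k = 0 by omega]
        rfl
  · intro i j h
    obtain ⟨g1, g2, g3, g4⟩ := hc.mat _ _ h
    refine ⟨by omega, by omega, ?_, g4⟩
    simp only [if_pos g1, if_pos g2, g3]

theorem Cons.le_six {a b : Equiv.Perm (Fin 24)} {φ : ℕ → Fin 24} {m k : ℕ}
    (hc : Cons a b φ m k) : k ≤ 6 := by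
  have : Function.Injective (fun i : Fin (4 * k) => φ i.1) := fun i j h =>
    Fin.ext (hc.inj _ i.2 _ j.2 h)
  have := Fintype.card_le_of_injective _ this
  simp only [Fintype.card_fin] at this
  omega

theorem search_sound {a b : Equiv.Perm (Fin 24)} (hg : Good a b) (n : ℕ) :
    ∀ m k h h', search n m k h = some h' → ∀ φ, Cons a b φ m k → Concl a b := by
  induction n with
  | zero => intro m k h h' hs; simp [search] at hs
  | succ n ih =>
    intro m k h h' hs φ hc
    unfold search at hs
    rw [force_eq] at hs
    generalize pick m = i at hs
    rcases e : Nat.blt i (4 * k) && Nat.beq (get m i) 0 with _ | _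
    · rw [e, cond_false] at hs
      exact leaf_sound hc _ _ hs
    · rw [e, cond_true] at hs
      rw [Bool.and_eq_true] at e
      have hi : i < 4 * k := Nat.blt_eq.mp e.1
      have mi : get m i = 0 := Nat.eq_of_beq_eq_true e.2
      have hk := hc.le_six
      have key := tryAll_sound hg (search n) ih m k i darts h h' hs
      by_cases hy : ∃ j < 4 * k, φ j = a (φ i)
      · obtain ⟨j, hj, hja⟩ := hy
        have hij : i ≠ j := by
          rintro rfl
          exact hg.a_ne _ hja.symm
        have mj : get m j = 0 := by
          rcases hm : get m j with _ | t
          · rfl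
          · exfalso
            obtain ⟨_, g2, g3, g4⟩ := hc.mat _ _ hm
            rw [hja, hg.a_sq] at g3
            have := hc.inj _ hi _ g2 g3
            subst this
            omega
        refine key j (mem_darts (by omega)) hij.symm hj.le mj φ ?_
        have : Nat.beq j (4 * k) = false := by
          rw [Bool.eq_false_iff]
          intro e
          have := Nat.eq_of_beq_eq_true e
          omega
        rw [this]
        exact hc.link_old hg hk hi hj hij mi mj hja.symm
      · push Not at hy
        have hk6 : k ≠ 6 := by
          rintro rfl
          obtain ⟨j, hj⟩ := (hc.bij le_rfl).2 (a (φ i))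
          exact hy j.1 (by omega) hj
        have hc' := hc.extend hg _ hy
        have mj : get m (4 * k) = 0 := by
          rcases hm : get m (4 * k) with _ | t
          · rfl
          · have := (hc.mat _ _ hm).1
            omega
        refine key (4 * k) (mem_darts (by omega)) (by omega) le_rfl mj
          (fun i' => if i' < 4 * k then φ i' else (b ^ (i' - 4 * k)) (a (φ i))) ?_
        · rw [show Nat.beq (4 * k) (4 * k) = true by simp, cond_true]
          refine hc'.link_old hg (by omega) (by omega) (by omega) (by omega) mi mj ?_
          simp [hi]

theorem concl_of_good {a b : Equiv.Perm (Fin 24)} (hg : Good a b) : Concl a b := by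
  refine search_sound hg 14 0 1 hints [] search_ok (fun i => (b ^ i) 0) ?_
  have h0 : Cons a b (fun _ => 0) 0 0 :=
    ⟨fun i hi => by omega, fun i hi => by omega, fun i j h => by simp [get] at h⟩
  have := h0.extend hg 0 (by simp)
  simpa using this

/-! ### Cycle types -/

theorem pow_apply_iff {σ : Equiv.Perm (Fin 24)} {c n : ℕ} (hcn : c * n = 24)
    (h : σ.cycleType = Multiset.replicate c n) (x : Fin 24) (d : ℕ) :
    (σ ^ d) x = x ↔ n ∣ d := by
  have hs : σ.support = Finset.univ := by
    apply Finset.eq_univ_of_card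
    rw [← Equiv.Perm.sum_cycleType, h]
    simp [hcn]
  have hx : x ∈ σ.support := by rw [hs]; exact Finset.mem_univ _
  have hx' : σ x ≠ x := Equiv.Perm.mem_support.1 hx
  have hcyc := Equiv.Perm.isCycle_cycleOf σ hx'
  have hmem : (σ.cycleOf x).support.card ∈ σ.cycleType := by
    rw [Equiv.Perm.cycleType_def]
    exact Multiset.mem_map.2 ⟨σ.cycleOf x,
      Equiv.Perm.cycleOf_mem_cycleFactorsFinset_iff.2 hx, rfl⟩
  rw [h] at hmem
  have hn := Multiset.eq_of_mem_replicate hmem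
  rw [← hn, ← hcyc.orderOf, orderOf_dvd_iff_pow_eq_one, hcyc.pow_eq_one_iff,
    ← Equiv.Perm.cycleOf_pow_apply_self]
  constructor
  · intro h1
    exact ⟨x, by simpa using hx', h1⟩
  · rintro ⟨y, h1, h2⟩
    have := (hcyc.pow_eq_one_iff (n := d)).2 ⟨y, h1, h2⟩
    rw [this]
    rfl

theorem cycleType_of {σ : Equiv.Perm (Fin 24)} {c n : ℕ} (hcn : c * n = 24)
    (h1 : ∀ x, (σ ^ n) x = x) (h2 : ∀ x, ∀ d < n, 0 < d → (σ ^ d) x ≠ x) (hn1 : 1 < n) :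
    σ.cycleType = Multiset.replicate c n := by
  have hall : ∀ t ∈ σ.cycleType, t = n := by
    intro t ht
    rw [Equiv.Perm.cycleType_def] at ht
    obtain ⟨τ, hτ, rfl⟩ := Multiset.mem_map.1 ht
    have hτ' : τ ∈ σ.cycleFactorsFinset := hτ
    have hcyc := (Equiv.Perm.mem_cycleFactorsFinset_iff.1 hτ').1
    obtain ⟨x, hx⟩ := hcyc.nonempty_support
    have hce := Equiv.Perm.cycle_is_cycleOf hx hτ'
    have hp : ∀ d, (τ ^ d) x = (σ ^ d) x := by
      intro d
      rw [hce, Equiv.Perm.cycleOf_pow_apply_self]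
    have hpos : 0 < τ.support.card := Finset.card_pos.2 ⟨x, hx⟩
    have hle : τ.support.card ∣ n := by
      rw [← hcyc.orderOf, orderOf_dvd_iff_pow_eq_one, hcyc.pow_eq_one_iff]
      exact ⟨x, Equiv.Perm.mem_support.1 hx, by rw [hp, h1]⟩
    have hself : (σ ^ τ.support.card) x = x := by
      rw [← hp, ← hcyc.orderOf, pow_orderOf_eq_one]
      rfl
    by_contra hne
    exact h2 x _ (lt_of_le_of_ne (Nat.le_of_dvd (by omega) hle) hne) hpos hself
  have hrep := Multiset.eq_replicate_card.2 hall
  have hs : σ.support = Finset.univ := by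
    apply Finset.eq_univ_of_forall
    intro x
    rw [Equiv.Perm.mem_support]
    simpa using h2 x 1 hn1 one_pos
  have hsum := Equiv.Perm.sum_cycleType σ
  rw [hs, hrep] at hsum
  simp only [Multiset.sum_replicate, smul_eq_mul, Finset.card_univ, Fintype.card_fin] at hsum
  rw [hrep]
  congr 1
  exact Nat.eq_of_mul_eq_mul_right (by omega : 0 < n) (by rw [hsum, hcn])

theorem good_of_isType {p : Equiv.Perm (Fin 24) × Equiv.Perm (Fin 24)}
    (hp : IsType246Genus2Pair p) : Good p.1 p.2 := by
  obtain ⟨_, h1, h2, h3⟩ := hp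
  refine ⟨?_, ?_, pow_apply_iff rfl h2, pow_apply_iff rfl h3⟩
  · intro x
    have := (pow_apply_iff (by norm_num) h1 x 2).2 dvd_rfl
    rwa [pow_two] at this
  · intro x h
    have := (pow_apply_iff (by norm_num) h1 x 1).1 (by simpa using h)
    omega

/-! ### The forty dessins -/

theorem rot_inv : ∀ x, rotFun (rotFun (rotFun (rotFun x))) = x := by decide +kernel

/-- The black permutation of all the forty dessins. -/
def rotPerm : Equiv.Perm (Fin 24) where
  toFun := rotFun
  invFun x := rotFun (rotFun (rotFun x))
  left_inv := rot_inv
  right_inv := rot_inv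

theorem reps_invol : ∀ q ∈ reps, ∀ x, repFun q (repFun q x) = x := by decide +kernel

theorem reps_ne : ∀ q ∈ reps, ∀ x, repFun q x ≠ x := by decide +kernel

/-- The face map. -/
def faceFun (q : ℕ) (x : Fin 24) : Fin 24 := rotFun (repFun q x)

theorem reps_face : ∀ q ∈ reps, ∀ x, faceFun q (faceFun q x) ≠ x ∧
    faceFun q (faceFun q (faceFun q x)) ≠ x ∧
    faceFun q (faceFun q (faceFun q (faceFun q (faceFun q (faceFun q x))))) = x := by
  decide +kernel

theorem reps_conn : ∀ q ∈ reps, ∀ x : Fin 24, x = 0 ∨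
    rotFun (x - 1) = x ∨ repFun q x < x := by
  decide +kernel

/-- The white permutation of one of the forty dessins. -/
def repPerm (q : ℕ) (hq : q ∈ reps) : Equiv.Perm (Fin 24) where
  toFun := repFun q
  invFun := repFun q
  left_inv := reps_invol q hq
  right_inv := reps_invol q hq

theorem reach (q : ℕ) (hq : q ∈ reps) (n : ℕ) : ∀ hn : n < 24,
    ∃ π ∈ Subgroup.closure ({repPerm q hq, rotPerm} : Set (Equiv.Perm (Fin 24))),
      π 0 = ⟨n, hn⟩ := by
  induction n using Nat.strong_induction_on with
  | _ n ih =>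
    intro hn
    have ha : repPerm q hq ∈
        Subgroup.closure ({repPerm q hq, rotPerm} : Set (Equiv.Perm (Fin 24))) :=
      Subgroup.subset_closure (by simp)
    have hb : rotPerm ∈
        Subgroup.closure ({repPerm q hq, rotPerm} : Set (Equiv.Perm (Fin 24))) :=
      Subgroup.subset_closure (by simp)
    by_cases h0 : n = 0
    · subst h0
      exact ⟨1, Subgroup.one_mem _, rfl⟩
    rcases reps_conn q hq ⟨n, hn⟩ with h | h | h
    · exact absurd (congrArg Fin.val h) h0
    · obtain ⟨π, h1, h2⟩ := ih (n - 1) (by omega) (by omega)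
      refine ⟨rotPerm * π, Subgroup.mul_mem _ hb h1, ?_⟩
      rw [Equiv.Perm.mul_apply, h2]
      have : (⟨n - 1, by omega⟩ : Fin 24) = ⟨n, hn⟩ - 1 := by
        apply Fin.ext
        rw [Fin.sub_def]
        simp only [Fin.val_one]
        omega
      rw [this]
      exact h
    · obtain ⟨π, h1, h2⟩ := ih (repFun q ⟨n, hn⟩).1 h (repFun q ⟨n, hn⟩).2
      refine ⟨repPerm q hq * π, Subgroup.mul_mem _ ha h1, ?_⟩
      rw [Equiv.Perm.mul_apply, h2]
      exact reps_invol q hq _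

theorem rep_isType (q : ℕ) (hq : q ∈ reps) : IsType246Genus2Pair (repPerm q hq, rotPerm) := by
  refine ⟨?_, ?_, ?_, ?_⟩
  · intro x y
    obtain ⟨π, h1, h2⟩ := reach q hq x.1 x.2
    obtain ⟨ρ, h3, h4⟩ := reach q hq y.1 y.2
    refine ⟨ρ * π⁻¹, Subgroup.mul_mem _ h3 (Subgroup.inv_mem _ h1), ?_⟩
    have : π⁻¹ x = 0 := by
      rw [Equiv.Perm.inv_eq_iff_eq]
      exact h2.symm
    rw [Equiv.Perm.mul_apply, this, h4]
  · refine cycleType_of (by norm_num) (fun x => reps_invol q hq x) ?_ (by norm_num)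
    intro x d hd hd0
    obtain rfl : d = 1 := by omega
    exact reps_ne q hq x
  · refine cycleType_of (by norm_num) (fun x => rot_inv x) ?_ (by norm_num)
    have : ∀ x, rotFun x ≠ x ∧ rotFun (rotFun x) ≠ x ∧ rotFun (rotFun (rotFun x)) ≠ x := by
      decide +kernel
    intro x d hd hd0
    interval_cases d
    · exact (this x).1
    · exact (this x).2.1
    · exact (this x).2.2
  · refine cycleType_of (by norm_num) (fun x => (reps_face q hq x).2.2) ?_ (by norm_num)
    have h2 : ∀ x, faceFun q (faceFun q x) ≠ x := fun x => (reps_face q hq x).1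
    have h3 : ∀ x, faceFun q (faceFun q (faceFun q x)) ≠ x := fun x => (reps_face q hq x).2.1
    have h6 := fun x => (reps_face q hq x).2.2
    have h1 : ∀ x, faceFun q x ≠ x := by
      intro x h
      apply h2 x
      rw [h, h]
    intro x d hd hd0
    interval_cases d
    · exact h1 x
    · exact h2 x
    · exact h3 x
    · intro h
      have h' : faceFun q (faceFun q (faceFun q (faceFun q x))) = x := h
      have := h6 x
      rw [h'] at this
      exact h2 x this
    · intro h
      have h' : faceFun q (faceFun q (faceFun q (faceFun q (faceFun q x)))) = x := h
      have := h6 x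
      rw [h'] at this
      exact h1 x this

/-! ### An invariant separating the forty dessins -/

/-- Words in the two permutations: the entries are the exponents of the black one, each preceded by
the white one. -/
def words : List (List ℕ) :=
  [[2, 2, 2], [1, 2, 3, 1, 2, 3], [2, 2, 2, 2, 2, 2], [3, 1], [1, 2, 1, 3, 2, 2], [2, 2]]

/-- Iterate a function. -/
def iter (g : Fin 24 → Fin 24) : ℕ → Fin 24 → Fin 24
  | 0, x => x
  | n + 1, x => g (iter g n x)

/-- Move along a word. -/
def walk (f g : Fin 24 → Fin 24) : List ℕ → Fin 24 → Fin 24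
  | [], x => x
  | e :: l, x => walk f g l (iter g e (f x))

/-- Which of the words fix `x`, in binary. -/
def code (f g : Fin 24 → Fin 24) (x : Fin 24) : List (List ℕ) → ℕ
  | [] => 0
  | w :: l => (bif decide (walk f g w x = x) then 1 else 0) + 2 * code f g x l

/-- The invariant. -/
def invt (f g : Fin 24 → Fin 24) : ℕ := ∑ x, code f g x words ^ 2

theorem invt_conj (f g f' g' : Fin 24 → Fin 24) (π : Equiv.Perm (Fin 24))
    (hf : ∀ x, f' (π x) = π (f x)) (hg : ∀ x, g' (π x) = π (g x)) : invt f' g' = invt f g := by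
  have hi : ∀ n x, iter g' n (π x) = π (iter g n x) := by
    intro n
    induction n with
    | zero => intro x; rfl
    | succ n ih => intro x; simp only [iter, ih, hg]
  have hw : ∀ w x, walk f' g' w (π x) = π (walk f g w x) := by
    intro w
    induction w with
    | nil => intro x; rfl
    | cons e l ih => intro x; simp only [walk, hf, hi, ih]
  have hcode : ∀ l x, code f' g' (π x) l = code f g x l := by
    intro l
    induction l with
    | nil => intro x; rfl
    | cons w l ih => intro x; simp only [code, hw, ih, EmbeddingLike.apply_eq_iff_eq]
  unfold invt
  rw [← Equiv.sum_comp π]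
  simp only [hcode]

theorem invt_nodup : (reps.map fun q => invt (repFun q) rotFun).Nodup := by
  decide +kernel

theorem reps_length : reps.length = 40 := rfl

/-- The class of one of the forty dessins. -/
def cls (i : Fin 40) : Quot SimConj246 :=
  Quot.mk _ ⟨_, rep_isType (reps[i.1]'(by rw [reps_length]; exact i.2)) (List.getElem_mem _)⟩

/-- The invariant of a class. -/
def clsInv : Quot SimConj246 → ℕ :=
  Quot.lift (fun p => invt p.1.1 p.1.2) (by
    rintro p q ⟨π, h1, h2⟩
    refine (invt_conj _ _ _ _ π ?_ ?_).symm
    · intro x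
      rw [h1]
      simp
    · intro x
      rw [h2]
      simp)

theorem cls_injective : Function.Injective cls := by
  intro i j h
  have h1 : clsInv (cls i) = clsInv (cls j) := by rw [h]
  have h2 : invt (repFun (reps[i.1]'(by rw [reps_length]; exact i.2))) rotFun =
      invt (repFun (reps[j.1]'(by rw [reps_length]; exact j.2))) rotFun := h1
  apply Fin.ext
  refine (List.Nodup.getElem_inj_iff invt_nodup
    (hi := by rw [List.length_map, reps_length]; exact i.2)
    (hj := by rw [List.length_map, reps_length]; exact j.2)).1 ?_
  rw [List.getElem_map, List.getElem_map]
  exact h2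

theorem cls_surjective : Function.Surjective cls := by
  intro c
  obtain ⟨⟨p, hp⟩, rfl⟩ := Quot.exists_rep c
  obtain ⟨q, hq, π, h1, h2⟩ := concl_of_good (good_of_isType hp)
  have hinv : ∀ ρ ∈ Subgroup.closure ({repPerm q hq, rotPerm} : Set (Equiv.Perm (Fin 24))),
      ∀ x, ∃ y, π y = ρ (π x) := by
    intro ρ hρ
    induction hρ using Subgroup.closure_induction with
    | mem ρ h =>
      intro x
      rcases h with rfl | rfl
      · exact ⟨_, h1 x⟩
      · exact ⟨_, h2 x⟩
    | one => intro x; exact ⟨x, rfl⟩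
    | mul s t _ _ hs ht =>
      intro x
      obtain ⟨y, hy⟩ := ht x
      obtain ⟨z, hz⟩ := hs y
      exact ⟨z, by rw [hz, hy]; rfl⟩
    | inv s _ hs =>
      intro x
      have hpow : ∀ n : ℕ, ∃ y, π y = (s ^ n) (π x) := by
        intro n
        induction n with
        | zero => exact ⟨x, rfl⟩
        | succ n ih =>
          obtain ⟨y, hy⟩ := ih
          obtain ⟨z, hz⟩ := hs y
          exact ⟨z, by rw [hz, hy, pow_succ']; rfl⟩
      obtain ⟨y, hy⟩ := hpow (orderOf s - 1)
      refine ⟨y, ?_⟩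
      rw [hy]
      congr 1
      rw [eq_inv_iff_mul_eq_one, ← pow_succ, Nat.sub_add_cancel (orderOf_pos s),
        pow_orderOf_eq_one]
  have hsurj : Function.Surjective π := by
    intro y
    obtain ⟨ρ, hρ, h3⟩ := (rep_isType q hq).1 (π 0) y
    obtain ⟨z, hz⟩ := hinv ρ hρ 0
    exact ⟨z, hz.trans h3⟩
  let e : Equiv.Perm (Fin 24) := Equiv.ofBijective π (Finite.surjective_iff_bijective.1 hsurj)
  obtain ⟨n, hn, rfl⟩ := List.getElem_of_mem hq
  refine ⟨⟨n, by rw [← reps_length]; exact hn⟩, (Quot.sound ?_).symm⟩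
  refine ⟨e, ?_, ?_⟩
  · rw [eq_mul_inv_iff_mul_eq]
    ext1 x
    exact (h1 x).symm
  · rw [eq_mul_inv_iff_mul_eq]
    ext1 x
    exact (h2 x).symm

end Dessin246

/-- There are exactly forty uniform dessins of type (2,4,6) and genus 2, up to
equivalence (simultaneous conjugation of the monodromy pairs). -/
theorem card_uniform_dessins_type_246_genus_two :
    Nat.card (Quot SimConj246) = 40 := by
  have h := Nat.card_congr
    (Equiv.ofBijective Dessin246.cls ⟨Dessin246.cls_injective, Dessin246.cls_surjective⟩)
  rw [← h, Nat.card_eq_fintype_card, Fintype.card_fin]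
end

section
/- Consider the set of pairs (σ₀, σ₁) of permutations of Fin 12 such that the subgroup generated by σ₀ and σ₁ acts transitively, the cycle type of σ₀ consists of 6 copies of 2 (six disjoint transpositions), the cycle type of σ₁ consists of 3 copies of 4 (three disjoint 4-cycles), σ₁σ₀ is a single 12-cycle (cycle type {12}), and the cycle type of σ₁²σ₀ is {6, 6}. Declare two such pairs equivalent if they are simultaneously conjugate by a permutation of Fin 12. Then there is exactly one equivalence class. -/
/-- The monodromy pairs of uniform dessins of type (2,4,12) and genus 2 whose
associated uniform filling multicurve is a single filling curve: transitive
pairs on 12 points with six transpositions, three 4-cycles, a single 12-cycle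
face, and σ₁²σ₀ a product of two disjoint 6-cycles. -/
def IsType2412FillingCurvePair
    (p : Equiv.Perm (Fin 12) × Equiv.Perm (Fin 12)) : Prop :=
  (∀ x y : Fin 12,
    ∃ π ∈ Subgroup.closure ({p.1, p.2} : Set (Equiv.Perm (Fin 12))), π x = y) ∧
  p.1.cycleType = Multiset.replicate 6 2 ∧
  p.2.cycleType = Multiset.replicate 3 4 ∧
  (p.2 * p.1).cycleType = {12} ∧
  (p.2 ^ 2 * p.1).cycleType = {6, 6}

/-- Simultaneous conjugacy of monodromy pairs. -/
def SimConj2412 (p q : {p // IsType2412FillingCurvePair p}) : Prop :=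
  ∃ π : Equiv.Perm (Fin 12),
    q.1.1 = π * p.1.1 * π⁻¹ ∧ q.1.2 = π * p.1.2 * π⁻¹

namespace T2412

open Equiv.Perm

/-- the points of `Fin 12` as explicit numerals -/
def pts : List ℕ := [0, 1, 2, 3, 4, 5, 6, 7, 8, 9, 10, 11]

def base : List (ℕ × ℕ) := [(0, 3), (1, 8), (2, 5), (3, 0), (4, 9), (5, 2), (6, 10), (7, 11),
  (8, 1), (9, 4), (10, 6), (11, 7)]

/-- look up a value in a partial involution, given as a list of pairs -/
def lk : List (ℕ × ℕ) → ℕ → Option ℕ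
  | [], _ => none
  | (a, b) :: l, i => match Nat.beq a i with
    | true => some b
    | false => lk l i

/-- following `x ↦ f x + d` for `n` steps from `i` we do not provably miss `i0` -/
def walk (l : List (ℕ × ℕ)) (d i0 : ℕ) : ℕ → ℕ → Bool
  | 0, i => Nat.beq i i0
  | n + 1, i => match lk l i with
    | none => true
    | some j => walk l d i0 n ((j + d) % 12)

def isRot (l : List (ℕ × ℕ)) (k : ℕ) : Bool :=
  pts.all fun i => match lk base i, lk l ((i + k) % 12) with
    | some a, some b => Nat.beq b ((a + k) % 12)
    | _, _ => false

def okV (l : List (ℕ × ℕ)) (k v : ℕ) : Bool :=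
  !(Nat.beq v k) && (!(Nat.beq ((v + 1) % 12) k) && (!(Nat.beq ((v + 2) % 12) k) &&
  (!(Nat.beq ((k + 1) % 12) v) && (!(Nat.beq ((k + 2) % 12) v) &&
  (match lk l v with
    | none => true
    | some j => Nat.beq j k)))))

def search : List ℕ → List (ℕ × ℕ) → Bool
  | [], l => !(pts.all fun i => walk l 2 i 6 i) || pts.any fun k => isRot l k
  | k :: ks, l => match lk l k with
    | some _ => search ks l
    | none => pts.all fun v => !(okV l k v) ||
        (!(pts.all fun i => walk ((k, v) :: (v, k) :: l) 1 i 4 i) ||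
          search ks ((k, v) :: (v, k) :: l))

theorem search_true : search pts [] = true := by decide +kernel

theorem lk_mem {l : List (ℕ × ℕ)} {i j : ℕ} (h : lk l i = some j) : (i, j) ∈ l := by
  induction l with
  | nil => simp [lk] at h
  | cons p l ih =>
    obtain ⟨a, b⟩ := p
    rw [lk] at h
    split at h
    · next e => simp_all
    · exact List.mem_cons_of_mem _ (ih h)

theorem beq_ff {a b : ℕ} (h : a ≠ b) : Nat.beq a b = false := by
  rw [← Bool.not_eq_true, Nat.beq_eq]; exact h

theorem mem_pts {i : ℕ} : i ∈ pts ↔ i < 12 := by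
  simp only [pts, List.mem_cons, List.not_mem_nil, or_false]; omega

theorem walk_sound (f : ℕ → ℕ) (l : List (ℕ × ℕ)) (hl : ∀ p ∈ l, f p.1 = p.2) (d i0 : ℕ) :
    ∀ n i, (fun x => (f x + d) % 12)^[n] i = i0 → walk l d i0 n i = true := by
  intro n
  induction n with
  | zero => intro i h; simpa [walk] using h
  | succ n ih =>
    intro i h
    rw [walk]
    split
    · rfl
    · next j hj =>
      apply ih
      have := hl _ (lk_mem hj)
      simp only at this
      rw [← h, Function.iterate_succ_apply, this]

theorem search_sound (f : ℕ → ℕ) (hf : ∀ i < 12, f i < 12) (hinv : ∀ i < 12, f (f i) = i)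
    (h0 : ∀ i < 12, f i ≠ i) (h1 : ∀ i < 12, (f i + 1) % 12 ≠ i)
    (h2 : ∀ i < 12, (f i + 2) % 12 ≠ i)
    (hs : ∀ i < 12, (fun x => (f x + 1) % 12)^[4] i = i)
    (hq : ∀ i < 12, (fun x => (f x + 2) % 12)^[6] i = i) :
    ∀ ks : List ℕ, (∀ k ∈ ks, k < 12) → ∀ l : List (ℕ × ℕ),
      (∀ p ∈ l, f p.1 = p.2) → search ks l = true →
      ∃ k, ∀ i < 12, ∃ a, lk base i = some a ∧ f ((i + k) % 12) = (a + k) % 12 := by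
  intro ks
  induction ks with
  | nil =>
    intro _ l hl h
    have A : (pts.all fun i => walk l 2 i 6 i) = true := by
      simp only [List.all_eq_true, mem_pts]
      exact fun i hi => walk_sound f l hl _ _ _ _ (hq i hi)
    rw [search, A] at h
    simp only [Bool.not_true, Bool.false_or, List.any_eq_true] at h
    obtain ⟨k, -, hk⟩ := h
    refine ⟨k, fun i hi => ?_⟩
    rw [isRot, List.all_eq_true] at hk
    have := hk i (mem_pts.2 hi)
    split at this
    · next a b ha hb =>
      refine ⟨a, ha, ?_⟩
      have e := hl _ (lk_mem hb)
      simp only at e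
      rw [e]; exact Nat.eq_of_beq_eq_true this
    · simp at this
  | cons k ks ih =>
    intro hks l hl h
    have hk : k < 12 := hks k (by simp)
    have hks' : ∀ k ∈ ks, k < 12 := fun k h => hks k (by simp [h])
    rw [search] at h
    split at h
    · exact ih hks' l hl h
    · next hnone =>
      rw [List.all_eq_true] at h
      have hv := h (f k) (mem_pts.2 (hf k hk))
      have e1 := hinv k hk
      have hl' : ∀ p ∈ (k, f k) :: (f k, k) :: l, f p.1 = p.2 := by
        intro p hp
        simp only [List.mem_cons] at hp
        rcases hp with rfl | rfl | hp
        · rfl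
        · exact e1
        · exact hl p hp
      have B : (pts.all fun i => walk ((k, f k) :: (f k, k) :: l) 1 i 4 i) = true := by
        simp only [List.all_eq_true, mem_pts]
        exact fun i hi => walk_sound f _ hl' _ _ _ _ (hs i hi)
      have C : okV l k (f k) = true := by
        have n1 := h1 _ (hf k hk)
        have n2 := h2 _ (hf k hk)
        rw [e1] at n1 n2
        simp only [okV, Bool.and_eq_true, Bool.not_eq_true']
        refine ⟨beq_ff (h0 k hk), beq_ff (h1 k hk), beq_ff (h2 k hk), beq_ff n1, beq_ff n2, ?_⟩
        split
        · rfl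
        · next j hj =>
          have e := hl _ (lk_mem hj)
          simp only at e
          rw [← e, e1]; simp
      rw [B, C] at hv
      exact ih hks' _ hl' (by simpa using hv)

/-- the canonical white permutation -/
def f0 : Equiv.Perm (Fin 12) where
  toFun := ![3, 8, 5, 0, 9, 2, 10, 11, 1, 4, 6, 7]
  invFun := ![3, 8, 5, 0, 9, 2, 10, 11, 1, 4, 6, 7]
  left_inv := by decide
  right_inv := by decide

def c : Equiv.Perm (Fin 12) := finRotate 12

theorem moved {σ : Equiv.Perm (Fin 12)} (h : σ.cycleType.sum = 12) (x : Fin 12) : σ x ≠ x := by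
  rw [sum_cycleType] at h
  have : σ.support = Finset.univ := by
    rw [← Finset.card_eq_iff_eq_univ, h]; rfl
  rw [← mem_support, this]; simp

theorem pow_one' {σ : Equiv.Perm (Fin 12)} {n : ℕ} (h : σ.cycleType.lcm = n) : σ ^ n = 1 := by
  rw [lcm_cycleType] at h
  rw [← h, pow_orderOf_eq_one]

theorem c_val (x : Fin 12) : (c x).val = (x.val + 1) % 12 := by
  revert x; decide

theorem c_pow_val (k : ℕ) (x : Fin 12) : ((c ^ k) x).val = (x.val + k) % 12 := by
  induction k with
  | zero => simp; omega
  | succ k ih => rw [pow_succ', mul_apply, c_val, ih]; omega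

theorem f0_val (x : Fin 12) : lk base x.val = some (f0 x).val := by
  revert x; decide

theorem key (σ : Equiv.Perm (Fin 12)) (h0 : σ.cycleType = Multiset.replicate 6 2)
    (h1 : (c * σ).cycleType = Multiset.replicate 3 4)
    (h2 : (c ^ 2 * σ).cycleType = {6, 6}) :
    ∃ k : ℕ, σ = c ^ k * f0 * (c ^ k)⁻¹ := by
  have m0 := moved (σ := σ) (by rw [h0]; rfl)
  have m1 := moved (σ := c * σ) (by rw [h1]; rfl)
  have m2 := moved (σ := c ^ 2 * σ) (by rw [h2]; rfl)
  have p0 := pow_one' (σ := σ) (n := 2) (by rw [h0]; rfl)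
  have p1 := pow_one' (σ := c * σ) (n := 4) (by rw [h1]; rfl)
  have p2 := pow_one' (σ := c ^ 2 * σ) (n := 6) (by rw [h2]; rfl)
  let f : ℕ → ℕ := fun i => if h : i < 12 then (σ ⟨i, h⟩).val else 0
  have fv : ∀ x : Fin 12, f x.val = (σ x).val := fun x => by simp [f]
  have lift : ∀ {P : ℕ → Prop}, (∀ x : Fin 12, P x.val) → ∀ i < 12, P i :=
    fun h i hi => h ⟨i, hi⟩
  have it : ∀ (d n : ℕ) (x : Fin 12), (fun y => (f y + d) % 12)^[n] x.val =
      (((c ^ d * σ) ^ n) x).val := by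
    intro d n x
    induction n with
    | zero => rfl
    | succ n ih =>
      rw [Function.iterate_succ_apply', ih, pow_succ', mul_apply, mul_apply, c_pow_val, fv]
  have H := search_sound f
    (lift fun x => by rw [fv]; exact (σ x).isLt)
    (lift fun x => by
      rw [fv, fv]
      have := congrArg (fun τ : Equiv.Perm (Fin 12) => (τ x).val) p0
      simpa [pow_succ] using this)
    (lift fun x h => m0 x (Fin.ext (by rw [← fv, h])))
    (lift fun x h => m1 x (Fin.ext (by rw [mul_apply, c_val, ← fv, h])))
    (lift fun x h => m2 x (Fin.ext (by rw [mul_apply, c_pow_val, ← fv, h])))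
    (lift fun x => by
      have := congrArg (fun τ : Equiv.Perm (Fin 12) => (τ x).val) p1
      rw [it 1 4 x, pow_one]; exact this)
    (lift fun x => by
      have := congrArg (fun τ : Equiv.Perm (Fin 12) => (τ x).val) p2
      rw [it 2 6 x]; exact this)
    pts (fun _ => mem_pts.1) [] (by simp) search_true
  obtain ⟨k, hk⟩ := H
  refine ⟨k, ?_⟩
  rw [eq_mul_inv_iff_mul_eq]
  ext x
  obtain ⟨a, ha, e⟩ := hk x.val x.isLt
  rw [f0_val] at ha
  rw [mul_apply, mul_apply, ← fv, c_pow_val, e, c_pow_val, Option.some.inj ha]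

theorem f0_ok : IsType2412FillingCurvePair (f0, c * f0) := by
  have hff : f0 * f0 = 1 := by decide
  have e : c * f0 * f0 = c := by rw [mul_assoc, hff, mul_one]
  refine ⟨?_, ?_, ?_, ?_, ?_⟩
  · intro x y
    have hx : c x ≠ x := by revert x; decide
    have hy : c y ≠ y := by revert y; decide
    obtain ⟨n, hn⟩ := (isCycle_finRotate (n := 10)).exists_pow_eq hx hy
    refine ⟨c ^ n, ?_, hn⟩
    apply pow_mem
    have hm : c * f0 * f0 ∈ Subgroup.closure ({f0, c * f0} : Set (Equiv.Perm (Fin 12))) :=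
      mul_mem (Subgroup.subset_closure (by simp)) (Subgroup.subset_closure (by simp))
    rwa [e] at hm
  · decide +kernel
  · decide +kernel
  · show (c * f0 * f0).cycleType = _
    rw [e]; exact cycleType_finRotate
  · decide +kernel

theorem conj_canon (p : Equiv.Perm (Fin 12) × Equiv.Perm (Fin 12))
    (hp : IsType2412FillingCurvePair p) :
    ∃ π : Equiv.Perm (Fin 12), p.1 = π * f0 * π⁻¹ ∧ p.2 = π * (c * f0) * π⁻¹ := by
  obtain ⟨a, b⟩ := p
  obtain ⟨-, h0, h1, h2, h3⟩ := hp
  simp only at h0 h1 h2 h3 ⊢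
  have hc : c.cycleType = {12} := cycleType_finRotate
  obtain ⟨π, hπ⟩ := isConj_iff.1 (isConj_of_cycleType_eq (h2.trans hc.symm))
  have haa : a * a = 1 := by
    rw [← pow_two]; exact pow_one' (by rw [h0]; rfl)
  have hai : a⁻¹ = a := inv_eq_of_mul_eq_one_left haa
  have hb : b = π⁻¹ * c * π * a := by
    rw [← hπ]; simp only [mul_assoc, inv_mul_cancel_left, haa, mul_one]
  obtain ⟨k, hk⟩ := key (π * a * π⁻¹) (by rw [cycleType_conj, h0])
    (by rw [← h1, ← cycleType_conj (σ := b) (τ := π), hb]; congr 1; group)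
    (by
      have hbb : b ^ 2 * a = b * (b * a) := by rw [pow_two, mul_assoc]
      have haa' : ∀ x, a * (a * x) = x := fun x => by rw [← mul_assoc, haa, one_mul]
      have e : c ^ 2 * (π * a * π⁻¹) = (π * (b * a)) * (b ^ 2 * a) * (π * (b * a))⁻¹ := by
        rw [← hπ, hbb]
        simp only [pow_two, mul_assoc, mul_inv_rev, inv_mul_cancel_left, mul_inv_cancel_left, haa']
      rw [e, cycleType_conj, h3])
  have ha : a = π⁻¹ * c ^ k * f0 * (π⁻¹ * c ^ k)⁻¹ := by
    have : a = π⁻¹ * (π * a * π⁻¹) * π := by group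
    rw [this, hk]; group
  refine ⟨π⁻¹ * c ^ k, ha, ?_⟩
  rw [hb, ha]
  group

end T2412

/-- Up to equivalence there is exactly one uniform dessin of type (2,4,12) and
genus 2 corresponding to a single filling curve. -/
theorem card_uniform_filling_curves_type_2412_genus_two :
    Nat.card (Quot SimConj2412) = 1 := by
  rw [Nat.card_eq_one_iff_unique]
  refine ⟨⟨fun x y => ?_⟩, ⟨Quot.mk _ ⟨_, T2412.f0_ok⟩⟩⟩
  have H : ∀ z : Quot SimConj2412, Quot.mk _ ⟨_, T2412.f0_ok⟩ = z := by
    intro z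
    induction z using Quot.ind with
    | mk p => exact Quot.sound (T2412.conj_canon p.1 p.2)
  rw [← H x, ← H y]
end
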